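/- arXiv:2505.07037 — 3 statements merged into one kernel-verified Lean document; each statement's English description precedes it below -/
import Mathlib

section
/- (Blaschke–Santaló inequality) Let X ⊂ ℝⁿ be a symmetric convex body and ħ > 0. Then the Mahler volume satisfies v(X) = Vol(X)·Vol(X^ħ) ≤ (πħ)ⁿ/Γ(n/2 + 1)², i.e. v(X) ≤ Vol(B^n(√ħ))², with equality if and only if X is an ellipsoid centered at the origin (the image of the ball B^n(√ħ) under an invertible linear map). -/
open MeasureTheory
open scoped RealInnerProductSpace

/-- The `ħ`-polar dual of a set `X ⊂ ℝⁿ`: all `p` with `p·x ≤ ħ` for every `x ∈ X`. -/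
def polarDualSet (n : ℕ) (hb : ℝ) (X : Set (EuclideanSpace ℝ (Fin n))) :
    Set (EuclideanSpace ℝ (Fin n)) :=
  {p | ∀ x ∈ X, (⟪p, x⟫ : ℝ) ≤ hb}

/-!
The Gaussians `f = exp (-(ħ/2) * gauge X ^ 2)` and `g = exp (-(ħ/2) * gauge Y ^ 2)` of a body `X`
and its polar `Y` satisfy `f x * g y ≤ exp (-⟪x, y⟫)`, and their integrals are proportional to the
volumes of `X` and `Y`. For any such pair on a space of dimension `d`, with `f` of barycentre `0`,
induction on `d` gives `(∫ f) * ∫ g ≤ (2 * π) ^ d`. After a translation of `g`, which by Jensen's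
inequality only increases the integral of the matching `f`, some hyperplane halves the mass of `g`
in such a way that the barycentres of both halves lie on one line through the origin. Integrating
`g` along this line and `f` along the normal of the hyperplane, on each side separately, produces
centred pairs in dimension `d - 1`. The factor lost is given by the half-line inequality
`(∫ p) * ∫ q ≤ π / 2` for `p s * q t ≤ exp (-(s * t))` on `(0, ∞)`, a transport of mass argument.

In the equality case the restrictions of `f` to half-lines starting on a suitable transversal to any
given direction are Gaussian; this forces the parallelogram law for the gauge of `X`.
-/

open Set Filter Topology Real

theorem eqOn_of_setIntegral_le {X : Type*} [TopologicalSpace X] [MeasurableSpace X]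
    [OpensMeasurableSpace X] {μ : Measure X} [μ.IsOpenPosMeasure] {U : Set X} (hU : IsOpen U)
    {f g : X → ℝ} (hf : ContinuousOn f U) (hg : ContinuousOn g U) (hfi : IntegrableOn f U μ)
    (hgi : IntegrableOn g U μ) (hfg : ∀ x ∈ U, f x ≤ g x)
    (h : ∫ x in U, g x ∂μ ≤ ∫ x in U, f x ∂μ) : EqOn f g U := by
  refine Measure.eqOn_open_of_ae_eq (μ := μ) ?_ hU hf hg
  have hnonneg : 0 ≤ᵐ[μ.restrict U] g - f :=
    ae_restrict_of_forall_mem hU.measurableSet fun x hx => sub_nonneg.2 (hfg x hx)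
  have hzero : ∫ x in U, (g - f) x ∂μ = 0 := by
    refine le_antisymm ?_ (integral_nonneg_of_ae hnonneg)
    simp only [Pi.sub_apply]
    rw [integral_sub hgi hfi]
    linarith
  filter_upwards [(integral_eq_zero_iff_of_nonneg_ae hnonneg (hgi.sub hfi)).1 hzero] with x hx
  exact (sub_eq_zero.1 hx).symm

section HalfLine

variable {p : ℝ → ℝ}

theorem hasDerivAt_integral_zero_of_continuousOn_Ioi (hp : ContinuousOn p (Ioi 0))
    (hpi : IntegrableOn p (Ioi 0)) {s : ℝ} (hs : 0 < s) :
    HasDerivAt (fun t => ∫ u in (0 : ℝ)..t, p u) (p s) s :=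
  intervalIntegral.integral_hasDerivAt_right
    ((intervalIntegrable_iff_integrableOn_Ioc_of_le hs.le).2 (hpi.mono_set Ioc_subset_Ioi_self))
    (hp.stronglyMeasurableAtFilter isOpen_Ioi s hs) (hp.continuousAt (Ioi_mem_nhds hs))

theorem strictMonoOn_integral_zero (hp : ContinuousOn p (Ioi 0)) (hpos : ∀ s ∈ Ioi 0, 0 < p s)
    (hpi : IntegrableOn p (Ioi 0)) : StrictMonoOn (fun t => ∫ u in (0 : ℝ)..t, p u) (Ioi 0) := by
  have hderiv := fun s hs => hasDerivAt_integral_zero_of_continuousOn_Ioi hp hpi (s := s) hs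
  refine strictMonoOn_of_deriv_pos (convex_Ioi 0)
    (fun s hs => (hderiv s hs).continuousAt.continuousWithinAt) fun s hs => ?_
  rw [interior_Ioi] at hs
  rw [(hderiv s hs).deriv]
  exact hpos s hs

theorem bijOn_integral_zero (hp : ContinuousOn p (Ioi 0)) (hpos : ∀ s ∈ Ioi 0, 0 < p s)
    (hpi : IntegrableOn p (Ioi 0)) :
    BijOn (fun t => ∫ u in (0 : ℝ)..t, p u) (Ioi 0) (Ioo 0 (∫ u in Ioi 0, p u)) := by
  have hmono := strictMonoOn_integral_zero hp hpos hpi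
  refine ⟨fun s hs => ⟨?_, ?_⟩, hmono.injOn, fun m hm => ?_⟩
  · have hs' : 0 < s := hs
    exact intervalIntegral.intervalIntegral_pos_of_pos_on
      ((intervalIntegrable_iff_integrableOn_Ioc_of_le hs'.le).2 (hpi.mono_set Ioc_subset_Ioi_self))
      (fun t ht => hpos t ht.1) hs'
  · have hs' : 0 < s + 1 := by linarith [mem_Ioi.1 hs]
    refine (hmono hs hs' (lt_add_one s)).trans_le ?_
    simp only [intervalIntegral.integral_of_le hs'.le]
    exact setIntegral_mono_set hpi
      (ae_restrict_of_forall_mem measurableSet_Ioi fun t ht => (hpos t ht).le)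
      Ioc_subset_Ioi_self.eventuallyLE
  · have hlim := intervalIntegral_tendsto_integral_Ioi 0 hpi tendsto_id
    obtain ⟨b, hb, hb0⟩ :=
      ((hlim.eventually (lt_mem_nhds hm.2)).and (eventually_gt_atTop 0)).exists
    have hcont : ContinuousOn (fun t => ∫ u in (0 : ℝ)..t, p u) (Icc 0 b) := by
      rw [← uIcc_of_le hb0.le]
      refine intervalIntegral.continuousOn_primitive_interval ?_
      rw [uIcc_of_le hb0.le, integrableOn_Icc_iff_integrableOn_Ioc]
      exact hpi.mono_set Ioc_subset_Ioi_self
    obtain ⟨s, hs, rfl⟩ := intermediate_value_Icc hb0.le hcont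
      (show m ∈ Icc _ _ from ⟨by simpa using hm.1.le, hb.le⟩)
    refine ⟨s, hs.1.lt_of_ne ?_, rfl⟩
    rintro rfl
    simp at hm

theorem integral_Ioi_pos (hp : ContinuousOn p (Ioi 0)) (hpos : ∀ s ∈ Ioi 0, 0 < p s)
    (hpi : IntegrableOn p (Ioi 0)) : 0 < ∫ s in Ioi 0, p s :=
  have h := (bijOn_integral_zero hp hpos hpi).mapsTo (mem_Ioi.2 one_pos)
  h.1.trans h.2

/-- `x : ℝ → ℝ` is a quantile function of the density `p` on `(0, ∞)`: it parametrises `(0, ∞)` by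
the fraction in `(0, 1)` of the mass of `p` to the left of a point. -/
structure IsQuantile (p x : ℝ → ℝ) : Prop where
  surjOn : SurjOn x (Ioo 0 1) (Ioi 0)
  mapsTo : MapsTo x (Ioo 0 1) (Ioi 0)
  strictMonoOn : StrictMonoOn x (Ioo 0 1)
  hasDerivAt : ∀ τ ∈ Ioo (0 : ℝ) 1, HasDerivAt x ((∫ s in Ioi 0, p s) / p (x τ)) τ

theorem exists_isQuantile (hp : ContinuousOn p (Ioi 0)) (hpos : ∀ s ∈ Ioi 0, 0 < p s)
    (hpi : IntegrableOn p (Ioi 0)) : ∃ x, IsQuantile p x := by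
  set R : ℝ → ℝ := fun t => ∫ u in (0 : ℝ)..t, p u
  set M := ∫ s in Ioi 0, p s
  have hbij : BijOn R (Ioi 0) (Ioo 0 M) := bijOn_integral_zero hp hpos hpi
  have hR : StrictMonoOn R (Ioi 0) := strictMonoOn_integral_zero hp hpos hpi
  have hM0 : 0 < M := integral_Ioi_pos hp hpos hpi
  have hscale : ∀ τ ∈ Ioo (0 : ℝ) 1, M * τ ∈ Ioo 0 M := fun τ hτ =>
    ⟨mul_pos hM0 hτ.1, mul_lt_of_lt_one_right hM0 hτ.2⟩
  choose! x hx0 hx using fun τ hτ => hbij.surjOn (hscale τ hτ)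
  have hsurj : SurjOn x (Ioo 0 1) (Ioi 0) := fun s hs => by
    have hτ : R s / M ∈ Ioo (0 : ℝ) 1 :=
      ⟨div_pos (hbij.mapsTo hs).1 hM0, (div_lt_one hM0).2 (hbij.mapsTo hs).2⟩
    refine ⟨R s / M, hτ, hR.injOn (hx0 _ hτ) hs ?_⟩
    rw [hx _ hτ, mul_div_cancel₀ _ hM0.ne']
  have hmono : StrictMonoOn x (Ioo 0 1) := fun a ha b hb hab => by
    rw [← hR.lt_iff_lt (hx0 a ha) (hx0 b hb), hx a ha, hx b hb]
    exact mul_lt_mul_of_pos_left hab hM0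
  refine ⟨x, hsurj, hx0, hmono, fun τ hτ => ?_⟩
  have hcont : ContinuousAt x τ := hmono.continuousAt_of_image_mem_nhds (isOpen_Ioo.mem_nhds hτ)
    (mem_of_superset (Ioi_mem_nhds (hx0 τ hτ)) hsurj)
  have hderiv :=
    (hasDerivAt_integral_zero_of_continuousOn_Ioi hp hpi (hx0 τ hτ)).div_const M
  rw [← inv_div]
  refine hderiv.of_local_left_inverse hcont (div_pos (hpos _ (hx0 τ hτ)) hM0).ne' ?_
  filter_upwards [isOpen_Ioo.mem_nhds hτ] with t ht
  exact (congrArg (· / M) (hx t ht)).trans (mul_div_cancel_left₀ t hM0.ne')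

theorem IsQuantile.pos {x : ℝ → ℝ} (hx : IsQuantile p x) {τ : ℝ} (hτ : τ ∈ Ioo (0 : ℝ) 1) :
    0 < x τ :=
  hx.mapsTo hτ

variable {q x y : ℝ → ℝ}

/-- The derivative of the geometric mean `√(x * y)` of the quantile functions `x` of `p` and `y` of
`q`. -/
noncomputable def sqrtMulDeriv (p q x y : ℝ → ℝ) (τ : ℝ) : ℝ :=
  ((∫ s in Ioi 0, p s) / p (x τ) * y τ + x τ * ((∫ s in Ioi 0, q s) / q (y τ))) /
    (2 * √(x τ * y τ))

theorem IsQuantile.hasDerivAt_sqrt_mul (hx : IsQuantile p x) (hy : IsQuantile q y) {τ : ℝ}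
    (hτ : τ ∈ Ioo (0 : ℝ) 1) :
    HasDerivAt (fun t => √(x t * y t)) (sqrtMulDeriv p q x y τ) τ :=
  ((hx.hasDerivAt τ hτ).mul (hy.hasDerivAt τ hτ)).sqrt (mul_pos (hx.pos hτ) (hy.pos hτ)).ne'

theorem IsQuantile.injOn_sqrt_mul (hx : IsQuantile p x) (hy : IsQuantile q y) :
    InjOn (fun t => √(x t * y t)) (Ioo 0 1) :=
  StrictMonoOn.injOn fun _ ha _ hb hab =>
    Real.sqrt_lt_sqrt (mul_pos (hx.pos ha) (hy.pos ha)).le <|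
      mul_lt_mul'' (hx.strictMonoOn ha hb hab) (hy.strictMonoOn ha hb hab)
        (hx.pos ha).le (hy.pos ha).le

theorem IsQuantile.sqrtMulDeriv_nonneg (hx : IsQuantile p x) (hy : IsQuantile q y)
    (hp0 : ∀ s ∈ Ioi 0, 0 < p s) (hq0 : ∀ t ∈ Ioi 0, 0 < q t) {τ : ℝ} (hτ : τ ∈ Ioo (0 : ℝ) 1) :
    0 ≤ sqrtMulDeriv p q x y τ := by
  have hP : 0 ≤ ∫ s in Ioi 0, p s :=
    setIntegral_nonneg measurableSet_Ioi fun s hs => (hp0 s hs).le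
  have hQ : 0 ≤ ∫ t in Ioi 0, q t :=
    setIntegral_nonneg measurableSet_Ioi fun t ht => (hq0 t ht).le
  have := hx.pos hτ
  have := hy.pos hτ
  have := hp0 _ (hx.mapsTo hτ)
  have := hq0 _ (hy.mapsTo hτ)
  unfold sqrtMulDeriv
  positivity

theorem IsQuantile.continuousOn_sqrtMulDeriv (hx : IsQuantile p x) (hy : IsQuantile q y)
    (hp : ContinuousOn p (Ioi 0)) (hq : ContinuousOn q (Ioi 0)) (hp0 : ∀ s ∈ Ioi 0, 0 < p s)
    (hq0 : ∀ t ∈ Ioi 0, 0 < q t) : ContinuousOn (sqrtMulDeriv p q x y) (Ioo 0 1) := by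
  have hxc : ContinuousOn x (Ioo 0 1) := HasDerivAt.continuousOn hx.hasDerivAt
  have hyc : ContinuousOn y (Ioo 0 1) := HasDerivAt.continuousOn hy.hasDerivAt
  have hpx : ∀ τ ∈ Ioo (0 : ℝ) 1, p (x τ) ≠ 0 := fun τ hτ => (hp0 _ (hx.mapsTo hτ)).ne'
  have hqy : ∀ τ ∈ Ioo (0 : ℝ) 1, q (y τ) ≠ 0 := fun τ hτ => (hq0 _ (hy.mapsTo hτ)).ne'
  have hden : ∀ τ ∈ Ioo (0 : ℝ) 1, 2 * √(x τ * y τ) ≠ 0 := fun τ hτ =>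
    (mul_pos two_pos (Real.sqrt_pos.2 (mul_pos (hx.pos hτ) (hy.pos hτ)))).ne'
  exact ((((continuousOn_const.div (hp.comp hxc hx.mapsTo) hpx).mul hyc).add
    (hxc.mul (continuousOn_const.div (hq.comp hyc hy.mapsTo) hqy))).div
      (continuousOn_const.mul (hxc.mul hyc).sqrt) hden)

theorem IsQuantile.integral_transport_le (hx : IsQuantile p x) (hy : IsQuantile q y)
    (hp0 : ∀ s ∈ Ioi 0, 0 < p s) (hq0 : ∀ t ∈ Ioi 0, 0 < q t) :
    IntegrableOn (fun τ => sqrtMulDeriv p q x y τ * exp (-(1 / 2) * √(x τ * y τ) ^ 2)) (Ioo 0 1) ∧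
      ∫ τ in Ioo 0 1, sqrtMulDeriv p q x y τ * exp (-(1 / 2) * √(x τ * y τ) ^ 2) ≤ √(π / 2) := by
  set r : ℝ → ℝ := fun τ => √(x τ * y τ)
  have hr : ∀ τ ∈ Ioo (0 : ℝ) 1, HasDerivWithinAt r (sqrtMulDeriv p q x y τ) (Ioo 0 1) τ :=
    fun τ hτ => (hx.hasDerivAt_sqrt_mul hy hτ).hasDerivWithinAt
  have habs : EqOn (fun τ => |sqrtMulDeriv p q x y τ| • exp (-(1 / 2) * r τ ^ 2))
      (fun τ => sqrtMulDeriv p q x y τ * exp (-(1 / 2) * r τ ^ 2)) (Ioo 0 1) := fun τ hτ => by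
    simp only [abs_of_nonneg (hx.sqrtMulDeriv_nonneg hy hp0 hq0 hτ), smul_eq_mul]
  have hgauss : Integrable fun u : ℝ => exp (-(1 / 2) * u ^ 2) :=
    integrable_exp_neg_mul_sq (by norm_num)
  have himage : r '' Ioo 0 1 ⊆ Ioi 0 := by
    rintro _ ⟨τ, hτ, rfl⟩
    exact Real.sqrt_pos.2 (mul_pos (hx.pos hτ) (hy.pos hτ))
  refine ⟨(integrableOn_congr_fun habs measurableSet_Ioo).1 <|
    (integrableOn_image_iff_integrableOn_abs_deriv_smul measurableSet_Ioo hr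
      (hx.injOn_sqrt_mul hy) fun u => exp (-(1 / 2) * u ^ 2)).1 hgauss.integrableOn, ?_⟩
  calc ∫ τ in Ioo 0 1, sqrtMulDeriv p q x y τ * exp (-(1 / 2) * r τ ^ 2)
      = ∫ u in r '' Ioo 0 1, exp (-(1 / 2) * u ^ 2) := by
        rw [integral_image_eq_integral_abs_deriv_smul measurableSet_Ioo hr (hx.injOn_sqrt_mul hy)]
        exact (setIntegral_congr_fun measurableSet_Ioo habs).symm
    _ ≤ ∫ u in Ioi 0, exp (-(1 / 2) * u ^ 2) :=
        setIntegral_mono_set hgauss.integrableOn (Eventually.of_forall fun _ => (exp_pos _).le)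
          himage.eventuallyLE
    _ = √(π / 2) := by
        rw [integral_gaussian_Ioi, ← Real.sqrt_sq (zero_le_two (α := ℝ)),
          ← Real.sqrt_div' _ (by positivity)]
        congr 1
        ring_nf

theorem integrableOn_Ioi_of_mul_le_exp (hp : ContinuousOn p (Ioi 0)) (hp0 : ∀ s ∈ Ioi 0, 0 < p s)
    (hq0 : ∀ t ∈ Ioi 0, 0 < q t) (hpq : ∀ s ∈ Ioi 0, ∀ t ∈ Ioi 0, p s * q t ≤ exp (-(s * t))) :
    IntegrableOn p (Ioi 0) := by
  have hdom : IntegrableOn (fun s => (q 1)⁻¹ * exp (-s)) (Ioi 0) :=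
    (integrableOn_exp_neg_Ioi 0).const_mul _
  refine hdom.mono' (hp.aestronglyMeasurable measurableSet_Ioi) ?_
  filter_upwards [ae_restrict_mem measurableSet_Ioi] with s hs
  have hbound := hpq s hs 1 (mem_Ioi.2 one_pos)
  rw [mul_one] at hbound
  rw [norm_of_nonneg (hp0 s hs).le, inv_mul_eq_div]
  exact (le_div_iff₀ (hq0 1 (mem_Ioi.2 one_pos))).2 hbound

theorem sqrt_mul_le_div_two_mul_sqrt {a b x y : ℝ} (ha : 0 < a) (hb : 0 < b) (hx : 0 < x)
    (hy : 0 < y) : √(a * b) ≤ (a * y + x * b) / (2 * √(x * y)) ∧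
      (√(a * b) = (a * y + x * b) / (2 * √(x * y)) → a * y = x * b) := by
  have hxy : 0 < 2 * √(x * y) := by positivity
  have hprod : √(a * b) * (2 * √(x * y)) = 2 * √(a * y) * √(x * b) := by
    rw [mul_left_comm, mul_assoc, ← Real.sqrt_mul (by positivity), ← Real.sqrt_mul (by positivity)]
    ring_nf
  have hu : √(a * y) ^ 2 = a * y := Real.sq_sqrt (by positivity)
  have hv : √(x * b) ^ 2 = x * b := Real.sq_sqrt (by positivity)
  rw [le_div_iff₀ hxy, eq_div_iff hxy.ne', hprod]
  refine ⟨(two_mul_le_add_sq _ _).trans_eq (congrArg₂ _ hu hv), fun h => ?_⟩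
  have hsq : (√(a * y) - √(x * b)) ^ 2 = 0 := by linear_combination -h + hu + hv
  rw [← hu, ← hv, sub_eq_zero.1 (pow_eq_zero_iff two_ne_zero |>.1 hsq)]

/-- At equal quantiles `x`, `y` of two densities with masses `P`, `Q`, the right-hand side is the
pull-back of `exp (-r ^ 2 / 2)` under `r = √(x * y)`. -/
theorem sqrt_mul_le_transport {x y p q P Q : ℝ} (hx : 0 < x) (hy : 0 < y) (hp : 0 < p) (hq : 0 < q)
    (hP : 0 < P) (hQ : 0 < Q) (hpq : p * q ≤ exp (-(x * y))) :
    √(P * Q) ≤ (P / p * y + x * (Q / q)) / (2 * √(x * y)) * exp (-(1 / 2) * √(x * y) ^ 2) ∧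
      (√(P * Q) = (P / p * y + x * (Q / q)) / (2 * √(x * y)) * exp (-(1 / 2) * √(x * y) ^ 2) →
        P / p * y = x * (Q / q) ∧ p * q = exp (-(x * y))) := by
  obtain ⟨hmean, hmean_eq⟩ := sqrt_mul_le_div_two_mul_sqrt (div_pos hP hp) (div_pos hQ hq) hx hy
  have hexp : exp (-(1 / 2) * √(x * y) ^ 2) = √(exp (-(x * y))) := by
    rw [← Real.exp_half, Real.sq_sqrt (by positivity)]
    ring_nf
  have hsplit : √(P * Q) = √(P / p * (Q / q)) * √(p * q) := by
    rw [← Real.sqrt_mul (by positivity)]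
    field_simp
  have hle : √(p * q) ≤ √(exp (-(x * y))) := Real.sqrt_le_sqrt hpq
  rw [hexp, hsplit]
  refine ⟨mul_le_mul hmean hle (Real.sqrt_nonneg _) (by positivity), fun h => ?_⟩
  obtain ⟨h₁, h₂⟩ :=
    (mul_eq_mul_iff_eq_and_eq_of_pos hmean hle (by positivity) (by positivity)).1 h
  exact ⟨hmean_eq h₁, (Real.sqrt_inj (by positivity) (by positivity)).1 h₂⟩

theorem IsQuantile.exists_eq_mul (hx : IsQuantile p x) (hy : IsQuantile q y)
    (h : ∀ τ ∈ Ioo (0 : ℝ) 1, (∫ s in Ioi 0, p s) / p (x τ) * y τ =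
      x τ * ((∫ t in Ioi 0, q t) / q (y τ))) : ∃ l, ∀ τ ∈ Ioo (0 : ℝ) 1, y τ = l * x τ := by
  have hderiv : ∀ τ ∈ Ioo (0 : ℝ) 1, HasDerivAt (fun t => y t / x t) 0 τ := fun τ hτ => by
    refine ((hy.hasDerivAt τ hτ).div (hx.hasDerivAt τ hτ) (hx.pos hτ).ne').congr_deriv ?_
    rw [div_eq_zero_iff, sub_eq_zero]
    left
    linear_combination -h τ hτ
  have hconst : ∀ τ ∈ Ioo (0 : ℝ) 1, y τ / x τ = y (1 / 2) / x (1 / 2) := fun τ hτ =>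
    isOpen_Ioo.is_const_of_deriv_eq_zero isPreconnected_Ioo
      (fun t ht => (hderiv t ht).differentiableAt.differentiableWithinAt)
      (fun t ht => (hderiv t ht).deriv) hτ (by norm_num)
  exact ⟨_, fun τ hτ => (div_eq_iff (hx.pos hτ).ne').1 (hconst τ hτ)⟩

theorem IsQuantile.exists_eq_gaussian (hx : IsQuantile p x) (hy : IsQuantile q y)
    (hp0 : ∀ s ∈ Ioi 0, 0 < p s) (hq0 : ∀ t ∈ Ioi 0, 0 < q t)
    (hP : 0 < ∫ s in Ioi 0, p s) (hQ : 0 < ∫ t in Ioi 0, q t)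
    (hslope : ∀ τ ∈ Ioo (0 : ℝ) 1, (∫ s in Ioi 0, p s) / p (x τ) * y τ =
      x τ * ((∫ t in Ioi 0, q t) / q (y τ)))
    (hprod : ∀ τ ∈ Ioo (0 : ℝ) 1, p (x τ) * q (y τ) = exp (-(x τ * y τ))) :
    ∃ c l, ∀ t ∈ Ioi 0, p t = c * exp (-(l * t ^ 2)) := by
  obtain ⟨l, hl⟩ := hx.exists_eq_mul hy hslope
  set P := ∫ s in Ioi 0, p s
  set Q := ∫ t in Ioi 0, q t
  refine ⟨√(l * P / Q), l / 2, fun t ht => ?_⟩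
  obtain ⟨τ, hτ, rfl⟩ := hx.surjOn ht
  have hx0 := hx.pos hτ
  have hpx := hp0 _ (hx.mapsTo hτ)
  have hqy := hq0 _ (hy.mapsTo hτ)
  have hl0 : 0 < l := pos_of_mul_pos_left (hl τ hτ ▸ hy.pos hτ) hx0.le
  have hexp : exp (-(l / 2 * x τ ^ 2)) ^ 2 = p (x τ) * q (y τ) := by
    rw [hprod τ hτ, hl τ hτ, ← Real.exp_nat_mul]
    ring_nf
  have hq : q (y τ) * (l * P) = Q * p (x τ) := by
    have h := hslope τ hτ
    rw [div_mul_eq_mul_div, mul_div_assoc', div_eq_div_iff hpx.ne' hqy.ne'] at h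
    exact mul_left_cancel₀ hx0.ne' (by linear_combination h - P * q (y τ) * hl τ hτ)
  rw [← sq_eq_sq₀ hpx.le (by positivity), mul_pow, Real.sq_sqrt (by positivity), hexp]
  field_simp
  linear_combination -hq

theorem integral_mul_integral_le_half_pi (hp : ContinuousOn p (Ioi 0))
    (hq : ContinuousOn q (Ioi 0)) (hp0 : ∀ s ∈ Ioi 0, 0 < p s) (hq0 : ∀ t ∈ Ioi 0, 0 < q t)
    (hpq : ∀ s ∈ Ioi 0, ∀ t ∈ Ioi 0, p s * q t ≤ exp (-(s * t))) :
    (∫ s in Ioi 0, p s) * ∫ t in Ioi 0, q t ≤ π / 2 ∧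
      ((∫ s in Ioi 0, p s) * ∫ t in Ioi 0, q t = π / 2 →
        ∃ c l, ∀ t ∈ Ioi 0, p t = c * exp (-(l * t ^ 2))) := by
  have hpi := integrableOn_Ioi_of_mul_le_exp hp hp0 hq0 hpq
  have hqi := integrableOn_Ioi_of_mul_le_exp hq hq0 hp0 fun s hs t ht => by
    simpa only [mul_comm] using hpq t ht s hs
  obtain ⟨x, hx⟩ := exists_isQuantile hp hp0 hpi
  obtain ⟨y, hy⟩ := exists_isQuantile hq hq0 hqi
  have hP := integral_Ioi_pos hp hp0 hpi
  have hQ := integral_Ioi_pos hq hq0 hqi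
  set P := ∫ s in Ioi 0, p s
  set Q := ∫ t in Ioi 0, q t
  have hpoint := fun τ (hτ : τ ∈ Ioo (0 : ℝ) 1) => sqrt_mul_le_transport (hx.pos hτ) (hy.pos hτ)
    (hp0 _ (hx.mapsTo hτ)) (hq0 _ (hy.mapsTo hτ)) hP hQ (hpq _ (hx.mapsTo hτ) _ (hy.mapsTo hτ))
  obtain ⟨hint, hgauss⟩ := hx.integral_transport_le hy hp0 hq0
  have hconst : IntegrableOn (fun _ => √(P * Q)) (Ioo (0 : ℝ) 1) := by simp
  have hunit : ∫ _ in Ioo (0 : ℝ) 1, √(P * Q) = √(P * Q) := by simp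
  have hle : √(P * Q) ≤ √(π / 2) := hunit ▸
    (setIntegral_mono_on hconst hint measurableSet_Ioo fun τ hτ => (hpoint τ hτ).1).trans hgauss
  refine ⟨(Real.sqrt_le_sqrt_iff (by positivity)).1 hle, fun h => ?_⟩
  have hxc : ContinuousOn x (Ioo 0 1) := HasDerivAt.continuousOn hx.hasDerivAt
  have hyc : ContinuousOn y (Ioo 0 1) := HasDerivAt.continuousOn hy.hasDerivAt
  have hcont : ContinuousOn
      (fun τ => sqrtMulDeriv p q x y τ * exp (-(1 / 2) * √(x τ * y τ) ^ 2)) (Ioo 0 1) :=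
    (hx.continuousOn_sqrtMulDeriv hy hp hq hp0 hq0).mul (by fun_prop)
  have heq := eqOn_of_setIntegral_le isOpen_Ioo continuousOn_const hcont hconst hint
    (fun τ hτ => (hpoint τ hτ).1) (by rwa [hunit, h])
  exact hx.exists_eq_gaussian hy hp0 hq0 hP hQ (fun τ hτ => ((hpoint τ hτ).2 (heq hτ)).1)
    fun τ hτ => ((hpoint τ hτ).2 (heq hτ)).2

end HalfLine

section RapidDensity

variable {V : Type*} [NormedAddCommGroup V]

theorem integrable_exp_neg_norm [NormedSpace ℝ V] [FiniteDimensional ℝ V] [MeasurableSpace V]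
    [BorelSpace V] (μ : Measure V) [μ.IsAddHaarMeasure] : Integrable (fun x => exp (-‖x‖)) μ := by
  set N := Module.finrank ℝ V + 1
  have hpow : Integrable (fun x => (1 + ‖x‖) ^ (-(N : ℝ))) μ :=
    integrable_one_add_norm (by exact_mod_cast Nat.lt_succ_self _)
  refine (hpow.const_mul (N.factorial * exp 1)).mono' (by fun_prop) (.of_forall fun x => ?_)
  have hx : 0 < 1 + ‖x‖ := by positivity
  have hexp := Real.pow_div_factorial_le_exp (1 + ‖x‖) hx.le N
  rw [div_le_iff₀ (by positivity), exp_add] at hexp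
  rw [norm_of_nonneg (exp_pos _).le, rpow_neg hx.le, rpow_natCast, ← div_eq_mul_inv,
    le_div_iff₀ (by positivity), exp_neg, inv_mul_le_iff₀ (exp_pos _)]
  linarith

/-- A continuous positive function decaying faster than every exponential. -/
structure RapidDensity (f : V → ℝ) : Prop where
  continuous : Continuous f
  pos : ∀ x, 0 < f x
  decay : ∀ a : ℝ, ∃ C, ∀ x, f x ≤ C * exp (-(a * ‖x‖))

namespace RapidDensity

variable {f : V → ℝ}

theorem exists_pos_decay (hf : RapidDensity f) (a : ℝ) :
    ∃ C, 0 < C ∧ ∀ x, f x ≤ C * exp (-(a * ‖x‖)) := by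
  obtain ⟨C, hC⟩ := hf.decay a
  exact ⟨C, pos_of_mul_pos_left ((hf.pos 0).trans_le (hC 0)) (exp_pos _).le, hC⟩

theorem comp_add_left (hf : RapidDensity f) (z : V) : RapidDensity fun x => f (z + x) := by
  refine ⟨by have := hf.continuous; fun_prop, fun x => hf.pos _, fun a => ?_⟩
  obtain ⟨C, hC0, hC⟩ := hf.exists_pos_decay |a|
  refine ⟨C * exp (|a| * ‖z‖), fun x => (hC _).trans ?_⟩
  rw [mul_assoc, ← exp_add]
  have hnorm : ‖x‖ ≤ ‖z‖ + ‖z + x‖ := by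
    simpa using norm_sub_le (z + x) z |>.trans_eq (add_comm _ _)
  have := mul_le_mul_of_nonneg_left hnorm (abs_nonneg a)
  have := mul_le_mul_of_nonneg_right (le_abs_self a) (norm_nonneg x)
  gcongr
  linarith

theorem exists_forall_le [ProperSpace V] (hf : RapidDensity f) : ∃ x₀, ∀ x, f x ≤ f x₀ := by
  obtain ⟨C, hC⟩ := hf.decay 1
  refine hf.continuous.exists_forall_ge' 0 ?_
  have hlim : Tendsto (fun x : V => C * exp (-(1 * ‖x‖))) (cocompact V) (𝓝 (C * 0)) := by
    refine (tendsto_exp_neg_atTop_nhds_zero.comp ?_).const_mul C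
    simpa using tendsto_norm_cocompact_atTop
  rw [mul_zero] at hlim
  filter_upwards [hlim.eventually_le_const (hf.pos 0)] with x hx using (hC x).trans hx

variable [InnerProductSpace ℝ V]

theorem exp_inner_mul (hf : RapidDensity f) (z : V) :
    RapidDensity fun x => exp ⟪x, z⟫ * f x := by
  refine ⟨by have := hf.continuous; fun_prop, fun x => mul_pos (exp_pos _) (hf.pos x), fun a => ?_⟩
  obtain ⟨C, hC⟩ := hf.decay (a + ‖z‖)
  refine ⟨C, fun x => ?_⟩
  calc exp ⟪x, z⟫ * f x ≤ exp (‖x‖ * ‖z‖) * (C * exp (-((a + ‖z‖) * ‖x‖))) :=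
        mul_le_mul (exp_le_exp.2 (real_inner_le_norm x z)) (hC x) (hf.pos x).le (exp_pos _).le
    _ = C * exp (-(a * ‖x‖)) := by
        rw [mul_left_comm, ← exp_add]
        ring_nf

variable [FiniteDimensional ℝ V] [MeasurableSpace V] [BorelSpace V]

theorem integrable (hf : RapidDensity f) : Integrable f := by
  obtain ⟨C, hC⟩ := hf.decay 1
  refine ((integrable_exp_neg_norm volume).const_mul C).mono' hf.continuous.aestronglyMeasurable
    (.of_forall fun x => ?_)
  simpa [norm_of_nonneg (hf.pos x).le] using hC x

theorem integrable_smul_self (hf : RapidDensity f) : Integrable fun x => f x • x := by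
  obtain ⟨C, hC0, hC⟩ := hf.exists_pos_decay 2
  have := hf.continuous
  refine ((integrable_exp_neg_norm volume).const_mul C).mono' (by fun_prop) (.of_forall fun x => ?_)
  calc ‖f x • x‖ = f x * ‖x‖ := by rw [norm_smul, norm_of_nonneg (hf.pos x).le]
    _ ≤ C * exp (-(2 * ‖x‖)) * exp ‖x‖ :=
        mul_le_mul (hC x) ((lt_add_one _).le.trans (add_one_le_exp _)) (norm_nonneg _)
          (by positivity)
    _ = C * exp (-‖x‖) := by
        rw [mul_assoc, ← exp_add]
        ring_nf

theorem setIntegral_pos (hf : RapidDensity f) {s : Set V} (hs : volume s ≠ 0) :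
    0 < ∫ x in s, f x := by
  have hsupp : Function.support f = univ := eq_univ_of_forall fun x => (hf.pos x).ne'
  rw [integral_pos_iff_support_of_nonneg (fun x => (hf.pos x).le) hf.integrable.integrableOn, hsupp,
    Measure.restrict_apply_univ]
  exact hs.bot_lt

theorem integral_pos (hf : RapidDensity f) : 0 < ∫ x, f x := by
  rw [← setIntegral_univ]
  exact hf.setIntegral_pos NeZero.out

end RapidDensity

end RapidDensity

section PolarPair

variable {V : Type*} [NormedAddCommGroup V] [InnerProductSpace ℝ V]

/-- Continuous positive functions `f` and `g` with `f x * g y ≤ exp (-⟪x, y⟫)`: the functional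
counterpart of a convex body and its polar. -/
structure PolarPair (f g : V → ℝ) : Prop where
  continuous_left : Continuous f
  continuous_right : Continuous g
  pos_left : ∀ x, 0 < f x
  pos_right : ∀ y, 0 < g y
  mul_le : ∀ x y, f x * g y ≤ exp (-⟪x, y⟫)

namespace PolarPair

variable {f g : V → ℝ}

theorem symm (h : PolarPair f g) : PolarPair g f :=
  ⟨h.continuous_right, h.continuous_left, h.pos_right, h.pos_left, fun x y => by
    rw [mul_comm, real_inner_comm]
    exact h.mul_le y x⟩

/-- Testing the pairing at `x = a • y / ‖y‖`, where `f` is bounded below, gives the decay of `g`. -/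
theorem rapidDensity_right [ProperSpace V] (h : PolarPair f g) : RapidDensity g := by
  refine ⟨h.continuous_right, h.pos_right, fun a => ?_⟩
  obtain ⟨x₀, -, hx₀⟩ := (isCompact_closedBall (0 : V) |a|).exists_isMinOn
    ⟨0, by simp⟩ h.continuous_left.continuousOn
  refine ⟨(f x₀)⁻¹, fun y => ?_⟩
  set x := (a * ‖y‖⁻¹) • y with hx
  have hxa : ‖x‖ ≤ |a| := by
    rw [hx, norm_smul, norm_mul, norm_inv, norm_norm, mul_assoc, Real.norm_eq_abs]
    exact mul_le_of_le_one_right (abs_nonneg a) (inv_mul_le_one (a := ‖y‖))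
  have hinner : ⟪x, y⟫ = a * ‖y‖ := by
    rw [hx, real_inner_smul_left, real_inner_self_eq_norm_sq, sq, mul_assoc, ← mul_assoc ‖y‖⁻¹,
      inv_mul_mul_self]
  rw [inv_mul_eq_div, le_div_iff₀ (h.pos_left x₀), mul_comm, ← hinner]
  exact (mul_le_mul_of_nonneg_right (hx₀ (by simpa using hxa)) (h.pos_right y).le).trans
    (h.mul_le x y)

theorem rapidDensity_left [ProperSpace V] (h : PolarPair f g) : RapidDensity f :=
  h.symm.rapidDensity_right

theorem exp_inner_mul_comp_add (h : PolarPair f g) (z : V) :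
    PolarPair (fun x => exp ⟪x, z⟫ * f x) fun y => g (z + y) := by
  have := h.continuous_left
  have := h.continuous_right
  refine ⟨by fun_prop, by fun_prop, fun x => mul_pos (exp_pos _) (h.pos_left x),
    fun y => h.pos_right _, fun x y => ?_⟩
  calc exp ⟪x, z⟫ * f x * g (z + y) ≤ exp ⟪x, z⟫ * exp (-⟪x, z + y⟫) := by
        rw [mul_assoc]
        exact mul_le_mul_of_nonneg_left (h.mul_le x (z + y)) (exp_pos _).le
    _ = exp (-⟪x, y⟫) := by
        rw [← exp_add, inner_add_right]
        ring_nf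

end PolarPair

end PolarPair

section HalfMarginal

variable {V H : Type*} [NormedAddCommGroup V] [NormedAddCommGroup H]

section NormedSpace

variable [NormedSpace ℝ V] [NormedSpace ℝ H]

/-- The marginal on `H` of the part of `f` lying on the side `s > 0` of the image of `L`, where `V`
is parametrised by `(s, x) ↦ s • a + L x`. -/
noncomputable def halfMarginal (a : V) (L : H →ₗ[ℝ] V) (f : V → ℝ) (x : H) : ℝ :=
  ∫ s in Ioi (0 : ℝ), f (s • a + L x)

theorem continuous_coord [FiniteDimensional ℝ H] (a : V) (L : H →ₗ[ℝ] V) :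
    Continuous fun z : ℝ × H => z.1 • a + L z.2 := by
  have := L.continuous_of_finiteDimensional
  fun_prop

theorem RapidDensity.continuous_halfMarginal [FiniteDimensional ℝ H] {f : V → ℝ}
    (hf : RapidDensity f) {a : V} (ha : a ≠ 0) (L : H →ₗ[ℝ] V) :
    Continuous (halfMarginal a L f) := by
  have hL := L.continuous_of_finiteDimensional
  have hcont := hf.continuous.comp (continuous_coord a L)
  obtain ⟨C, hC0, hC⟩ := hf.exists_pos_decay ‖a‖⁻¹
  refine continuous_iff_continuousAt.2 fun x₀ => ?_
  refine continuousAt_of_dominated (bound := fun s => C * exp (‖a‖⁻¹ * (‖L x₀‖ + 1)) * exp (-s))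
    (.of_forall fun x => (hcont.comp (Continuous.prodMk_left x)).aestronglyMeasurable) ?_
    ((integrableOn_exp_neg_Ioi 0).const_mul _)
    (.of_forall fun s => (hcont.comp (Continuous.prodMk_right s)).continuousAt)
  filter_upwards [hL.norm.continuousAt.eventually_lt_const (lt_add_one ‖L x₀‖)] with x hx
  filter_upwards [ae_restrict_mem measurableSet_Ioi] with s hs
  have hs0 : 0 < s := hs
  have hnorm : s * ‖a‖ ≤ ‖s • a + L x‖ + ‖L x‖ := by
    simpa [norm_smul, abs_of_pos hs0] using norm_sub_le (s • a + L x) (L x)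
  have hexp : s - ‖a‖⁻¹ * (‖L x₀‖ + 1) ≤ ‖a‖⁻¹ * ‖s • a + L x‖ := by
    rw [sub_le_iff_le_add, ← mul_add, ← div_eq_inv_mul, le_div_iff₀ (norm_pos_iff.2 ha)]
    linarith
  rw [norm_of_nonneg (hf.pos _).le, mul_assoc, ← exp_add]
  refine (hC _).trans ?_
  gcongr
  linarith

end NormedSpace

variable [InnerProductSpace ℝ V] [InnerProductSpace ℝ H]

theorem isOpen_halfSpace (b : V) : IsOpen {v : V | 0 < ⟪v, b⟫} :=
  isOpen_lt (by fun_prop) (by fun_prop)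

variable [FiniteDimensional ℝ V] [MeasurableSpace V] [BorelSpace V] [FiniteDimensional ℝ H]
  [MeasurableSpace H] [BorelSpace H]

theorem measurePreserving_coord_neg {a : V} {L : H →ₗ[ℝ] V}
    (hL : MeasurePreserving fun z : ℝ × H => z.1 • a + L z.2) :
    MeasurePreserving fun z : ℝ × H => z.1 • -a + L z.2 := by
  have hneg := (Measure.measurePreserving_neg (volume : Measure ℝ)).prod
    (MeasurePreserving.id (volume : Measure H))
  rw [← Measure.volume_eq_prod] at hneg
  simpa only [Function.comp_def, Prod.map_fst, Prod.map_snd, id, neg_smul, smul_neg] using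
    hL.comp hneg

/-- The linear coordinates `(s, x) ↦ s • a + L x` and `(t, y) ↦ t • b + M y` on `V` preserve volume
and are dual to each other: the inner product of the two images is `s * t + ⟪x, y⟫`. -/
structure DualFrame (a b : V) (L M : H →ₗ[ℝ] V) : Prop where
  inner_eq_one : ⟪a, b⟫ = 1
  inner_left : ∀ x, ⟪L x, b⟫ = 0
  inner_right : ∀ y, ⟪a, M y⟫ = 0
  inner_map : ∀ x y, ⟪L x, M y⟫ = ⟪x, y⟫
  measurePreserving_left : MeasurePreserving fun z : ℝ × H => z.1 • a + L z.2
  measurePreserving_right : MeasurePreserving fun z : ℝ × H => z.1 • b + M z.2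

/-- The barycentre of the density `f` is the origin. -/
def Centered (f : V → ℝ) : Prop :=
  ∫ x, f x • x = 0

namespace DualFrame

variable {a b : V} {L M : H →ₗ[ℝ] V} {f g : V → ℝ}

theorem symm (F : DualFrame a b L M) : DualFrame b a M L where
  inner_eq_one := by rw [real_inner_comm, F.inner_eq_one]
  inner_left y := by rw [real_inner_comm, F.inner_right]
  inner_right x := by rw [real_inner_comm, F.inner_left]
  inner_map y x := by rw [real_inner_comm, F.inner_map, real_inner_comm]
  measurePreserving_left := F.measurePreserving_right
  measurePreserving_right := F.measurePreserving_left

theorem left_ne_zero (F : DualFrame a b L M) : a ≠ 0 := by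
  rintro rfl
  simpa using F.inner_eq_one

theorem inner_coord (F : DualFrame a b L M) (s t : ℝ) (x y : H) :
    ⟪s • a + L x, t • b + M y⟫ = s * t + ⟪x, y⟫ := by
  simp only [inner_add_left, inner_add_right, real_inner_smul_left, real_inner_smul_right,
    F.inner_eq_one, F.inner_left, F.inner_right, F.inner_map]
  ring

theorem mul_le_exp (F : DualFrame a b L M) (h : PolarPair f g) (x y : H) :
    ∀ s ∈ Ioi (0 : ℝ), ∀ t ∈ Ioi (0 : ℝ),
      f (s • a + L x) * (exp ⟪x, y⟫ * g (t • b + M y)) ≤ exp (-(s * t)) := fun s _ t _ =>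
  calc f (s • a + L x) * (exp ⟪x, y⟫ * g (t • b + M y))
      ≤ exp ⟪x, y⟫ * exp (-⟪s • a + L x, t • b + M y⟫) := by
        rw [mul_left_comm]
        exact mul_le_mul_of_nonneg_left (h.mul_le _ _) (exp_pos _).le
    _ = exp (-(s * t)) := by
        rw [F.inner_coord, ← exp_add]
        ring_nf

theorem halfMarginal_mul_le (F : DualFrame a b L M) (h : PolarPair f g)
    (x y : H) :
    halfMarginal a L f x * (2 / π * halfMarginal b M g y) ≤ exp (-⟪x, y⟫) ∧
      (halfMarginal a L f x * (2 / π * halfMarginal b M g y) = exp (-⟪x, y⟫) →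
        ∃ c l, ∀ s ∈ Ioi (0 : ℝ), f (s • a + L x) = c * exp (-(l * s ^ 2))) := by
  have hcont : ∀ (c : V) (N : H →ₗ[ℝ] V) (z : H), Continuous fun s : ℝ => s • c + N z :=
    fun c N z => by fun_prop
  obtain ⟨hle, heq⟩ := integral_mul_integral_le_half_pi
    (h.continuous_left.comp (hcont a L x)).continuousOn
    (continuous_const.mul (h.continuous_right.comp (hcont b M y))).continuousOn
    (fun s _ => h.pos_left _) (fun t _ => mul_pos (exp_pos ⟪x, y⟫) (h.pos_right _))
    (F.mul_le_exp h x y)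
  have hrescale : halfMarginal a L f x * (2 / π * halfMarginal b M g y) = exp (-⟪x, y⟫) * (2 / π) *
      ((∫ s in Ioi (0 : ℝ), f (s • a + L x)) *
        ∫ t in Ioi (0 : ℝ), exp ⟪x, y⟫ * g (t • b + M y)) := by
    rw [integral_const_mul, exp_neg]
    simp only [halfMarginal]
    field_simp
  have hpi : exp (-⟪x, y⟫) * (2 / π) * (π / 2) = exp (-⟪x, y⟫) := by field_simp
  have hpos : 0 < exp (-⟪x, y⟫) * (2 / π) := by positivity
  rw [hrescale]
  refine ⟨(mul_le_mul_of_nonneg_left hle hpos.le).trans_eq hpi, fun h => heq ?_⟩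
  exact mul_left_cancel₀ hpos.ne' (h.trans hpi.symm)

theorem halfMarginal_pos (F : DualFrame a b L M) (h : PolarPair f g) (x : H) :
    0 < halfMarginal a L f x := by
  have hcont : ContinuousOn (fun s : ℝ => f (s • a + L x)) (Ioi 0) :=
    (h.continuous_left.comp (by fun_prop)).continuousOn
  exact integral_Ioi_pos hcont (fun s _ => h.pos_left _) <|
    integrableOn_Ioi_of_mul_le_exp hcont (fun s _ => h.pos_left _)
      (fun t _ => mul_pos (exp_pos ⟪x, 0⟫) (h.pos_right (t • b + M 0))) (F.mul_le_exp h x 0)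

theorem polarPair (F : DualFrame a b L M) (h : PolarPair f g) :
    PolarPair (halfMarginal a L f) fun y => 2 / π * halfMarginal b M g y where
  continuous_left := h.rapidDensity_left.continuous_halfMarginal F.left_ne_zero L
  continuous_right :=
    continuous_const.mul (h.rapidDensity_right.continuous_halfMarginal F.symm.left_ne_zero M)
  pos_left := F.halfMarginal_pos h
  pos_right y := mul_pos (by positivity) (F.symm.halfMarginal_pos h.symm y)
  mul_le x y := (F.halfMarginal_mul_le h x y).1

theorem neg (F : DualFrame a b L M) : DualFrame (-a) (-b) L M where
  inner_eq_one := by rw [inner_neg_neg, F.inner_eq_one]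
  inner_left x := by rw [inner_neg_right, F.inner_left, neg_zero]
  inner_right y := by rw [inner_neg_left, F.inner_right, neg_zero]
  inner_map := F.inner_map
  measurePreserving_left := measurePreserving_coord_neg F.measurePreserving_left
  measurePreserving_right := measurePreserving_coord_neg F.measurePreserving_right

theorem integral_halfMarginal (F : DualFrame a b L M) {φ : V → ℝ} (hφ : Integrable φ) :
    ∫ x, halfMarginal a L φ x = ∫ v in {v | 0 < ⟪v, b⟫}, φ v := by
  have hpre : (fun z : ℝ × H => z.1 • a + L z.2) ⁻¹' {v | 0 < ⟪v, b⟫} = Ioi 0 ×ˢ univ := by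
    ext z
    simp [inner_add_left, real_inner_smul_left, F.inner_eq_one, F.inner_left]
  have hint := F.measurePreserving_left.integrable_comp_of_integrable hφ
  rw [← F.measurePreserving_left.map_eq, setIntegral_map (isOpen_halfSpace b).measurableSet ?_
    F.measurePreserving_left.aemeasurable, hpre, Measure.volume_eq_prod, ← Measure.prod_restrict,
    integral_prod_symm, Measure.restrict_univ]
  · rfl
  · rw [Measure.prod_restrict, ← Measure.volume_eq_prod]
    exact hint.integrableOn
  · rw [F.measurePreserving_left.map_eq]
    exact hφ.aestronglyMeasurable

theorem centered_halfMarginal (F : DualFrame a b L M) (h : PolarPair f g) {r : ℝ}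
    (hr : ∫ v in {v | 0 < ⟪v, b⟫}, f v • v = r • a) : Centered (halfMarginal a L f) := by
  refine ext_inner_left ℝ fun y => ?_
  have hf := h.rapidDensity_left.integrable_smul_self
  have hfM : Integrable fun v => f v * ⟪M y, v⟫ := by
    simpa only [real_inner_smul_right] using hf.const_inner (𝕜 := ℝ) (M y)
  have hslice : ∀ x, ⟪y, halfMarginal a L f x • x⟫ =
      halfMarginal a L (fun v => f v * ⟪M y, v⟫) x := fun x => by
    have hcoord : ∀ s : ℝ, ⟪M y, s • a + L x⟫ = ⟪y, x⟫ := fun s => by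
      simpa [real_inner_comm] using F.inner_coord s 0 x y
    simp only [halfMarginal, hcoord, integral_mul_const, real_inner_smul_right]
  calc ⟪y, ∫ x, halfMarginal a L f x • x⟫
      = ∫ x, halfMarginal a L (fun v => f v * ⟪M y, v⟫) x := by
        rw [← integral_inner (F.polarPair h).rapidDensity_left.integrable_smul_self]
        simp only [hslice]
    _ = ∫ v in {v | 0 < ⟪v, b⟫}, ⟪M y, f v • v⟫ := by
        rw [F.integral_halfMarginal hfM]
        simp only [real_inner_smul_right]
    _ = ⟪M y, r • a⟫ := by rw [integral_inner hf.integrableOn, hr]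
    _ = ⟪y, (0 : H)⟫ := by
        rw [real_inner_smul_right, real_inner_comm, F.inner_right, mul_zero, inner_zero_right]

end DualFrame

theorem ae_inner_ne_zero {b : V} (hb : b ≠ 0) : ∀ᵐ v : V, ⟪v, b⟫ ≠ 0 := by
  have hnull : volume ((ℝ ∙ b)ᗮ : Set V) = 0 := by
    refine Measure.addHaar_submodule _ _ fun htop => hb ?_
    rwa [Submodule.orthogonal_eq_top_iff, Submodule.span_singleton_eq_bot] at htop
  filter_upwards [measure_eq_zero_iff_ae_notMem.1 hnull] with v hv
  rwa [SetLike.mem_coe, Submodule.mem_orthogonal_singleton_iff_inner_left] at hv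

theorem integral_eq_add_halfSpaces {b : V} (hb : b ≠ 0) {φ : V → ℝ} (hφ : Integrable φ) :
    ∫ v, φ v = (∫ v in {v | 0 < ⟪v, b⟫}, φ v) + ∫ v in {v | 0 < ⟪v, -b⟫}, φ v := by
  rw [← integral_add_compl (isOpen_halfSpace b).measurableSet hφ]
  congr 1
  refine setIntegral_congr_set ?_
  filter_upwards [ae_inner_ne_zero hb] with v hv
  exact propext <| show ¬0 < ⟪v, b⟫ ↔ 0 < ⟪v, -b⟫ by
    rw [inner_neg_right, neg_pos, not_lt, hv.le_iff_lt]

end HalfMarginal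

theorem measurePreserving_shear {α G : Type*} [MeasurableSpace α] [MeasurableSpace G] [AddGroup G]
    [MeasurableAdd₂ G] {μ : Measure α} {ν : Measure G} [SFinite μ] [SFinite ν]
    [ν.IsAddLeftInvariant] {φ : α → G} (hφ : Measurable φ) :
    MeasurePreserving (fun z : α × G => (z.1, φ z.1 + z.2)) (μ.prod ν) (μ.prod ν) :=
  (MeasurePreserving.id μ).skew_product (g := fun s x => φ s + x)
    ((hφ.comp measurable_fst).add measurable_snd)
    (.of_forall fun s => (measurePreserving_add_left ν (φ s)).map_eq)

section Frame

variable {V : Type*} [NormedAddCommGroup V] [InnerProductSpace ℝ V]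

/-- The projection along `u` of the complement `uᗮ` onto `eᗮ`, for `⟪u, e⟫ = 1`. -/
noncomputable def obliqueProj (e u : V) : (ℝ ∙ u)ᗮ →ₗ[ℝ] V :=
  (ℝ ∙ u)ᗮ.subtype - ((innerₛₗ ℝ e).comp (ℝ ∙ u)ᗮ.subtype).smulRight u

theorem obliqueProj_apply (e u : V) (y : (ℝ ∙ u)ᗮ) : obliqueProj e u y = y - ⟪e, (y : V)⟫ • u := rfl

variable [FiniteDimensional ℝ V] [MeasurableSpace V] [BorelSpace V]

theorem measurePreserving_smul_add_orthogonal {u : V} (hu : ‖u‖ = 1) :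
    MeasurePreserving fun z : ℝ × (ℝ ∙ u)ᗮ => z.1 • u + (z.2 : V) := by
  have hline := (LinearIsometryEquiv.toSpanUnitSingleton (𝕜 := ℝ) u hu).measurePreserving
  have hprod := hline.prod (MeasurePreserving.id (volume : Measure (ℝ ∙ u)ᗮ))
  rw [← Measure.volume_eq_prod, ← Measure.volume_eq_prod] at hprod
  convert (LinearIsometryEquiv.measurePreserving (ℝ ∙ u).orthogonalDecomposition.symm).comp
    ((WithLp.volume_preserving_toLp _ _).comp hprod) using 2 with z
  simp

theorem dualFrame_obliqueProj {u e : V} (hu : ‖u‖ = 1) (hue : ⟪u, e⟫ = 1) :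
    DualFrame e u (ℝ ∙ u)ᗮ.subtype (obliqueProj e u) where
  inner_eq_one := by rw [real_inner_comm, hue]
  inner_left x := Submodule.mem_orthogonal_singleton_iff_inner_left.1 x.2
  inner_right y := by
    rw [obliqueProj_apply, inner_sub_right, real_inner_smul_right, real_inner_comm,
      real_inner_comm u, hue]
    ring
  inner_map x y := by
    rw [obliqueProj_apply, inner_sub_right, real_inner_smul_right, Submodule.subtype_apply,
      Submodule.mem_orthogonal_singleton_iff_inner_left.1 x.2, mul_zero, sub_zero,
      Submodule.coe_inner]
  measurePreserving_left := by
    have hw : e - u ∈ (ℝ ∙ u)ᗮ := by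
      rw [Submodule.mem_orthogonal_singleton_iff_inner_right, inner_sub_right, hue,
        real_inner_self_eq_norm_sq, hu]
      norm_num
    rw [Measure.volume_eq_prod]
    have := (measurePreserving_smul_add_orthogonal hu).comp <|
      measurePreserving_shear (μ := volume) (ν := volume)
        (φ := fun s : ℝ => s • (⟨e - u, hw⟩ : (ℝ ∙ u)ᗮ))
        (by fun_prop)
    convert this using 2 with z
    simp only [Function.comp_apply, Submodule.subtype_apply, Submodule.coe_add, Submodule.coe_smul]
    module
  measurePreserving_right := by
    rw [Measure.volume_eq_prod]
    have hshear := measurePreserving_shear (μ := volume) (ν := volume)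
      (φ := fun y : (ℝ ∙ u)ᗮ => -⟪e, (y : V)⟫)
      (by fun_prop)
    have := (measurePreserving_smul_add_orthogonal hu).comp <|
      (Measure.measurePreserving_swap.comp hshear).comp Measure.measurePreserving_swap
    convert this using 2 with z
    simp only [Function.comp_apply, obliqueProj_apply, Prod.fst_swap, Prod.snd_swap]
    module

end Frame

section Balance

theorem exists_setIntegral_lt_eq_half {α : Type*} [MeasurableSpace α] {μ : Measure α} {φ S : α → ℝ}
    (hφ : Integrable φ μ) (hφ0 : 0 < ∫ v, φ v ∂μ) (hS : Measurable S)
    (hlevel : ∀ c, ∀ᵐ v ∂μ, S v ≠ c) : ∃ c, ∫ v in {v | c < S v}, φ v ∂μ = (∫ v, φ v ∂μ) / 2 := by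
  have hmeas : ∀ c, MeasurableSet {v | c < S v} := fun c => measurableSet_lt measurable_const hS
  have htendsto : ∀ (l : Filter ℝ) [l.IsCountablyGenerated] (T : Set α), MeasurableSet T →
      (∀ᵐ v ∂μ, ∀ᶠ c in l, c < S v ↔ v ∈ T) →
      Tendsto (fun c => ∫ v in {v | c < S v}, φ v ∂μ) l (𝓝 (∫ v in T, φ v ∂μ)) := by
    intro l _ T hT hl
    simp only [← integral_indicator hT, ← integral_indicator (hmeas _)]
    refine tendsto_integral_filter_of_dominated_convergence (fun v => ‖φ v‖)
      (.of_forall fun c => hφ.aestronglyMeasurable.indicator (hmeas c))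
      (.of_forall fun c => .of_forall fun v => norm_indicator_le_norm_self _ _) hφ.norm ?_
    filter_upwards [hl] with v hv
    refine tendsto_const_nhds.congr' ?_
    filter_upwards [hv] with c hc
    by_cases hvT : v ∈ T <;> simp [hvT, hc]
  have hcont : Continuous fun c => ∫ v in {v | c < S v}, φ v ∂μ := by
    refine continuous_iff_continuousAt.2 fun c => htendsto _ _ (hmeas c) ?_
    filter_upwards [hlevel c] with v hv
    rcases hv.lt_or_gt with h | h
    · filter_upwards [lt_mem_nhds h] with d hd
      simp [h.not_gt, hd.not_gt]
    · filter_upwards [gt_mem_nhds h] with d hd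
      simp [h, hd]
  have hbot := htendsto atBot univ .univ (.of_forall fun v => by
    simpa using eventually_lt_atBot (S v))
  have htop := htendsto atTop ∅ .empty (.of_forall fun v => by
    simpa using eventually_ge_atTop (S v))
  rw [setIntegral_univ] at hbot
  rw [setIntegral_empty] at htop
  exact mem_range_of_exists_le_of_exists_ge hcont
    (htop.eventually_le_const (half_pos hφ0)).exists
    (hbot.eventually_const_le (half_lt_self hφ0)).exists

variable {V : Type*} [NormedAddCommGroup V] [InnerProductSpace ℝ V]

theorem exists_transverse {u p q : V} {m : ℝ} (hm : m ≠ 0) (hpq : ⟪u, p⟫ ≠ ⟪u, q⟫) :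
    ∃ e w, ⟪u, e⟫ = 1 ∧ ⟪w, u⟫ = 0 ∧ p - m • w = ⟪u, p⟫ • e ∧ q - m • w = ⟪u, q⟫ • e := by
  have hd : ⟪u, p - q⟫ ≠ 0 := by rwa [inner_sub_right, sub_ne_zero]
  set e := ⟪u, p - q⟫⁻¹ • (p - q)
  set w := m⁻¹ • (p - ⟪u, p⟫ • e)
  have hue : ⟪u, e⟫ = 1 := by rw [real_inner_smul_right, inv_mul_cancel₀ hd]
  have he : ⟪u, p - q⟫ • e = p - q := smul_inv_smul₀ hd _
  have hw : m • w = p - ⟪u, p⟫ • e := smul_inv_smul₀ hm _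
  refine ⟨e, w, hue, ?_, by rw [hw, sub_sub_cancel], ?_⟩
  · rw [real_inner_comm, real_inner_smul_right, inner_sub_right, real_inner_smul_right, hue,
      mul_one, sub_self, mul_zero]
  · rw [inner_sub_right, sub_smul, sub_eq_sub_iff_add_eq_add] at he
    rw [hw, ← sub_add, sub_add_eq_add_sub, sub_eq_iff_eq_add, add_comm q, he, add_comm]

variable [FiniteDimensional ℝ V] [MeasurableSpace V] [BorelSpace V]

/-- The hyperplane `⟪v, u⟫ = 0` halves the mass of `f`, and the first moments of both halves are
multiples of a vector `e` transverse to it. -/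
structure BalancedHalves (u e : V) (f : V → ℝ) : Prop where
  inner_eq_one : ⟪u, e⟫ = 1
  mass_eq : ∫ v in {v | 0 < ⟪v, u⟫}, f v = ∫ v in {v | 0 < ⟪v, -u⟫}, f v
  moment_right : ∃ r : ℝ, ∫ v in {v | 0 < ⟪v, u⟫}, f v • v = r • e
  moment_left : ∃ r : ℝ, ∫ v in {v | 0 < ⟪v, -u⟫}, f v • v = r • -e

theorem setIntegral_halfSpace_comp_add {E : Type*} [NormedAddCommGroup E] [NormedSpace ℝ E]
    (φ : V → E) (b z : V) :
    ∫ v in {v | 0 < ⟪v, b⟫}, φ (z + v) = ∫ v in {v | ⟪z, b⟫ < ⟪v, b⟫}, φ v := by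
  rw [← (measurePreserving_add_left volume z).setIntegral_preimage_emb
    (measurableEmbedding_addLeft z) φ]
  simp only [preimage_ofPred_eq, inner_add_left, lt_add_iff_pos_right]

theorem RapidDensity.setIntegral_halfSpace_moment_comp_add {f : V → ℝ} (hf : RapidDensity f)
    {b z : V} (hz : ⟪z, b⟫ = 0) :
    ∫ v in {v | 0 < ⟪v, b⟫}, f (z + v) • v =
      (∫ v in {v | 0 < ⟪v, b⟫}, f v • v) - (∫ v in {v | 0 < ⟪v, b⟫}, f v) • z := by
  have hmass := setIntegral_halfSpace_comp_add f b z
  have hmoment := setIntegral_halfSpace_comp_add (fun v => f v • v) b z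
  rw [hz] at hmass hmoment
  have hfz := hf.comp_add_left z
  rw [← hmoment, ← hmass, ← integral_smul_const, ← integral_sub]
  · simp only [smul_add, add_sub_cancel_left]
  · simp only [smul_add]
    exact ((hfz.integrable.smul_const z).add hfz.integrable_smul_self).integrableOn
  · exact (hfz.integrable.smul_const z).integrableOn

theorem RapidDensity.exists_mass_eq {f : V → ℝ} (hf : RapidDensity f) {u : V} (hu : ‖u‖ = 1) :
    ∃ c : ℝ, ∫ v in {v | 0 < ⟪v, u⟫}, f (c • u + v) = ∫ v in {v | 0 < ⟪v, -u⟫}, f (c • u + v) := by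
  have hu0 : u ≠ 0 := norm_ne_zero_iff.1 (hu ▸ one_ne_zero)
  have hlevel : ∀ c : ℝ, ∀ᵐ v : V, ⟪v, u⟫ ≠ c := fun c => by
    filter_upwards [(measurePreserving_sub_right volume (c • u)).quasiMeasurePreserving.ae
      (ae_inner_ne_zero hu0)] with v hv
    simpa [inner_sub_left, real_inner_smul_left, hu, sub_eq_zero] using hv
  obtain ⟨c, hc⟩ := exists_setIntegral_lt_eq_half hf.integrable hf.integral_pos
    (S := fun v => ⟪v, u⟫) (by fun_prop) hlevel
  refine ⟨c, ?_⟩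
  have hsplit := integral_eq_add_halfSpaces hu0 (hf.comp_add_left (c • u)).integrable
  have hright := setIntegral_halfSpace_comp_add f u (c • u)
  rw [real_inner_smul_left, real_inner_self_eq_norm_sq, hu, one_pow, mul_one, hc] at hright
  rw [integral_add_left_eq_self f] at hsplit
  linarith

theorem volume_halfSpace_pos {b : V} (hb : b ≠ 0) : 0 < volume {v : V | 0 < ⟪v, b⟫} :=
  (isOpen_halfSpace b).measure_pos volume ⟨b, (real_inner_self_pos.2 hb :)⟩

theorem RapidDensity.inner_setIntegral_halfSpace_moment_pos {f : V → ℝ} (hf : RapidDensity f)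
    {b : V} (hb : b ≠ 0) : 0 < ⟪b, ∫ v in {v | 0 < ⟪v, b⟫}, f v • v⟫ := by
  have hint := hf.integrable_smul_self.integrableOn (s := {v | 0 < ⟪v, b⟫})
  have hpos : ∀ v ∈ {v : V | 0 < ⟪v, b⟫}, 0 < ⟪b, f v • v⟫ := fun v hv => by
    rw [real_inner_smul_right, real_inner_comm]
    exact mul_pos (hf.pos v) hv
  have hsupp : {v | 0 < ⟪v, b⟫} ⊆ Function.support fun v => ⟪b, f v • v⟫ :=
    fun v hv => (hpos v hv).ne'
  rw [← integral_inner hint, setIntegral_pos_iff_support_of_nonneg_ae _ (hint.const_inner b),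
    inter_eq_right.2 hsupp]
  · exact volume_halfSpace_pos hb
  · filter_upwards [ae_restrict_mem (isOpen_halfSpace b).measurableSet] with v hv
      using (hpos v hv).le

theorem RapidDensity.exists_balancedHalves {f : V → ℝ} (hf : RapidDensity f) {u : V}
    (hu : ‖u‖ = 1) : ∃ z e, BalancedHalves u e fun v => f (z + v) := by
  obtain ⟨c, hc⟩ := hf.exists_mass_eq hu
  set g := fun v => f (c • u + v)
  have hg : RapidDensity g := hf.comp_add_left _
  have hu0 : u ≠ 0 := norm_ne_zero_iff.1 (hu ▸ one_ne_zero)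
  have hp := hg.inner_setIntegral_halfSpace_moment_pos hu0
  have hq := hg.inner_setIntegral_halfSpace_moment_pos (neg_ne_zero.2 hu0)
  rw [inner_neg_left, neg_pos] at hq
  obtain ⟨e, w, hue, hwu, hpw, hqw⟩ := exists_transverse
    (hg.setIntegral_pos (volume_halfSpace_pos hu0).ne').ne' (hq.trans hp).ne'
  have hwu' : ⟪w, -u⟫ = 0 := by rw [inner_neg_right, hwu, neg_zero]
  have hmass : ∀ b, ⟪w, b⟫ = 0 →
      ∫ v in {v | 0 < ⟪v, b⟫}, g (w + v) = ∫ v in {v | 0 < ⟪v, b⟫}, g v := fun b hb => by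
    rw [setIntegral_halfSpace_comp_add, hb]
  have hshift : (fun v => f (c • u + w + v)) = fun v => g (w + v) := by simp only [g, add_assoc]
  refine ⟨c • u + w, e, ?_⟩
  rw [hshift]
  refine ⟨hue, ?_, ⟨_, (hg.setIntegral_halfSpace_moment_comp_add hwu).trans hpw⟩,
    -⟪u, ∫ v in {v | 0 < ⟪v, -u⟫}, g v • v⟫, ?_⟩
  · rw [hmass u hwu, hmass (-u) hwu']
    exact hc
  · rw [hg.setIntegral_halfSpace_moment_comp_add hwu', neg_smul_neg, ← hc]
    exact hqw

end Balance

section FunctionalSantalo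

variable {V : Type*} [NormedAddCommGroup V] [InnerProductSpace ℝ V]

theorem one_add_inner_mul_le {f : V → ℝ} (hf : ∀ x, 0 < f x) (z x : V) :
    (1 + ⟪x, z⟫) * f x ≤ exp ⟪x, z⟫ * f x :=
  mul_le_mul_of_nonneg_right ((add_comm _ _).trans_le (add_one_le_exp _)) (hf x).le

/-- The functional analogue of the polar body: the largest `g` such that
`f x * g y ≤ exp (-⟪x, y⟫)`. -/
noncomputable def polarTransform (f : V → ℝ) (y : V) : ℝ :=
  (⨆ x, exp ⟪x, y⟫ * f x)⁻¹

variable [FiniteDimensional ℝ V]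

theorem RapidDensity.exists_iSup_eq {f : V → ℝ} (hf : RapidDensity f) (y : V) :
    ∃ x₀, (∀ x, exp ⟪x, y⟫ * f x ≤ exp ⟪x₀, y⟫ * f x₀) ∧
      ⨆ x, exp ⟪x, y⟫ * f x = exp ⟪x₀, y⟫ * f x₀ := by
  obtain ⟨x₀, hx₀⟩ := (hf.exp_inner_mul y).exists_forall_le
  exact ⟨x₀, hx₀, le_antisymm (ciSup_le hx₀) (le_ciSup ⟨_, forall_mem_range.2 hx₀⟩ x₀)⟩

theorem RapidDensity.le_iSup {f : V → ℝ} (hf : RapidDensity f) (x y : V) :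
    exp ⟪x, y⟫ * f x ≤ ⨆ x, exp ⟪x, y⟫ * f x := by
  obtain ⟨x₀, hx₀, hsup⟩ := hf.exists_iSup_eq y
  exact hsup ▸ hx₀ x

theorem RapidDensity.iSup_pos {f : V → ℝ} (hf : RapidDensity f) (y : V) :
    0 < ⨆ x, exp ⟪x, y⟫ * f x :=
  (mul_pos (exp_pos _) (hf.pos 0)).trans_le (hf.le_iSup 0 y)

theorem RapidDensity.convexOn_iSup {f : V → ℝ} (hf : RapidDensity f) :
    ConvexOn ℝ univ fun y => ⨆ x, exp ⟪x, y⟫ * f x := by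
  refine ⟨convex_univ, fun y _ w _ a b ha hb hab => ?_⟩
  obtain ⟨x, -, hsup⟩ := hf.exists_iSup_eq (a • y + b • w)
  have hexp : exp ⟪x, a • y + b • w⟫ ≤ a • exp ⟪x, y⟫ + b • exp ⟪x, w⟫ := by
    rw [inner_add_right, real_inner_smul_right, real_inner_smul_right]
    exact convexOn_exp.2 (mem_univ _) (mem_univ _) ha hb hab
  calc ⨆ x, exp ⟪x, a • y + b • w⟫ * f x = exp ⟪x, a • y + b • w⟫ * f x := hsup
    _ ≤ (a • exp ⟪x, y⟫ + b • exp ⟪x, w⟫) * f x := mul_le_mul_of_nonneg_right hexp (hf.pos x).le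
    _ = a • (exp ⟪x, y⟫ * f x) + b • (exp ⟪x, w⟫ * f x) := by
      simp only [smul_eq_mul]
      ring
    _ ≤ _ := add_le_add (smul_le_smul_of_nonneg_left (hf.le_iSup x y) ha)
      (smul_le_smul_of_nonneg_left (hf.le_iSup x w) hb)

theorem RapidDensity.polarPair_polarTransform {f : V → ℝ} (hf : RapidDensity f) :
    PolarPair f (polarTransform f) where
  continuous_left := hf.continuous
  continuous_right := (continuousOn_univ.1 (hf.convexOn_iSup.continuousOn isOpen_univ)).inv₀
    fun y => (hf.iSup_pos y).ne'
  pos_left := hf.pos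
  pos_right y := inv_pos.2 (hf.iSup_pos y)
  mul_le x y := by
    rw [polarTransform, ← div_eq_mul_inv, div_le_iff₀ (hf.iSup_pos y), exp_neg,
      le_inv_mul_iff₀ (exp_pos _)]
    exact hf.le_iSup x y

theorem PolarPair.le_polarTransform {f g : V → ℝ} (h : PolarPair f g) (y : V) :
    g y ≤ polarTransform f y := by
  obtain ⟨x, -, hsup⟩ := h.rapidDensity_left.exists_iSup_eq y
  rw [polarTransform, hsup, ← one_div, le_div_iff₀ (mul_pos (exp_pos _) (h.pos_left x))]
  calc g y * (exp ⟪x, y⟫ * f x) = f x * g y * exp ⟪x, y⟫ := by ring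
    _ ≤ exp (-⟪x, y⟫) * exp ⟪x, y⟫ := mul_le_mul_of_nonneg_right (h.mul_le x y) (exp_pos _).le
    _ = 1 := by rw [← exp_add, neg_add_cancel, exp_zero]

theorem finrank_orthogonal_add_one {u : V} (hu : ‖u‖ = 1) :
    Module.finrank ℝ (ℝ ∙ u)ᗮ + 1 = Module.finrank ℝ V := by
  rw [← finrank_span_singleton (K := ℝ) (norm_ne_zero_iff.1 (hu ▸ one_ne_zero)), add_comm]
  exact (ℝ ∙ u).finrank_add_finrank_orthogonal

variable [MeasurableSpace V] [BorelSpace V]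

theorem RapidDensity.integral_mul_one_add_inner {f : V → ℝ} (hf : RapidDensity f)
    (hc : Centered f) (z : V) :
    Integrable (fun x => (1 + ⟪x, z⟫) * f x) ∧ ∫ x, (1 + ⟪x, z⟫) * f x = ∫ x, f x := by
  have hmoment : Integrable fun x => ⟪z, f x • x⟫ := hf.integrable_smul_self.const_inner (𝕜 := ℝ) z
  have heq : (fun x => (1 + ⟪x, z⟫) * f x) = fun x => f x + ⟪z, f x • x⟫ := by
    ext x
    rw [real_inner_smul_right, real_inner_comm]
    ring
  rw [heq]
  refine ⟨hf.integrable.add hmoment, ?_⟩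
  rw [integral_add hf.integrable hmoment, integral_inner hf.integrable_smul_self, hc,
    inner_zero_right, add_zero]

theorem RapidDensity.integral_le_integral_exp_inner_mul {f : V → ℝ} (hf : RapidDensity f)
    (hc : Centered f) (z : V) : ∫ x, f x ≤ ∫ x, exp ⟪x, z⟫ * f x := by
  obtain ⟨hint, heq⟩ := hf.integral_mul_one_add_inner hc z
  rw [← heq]
  exact integral_mono hint (hf.exp_inner_mul z).integrable (one_add_inner_mul_le hf.pos z)

theorem RapidDensity.eq_zero_of_integral_exp_inner_mul_le {f : V → ℝ} (hf : RapidDensity f)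
    (hc : Centered f) {z : V} (h : ∫ x, exp ⟪x, z⟫ * f x ≤ ∫ x, f x) : z = 0 := by
  obtain ⟨hint, heq⟩ := hf.integral_mul_one_add_inner hc z
  have hfz := hf.exp_inner_mul z
  have hcont := hf.continuous
  have hEq : EqOn (fun x => (1 + ⟪x, z⟫) * f x) (fun x => exp ⟪x, z⟫ * f x) univ :=
    eqOn_of_setIntegral_le (μ := volume) isOpen_univ (by fun_prop) hfz.continuous.continuousOn
      hint.integrableOn hfz.integrable.integrableOn
      (fun x _ => one_add_inner_mul_le hf.pos z x)
      (by simpa only [setIntegral_univ, heq] using h)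
  by_contra hz
  have hlt := add_one_lt_exp (real_inner_self_pos.2 hz).ne'
  rw [add_comm] at hlt
  exact hlt.ne (mul_right_cancel₀ (hf.pos z).ne' (hEq (mem_univ z)))

theorem PolarPair.exists_mul_eq_exp {f g : V → ℝ} (h : PolarPair f g)
    (hmax : ∫ y, polarTransform f y ≤ ∫ y, g y) (y : V) : ∃ x, f x * g y = exp (-⟪x, y⟫) := by
  have h' := h.rapidDensity_left.polarPair_polarTransform
  have hEq : EqOn g (polarTransform f) univ :=
    eqOn_of_setIntegral_le (μ := volume) isOpen_univ h.continuous_right.continuousOn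
      h'.continuous_right.continuousOn h.rapidDensity_right.integrable.integrableOn
      h'.rapidDensity_right.integrable.integrableOn (fun y _ => h.le_polarTransform y)
      (by simpa only [setIntegral_univ] using hmax)
  obtain ⟨x, -, hsup⟩ := h.rapidDensity_left.exists_iSup_eq y
  refine ⟨x, ?_⟩
  rw [hEq (mem_univ y), polarTransform, hsup, exp_neg]
  field_simp [(h.pos_left x).ne']

theorem integral_eq_of_finrank_eq_zero (hV : Module.finrank ℝ V = 0) (φ : V → ℝ) :
    ∫ x, φ x = φ 0 := by
  have : Subsingleton V := Module.finrank_zero_iff.1 hV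
  have hvol := (stdOrthonormalBasis ℝ V).volume_parallelepiped
  have hne : (parallelepiped (stdOrthonormalBasis ℝ V)).Nonempty :=
    nonempty_of_measure_ne_zero (hvol ▸ one_ne_zero)
  rw [Subsingleton.eq_univ_of_nonempty hne] at hvol
  have := uniqueOfSubsingleton (0 : V)
  rw [integral_unique, Measure.real, hvol, ENNReal.toReal_one, one_smul,
    Subsingleton.elim default (0 : V)]

namespace BalancedHalves

variable {u e : V} {f g : V → ℝ}

theorem dualFrame (hb : BalancedHalves u e f) (hu : ‖u‖ = 1) :
    DualFrame e u (ℝ ∙ u)ᗮ.subtype (obliqueProj e u) :=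
  dualFrame_obliqueProj hu hb.inner_eq_one

theorem integral_left (hb : BalancedHalves u e f) (hu : ‖u‖ = 1) (hf : Integrable f) :
    ∫ v, f v = 2 * ∫ x, halfMarginal e (ℝ ∙ u)ᗮ.subtype f x ∧
      ∫ v, f v = 2 * ∫ x, halfMarginal (-e) (ℝ ∙ u)ᗮ.subtype f x := by
  have hu0 : u ≠ 0 := norm_ne_zero_iff.1 (hu ▸ one_ne_zero)
  rw [(hb.dualFrame hu).integral_halfMarginal hf, (hb.dualFrame hu).neg.integral_halfMarginal hf,
    integral_eq_add_halfSpaces hu0 hf, hb.mass_eq, two_mul]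
  exact ⟨rfl, rfl⟩

theorem integral_right (hb : BalancedHalves u e f) (hu : ‖u‖ = 1) (hg : Integrable g) :
    ∫ v, g v = (∫ y, halfMarginal u (obliqueProj e u) g y) +
      ∫ y, halfMarginal (-u) (obliqueProj e u) g y := by
  have hF := (hb.dualFrame hu).symm
  rw [hF.integral_halfMarginal hg, hF.neg.integral_halfMarginal hg]
  exact integral_eq_add_halfSpaces hF.symm.left_ne_zero hg

theorem integral_mul_integral_eq (hb : BalancedHalves u e f) (hu : ‖u‖ = 1) (hf : Integrable f)
    (hg : Integrable g) :
    (∫ v, f v) * ∫ v, g v = π *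
      ((∫ x, halfMarginal e (ℝ ∙ u)ᗮ.subtype f x) *
          (∫ y, 2 / π * halfMarginal u (obliqueProj e u) g y) +
        (∫ x, halfMarginal (-e) (ℝ ∙ u)ᗮ.subtype f x) *
          ∫ y, 2 / π * halfMarginal (-u) (obliqueProj e u) g y) := by
  have hleft := hb.integral_left hu hf
  rw [hb.integral_right hu hg, integral_const_mul, integral_const_mul,
    ← mul_right_injective₀ two_ne_zero (hleft.1.symm.trans hleft.2), hleft.1]
  field_simp

theorem centered_right (hb : BalancedHalves u e f) (hu : ‖u‖ = 1) (h : PolarPair f g) :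
    Centered (halfMarginal e (ℝ ∙ u)ᗮ.subtype f) :=
  have ⟨_, hr⟩ := hb.moment_right
  (hb.dualFrame hu).centered_halfMarginal h hr

theorem centered_left (hb : BalancedHalves u e f) (hu : ‖u‖ = 1) (h : PolarPair f g) :
    Centered (halfMarginal (-e) (ℝ ∙ u)ᗮ.subtype f) :=
  have ⟨_, hr⟩ := hb.moment_left
  (hb.dualFrame hu).neg.centered_halfMarginal h hr

theorem integral_mul_integral_le (hb : BalancedHalves u e f) (hu : ‖u‖ = 1) (h : PolarPair f g)
    (hperp : ∀ p q : (ℝ ∙ u)ᗮ → ℝ, PolarPair p q → Centered p →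
      (∫ x, p x) * ∫ y, q y ≤ (2 * π) ^ Module.finrank ℝ (ℝ ∙ u)ᗮ) :
    (∫ x, f x) * ∫ y, g y ≤ (2 * π) ^ (Module.finrank ℝ (ℝ ∙ u)ᗮ + 1) := by
  have hF := hb.dualFrame hu
  rw [hb.integral_mul_integral_eq hu h.rapidDensity_left.integrable h.rapidDensity_right.integrable]
  calc _ ≤ π * ((2 * π) ^ Module.finrank ℝ (ℝ ∙ u)ᗮ + (2 * π) ^ Module.finrank ℝ (ℝ ∙ u)ᗮ) :=
        mul_le_mul_of_nonneg_left (add_le_add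
          (hperp _ _ (hF.polarPair h) (hb.centered_right hu h))
          (hperp _ _ (hF.neg.polarPair h) (hb.centered_left hu h))) pi_pos.le
    _ = _ := by ring

end BalancedHalves

theorem integral_mul_integral_le_exp_inner_mul {f g : V → ℝ} (h : PolarPair f g) (hc : Centered f)
    (z : V) : (∫ x, f x) * ∫ y, g y ≤ (∫ y, g (z + y)) * ∫ x, exp ⟪x, z⟫ * f x := by
  rw [integral_add_left_eq_self g, mul_comm]
  exact mul_le_mul_of_nonneg_left (h.rapidDensity_left.integral_le_integral_exp_inner_mul hc z)
    h.rapidDensity_right.integral_pos.le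

theorem integral_mul_integral_le_of_finrank (n : ℕ) : ∀ (V : Type*) [NormedAddCommGroup V]
    [InnerProductSpace ℝ V] [FiniteDimensional ℝ V] [MeasurableSpace V] [BorelSpace V]
    (f g : V → ℝ),
    Module.finrank ℝ V = n → PolarPair f g → Centered f →
    (∫ x, f x) * ∫ y, g y ≤ (2 * π) ^ n := by
  induction n with
  | zero =>
    intro V _ _ _ _ _ f g hV h _
    rw [integral_eq_of_finrank_eq_zero hV, integral_eq_of_finrank_eq_zero hV, pow_zero]
    simpa using h.mul_le 0 0
  | succ n ih =>
    intro V _ _ _ _ _ f g hV h hc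
    have : Nontrivial V := Module.nontrivial_of_finrank_pos (R := ℝ) (hV ▸ n.succ_pos)
    obtain ⟨u, hu⟩ := exists_norm_eq V zero_le_one
    have hperp : Module.finrank ℝ (ℝ ∙ u)ᗮ = n :=
      Nat.succ_injective ((finrank_orthogonal_add_one hu).trans hV)
    obtain ⟨z, e, hb⟩ := h.rapidDensity_right.exists_balancedHalves hu
    refine (integral_mul_integral_le_exp_inner_mul h hc z).trans ?_
    rw [← hperp]
    exact hb.integral_mul_integral_le hu (h.exp_inner_mul_comp_add z).symm
      fun p q hpq hp => (ih _ p q hperp hpq hp).trans_eq (by rw [hperp])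

theorem PolarPair.integral_mul_integral_le {f g : V → ℝ} (h : PolarPair f g) (hc : Centered f) :
    (∫ x, f x) * ∫ y, g y ≤ (2 * π) ^ Module.finrank ℝ V :=
  integral_mul_integral_le_of_finrank _ V f g rfl h hc

theorem DualFrame.exists_eq_gaussian {H : Type*} [NormedAddCommGroup H] [InnerProductSpace ℝ H]
    [FiniteDimensional ℝ H] [MeasurableSpace H] [BorelSpace H] {a b : V} {L M : H →ₗ[ℝ] V}
    {f g : V → ℝ} (F : DualFrame a b L M) (h : PolarPair f g) (hc : Centered (halfMarginal a L f))
    (heq : (2 * π) ^ Module.finrank ℝ H ≤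
      (∫ x, halfMarginal a L f x) * ∫ y, 2 / π * halfMarginal b M g y) (y : H) :
    ∃ c l, ∀ t ∈ Ioi (0 : ℝ), g (t • b + M y) = c * exp (-(l * t ^ 2)) := by
  have hp := F.polarPair h
  have hmax := (hp.rapidDensity_left.polarPair_polarTransform.integral_mul_integral_le hc).trans heq
  obtain ⟨x, hx⟩ := hp.exists_mul_eq_exp
    (le_of_mul_le_mul_left hmax hp.rapidDensity_left.integral_pos) y
  refine (F.symm.halfMarginal_mul_le h.symm y x).2 ?_
  rw [real_inner_comm, ← hx]
  ring

theorem PolarPair.exists_balancedHalves_of_le {f g : V → ℝ} (h : PolarPair f g) (hc : Centered f)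
    (heq : (2 * π) ^ Module.finrank ℝ V ≤ (∫ x, f x) * ∫ y, g y) {u : V} (hu : ‖u‖ = 1) :
    ∃ e, BalancedHalves u e g := by
  obtain ⟨z, e, hb⟩ := h.rapidDensity_right.exists_balancedHalves hu
  have hle := hb.integral_mul_integral_le hu (h.exp_inner_mul_comp_add z).symm
    fun _ _ hpq hp => hpq.integral_mul_integral_le hp
  rw [finrank_orthogonal_add_one hu, integral_add_left_eq_self g, mul_comm] at hle
  have hz := h.rapidDensity_left.eq_zero_of_integral_exp_inner_mul_le hc
    (le_of_mul_le_mul_right (hle.trans heq) h.rapidDensity_right.integral_pos)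
  exact ⟨e, by simpa only [hz, zero_add] using hb⟩

theorem BalancedHalves.exists_eq_gaussian {u e : V} {f g : V → ℝ} (hb : BalancedHalves u e g)
    (hu : ‖u‖ = 1) (h : PolarPair g f)
    (heq : (2 * π) ^ Module.finrank ℝ V ≤ (∫ x, g x) * ∫ y, f y) :
    (∀ y, (∃ c l, ∀ t ∈ Ioi (0 : ℝ), f (t • u + obliqueProj e u y) = c * exp (-(l * t ^ 2))) ∧
      ∃ c l, ∀ t ∈ Ioi (0 : ℝ), f (t • -u + obliqueProj e u y) = c * exp (-(l * t ^ 2))) ∧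
    ∫ y, halfMarginal u (obliqueProj e u) f y = ∫ y, halfMarginal (-u) (obliqueProj e u) f y := by
  have hF := hb.dualFrame hu
  have hright := (hF.polarPair h).integral_mul_integral_le (hb.centered_right hu h)
  have hleft := (hF.neg.polarPair h).integral_mul_integral_le (hb.centered_left hu h)
  have hmass := hb.integral_left hu h.rapidDensity_left.integrable
  have hpow (d : ℕ) : (2 * π) ^ (d + 1) = π * (2 * (2 * π) ^ d) := by ring
  rw [← finrank_orthogonal_add_one hu, hb.integral_mul_integral_eq hu h.rapidDensity_left.integrable
    h.rapidDensity_right.integrable, hpow, mul_le_mul_iff_right₀ pi_pos] at heq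
  refine ⟨fun y => ⟨hF.exists_eq_gaussian h (hb.centered_right hu h) (by linarith) y,
    hF.neg.exists_eq_gaussian h (hb.centered_left hu h) (by linarith) y⟩, ?_⟩
  have hsame := (hright.antisymm (by linarith)).trans (hleft.antisymm (by linarith)).symm
  rw [← mul_right_injective₀ two_ne_zero (hmass.1.symm.trans hmass.2), integral_const_mul,
    integral_const_mul] at hsame
  have hpos := (hF.polarPair h).rapidDensity_left.integral_pos
  exact mul_left_cancel₀ (by positivity) (mul_left_cancel₀ hpos.ne' hsame)

end FunctionalSantalo

section LayerCake

theorem setIntegral_Ioi_indicator_Iio {F : Type*} [NormedAddCommGroup F] [NormedSpace ℝ F]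
    [CompleteSpace F] {a : ℝ} (ha : 0 ≤ a) (v : F) :
    ∫ s in Ioi 0, (Iio a).indicator (fun _ => v) s = a • v := by
  rw [setIntegral_indicator measurableSet_Iio, Ioi_inter_Iio, setIntegral_const,
    Real.volume_real_Ioo_of_le ha, sub_zero]

theorem integral_smul_eq_integral_superlevel {α F : Type*} [MeasurableSpace α] {μ : Measure α}
    [SFinite μ] [NormedAddCommGroup F] [NormedSpace ℝ F] [CompleteSpace F] {f : α → ℝ} {g : α → F}
    (hf : Measurable f) (hf0 : ∀ x, 0 ≤ f x) (hg : AEStronglyMeasurable g μ)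
    (hfg : Integrable (fun x => f x • g x) μ) :
    ∫ x, f x • g x ∂μ = ∫ s in Ioi 0, ∫ x in {x | s < f x}, g x ∂μ := by
  have hslice (x : α) : (fun s => {p : α × ℝ | p.2 < f p.1}.indicator (fun p => g p.1) (x, s)) =
      (Iio (f x)).indicator fun _ => g x := rfl
  have hmeas : MeasurableSet {p : α × ℝ | p.2 < f p.1} :=
    measurableSet_lt measurable_snd (hf.comp measurable_fst)
  have hint : Integrable ({p : α × ℝ | p.2 < f p.1}.indicator fun p => g p.1)
      (μ.prod (volume.restrict (Ioi 0))) := by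
    refine (integrable_prod_iff (hg.comp_fst.indicator hmeas)).2 ⟨.of_forall fun x => ?_, ?_⟩
    · rw [hslice, integrable_indicator_iff measurableSet_Iio, IntegrableOn,
        Measure.restrict_restrict measurableSet_Iio, Iio_inter_Ioi]
      exact integrableOn_const measure_Ioo_lt_top.ne
    · convert hfg.norm using 2 with x
      have hnorm (s : ℝ) : ‖{p : α × ℝ | p.2 < f p.1}.indicator (fun p => g p.1) (x, s)‖ =
          (Iio (f x)).indicator (fun _ => ‖g x‖) s := norm_indicator_eq_indicator_norm _ _
      simp only [hnorm, setIntegral_Ioi_indicator_Iio (hf0 x), norm_smul, smul_eq_mul,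
        Real.norm_of_nonneg (hf0 x)]
  have hswap := integral_integral_swap (f := fun x s =>
    {p : α × ℝ | p.2 < f p.1}.indicator (fun p => g p.1) (x, s)) hint
  simp only [hslice, setIntegral_Ioi_indicator_Iio (hf0 _)] at hswap
  rw [hswap]
  refine setIntegral_congr_fun measurableSet_Ioi fun s _ => ?_
  exact integral_indicator (measurableSet_lt measurable_const hf)

end LayerCake

section GaugeGaussian

open scoped Pointwise

variable {V : Type*} [NormedAddCommGroup V] {K L : Set V} {c : ℝ}

section NormedSpace

variable [NormedSpace ℝ V]

/-- The density `exp (-c ‖x‖²)` with the Minkowski functional of `K` in place of the norm. Its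
superlevel sets are the dilates of `K`, which turns statements about `K` into statements about
integrals. -/
noncomputable def gaugeGaussian (c : ℝ) (K : Set V) (x : V) : ℝ :=
  exp (-(c * gauge K x ^ 2))

theorem superlevel_gaugeGaussian (hc : 0 < c) {s : ℝ} (hs : 0 < s) (K : Set V) :
    {x | s < gaugeGaussian c K x} = {x | gauge K x < √(-log s / c)} := by
  ext x
  rw [mem_ofPred_eq, mem_ofPred_eq, gaugeGaussian, ← log_lt_iff_lt_exp hs, lt_neg,
    lt_sqrt (gauge_nonneg x), lt_div_iff₀' hc]

theorem setOf_gauge_lt_eq_smul_interior (hK : Convex ℝ K) (h0 : K ∈ 𝓝 0) {r : ℝ} (hr : 0 < r) :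
    {x | gauge K x < r} = r • interior K := by
  ext x
  rw [mem_smul_set_iff_inv_smul_mem₀ hr.ne', ← gauge_lt_one_iff_mem_interior hK h0,
    gauge_smul_of_nonneg (inv_nonneg.2 hr.le), smul_eq_mul, inv_mul_lt_one₀ hr, mem_ofPred_eq]

theorem setOf_gauge_lt_eq_empty {r : ℝ} (hr : r ≤ 0) (K : Set V) : {x | gauge K x < r} = ∅ :=
  eq_empty_of_forall_notMem fun x hx => (hr.trans (gauge_nonneg x)).not_gt hx

theorem rapidDensity_gaugeGaussian (hc : 0 < c) (hK : Convex ℝ K) (h0 : K ∈ 𝓝 0)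
    (hb : Bornology.IsBounded K) : RapidDensity (gaugeGaussian c K) where
  continuous := by
    have := continuous_gauge hK h0
    unfold gaugeGaussian
    fun_prop
  pos _ := exp_pos _
  decay a := by
    obtain ⟨R, hR, hKR⟩ := hb.subset_closedBall_lt 0 0
    refine ⟨exp ((a * R) ^ 2 / (4 * c)), fun x => ?_⟩
    have hgauge : (‖x‖ / R) ^ 2 ≤ gauge K x ^ 2 :=
      pow_le_pow_left₀ (by positivity)
        (le_gauge_of_subset_closedBall (absorbent_nhds_zero h0) hR.le hKR) 2
    have hsq : (a * R) ^ 2 / (4 * c) - a * ‖x‖ + c * (‖x‖ / R) ^ 2 =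
        (2 * c * (‖x‖ / R) - a * R) ^ 2 / (4 * c) := by
      field_simp
      ring
    rw [← exp_add, gaugeGaussian, exp_le_exp]
    linarith [mul_le_mul_of_nonneg_left hgauge hc.le,
      (by positivity : 0 ≤ (2 * c * (‖x‖ / R) - a * R) ^ 2 / (4 * c))]

end NormedSpace

variable [InnerProductSpace ℝ V] [FiniteDimensional ℝ V] [MeasurableSpace V] [BorelSpace V]

theorem setIntegral_gauge_lt {F : Type*} [NormedAddCommGroup F] [NormedSpace ℝ F]
    (hK : Convex ℝ K) (h0 : K ∈ 𝓝 0) {r : ℝ} (hr : 0 < r) (φ : V → F) :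
    ∫ x in {x | gauge K x < r}, φ x = r ^ Module.finrank ℝ V • ∫ x in K, φ (r • x) := by
  rw [setOf_gauge_lt_eq_smul_interior hK h0 hr,
    ← setIntegral_congr_set (interior_ae_eq_of_null_frontier (hK.addHaar_frontier volume)),
    Measure.setIntegral_comp_smul_of_pos _ _ _ hr, smul_inv_smul₀ (pow_pos hr _).ne']

theorem integral_gaugeGaussian_mul_volume (hc : 0 < c) (hK : Convex ℝ K) (hK0 : K ∈ 𝓝 0)
    (hKb : Bornology.IsBounded K) (hL : Convex ℝ L) (hL0 : L ∈ 𝓝 0) (hLb : Bornology.IsBounded L) :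
    (∫ x, gaugeGaussian c K x) * volume.real L = (∫ x, gaugeGaussian c L x) * volume.real K := by
  have hlayer {S : Set V} (hS : Convex ℝ S) (h0 : S ∈ 𝓝 0) (hb : Bornology.IsBounded S) :
      ∫ x, gaugeGaussian c S x =
        ∫ s in Ioi 0, ∫ _ in {x | s < gaugeGaussian c S x}, (1 : ℝ) := by
    have hS := rapidDensity_gaugeGaussian hc hS h0 hb
    simpa only [smul_eq_mul, mul_one] using integral_smul_eq_integral_superlevel
      hS.continuous.measurable (fun x => (hS.pos x).le) (aestronglyMeasurable_const (b := (1 : ℝ)))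
      (by simpa only [smul_eq_mul, mul_one] using hS.integrable)
  rw [hlayer hK hK0 hKb, hlayer hL hL0 hLb, ← integral_mul_const, ← integral_mul_const]
  refine setIntegral_congr_fun measurableSet_Ioi fun s hs => ?_
  simp only [superlevel_gaugeGaussian hc hs]
  obtain hr | hr := (sqrt_nonneg (-log s / c)).eq_or_lt'
  · simp only [hr, setOf_gauge_lt_eq_empty le_rfl, setIntegral_empty, zero_mul]
  · simp only [setIntegral_gauge_lt hK hK0 hr, setIntegral_gauge_lt hL hL0 hr, setIntegral_const,
      smul_eq_mul]
    ring

theorem centered_gaugeGaussian (hc : 0 < c) (hK : Convex ℝ K) (h0 : K ∈ 𝓝 0)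
    (hb : Bornology.IsBounded K) (hcenter : ∫ x in K, x = 0) : Centered (gaugeGaussian c K) := by
  have hf := rapidDensity_gaugeGaussian hc hK h0 hb
  refine (integral_smul_eq_integral_superlevel hf.continuous.measurable (fun x => (hf.pos x).le)
    aestronglyMeasurable_id hf.integrable_smul_self).trans ?_
  refine setIntegral_eq_zero_of_forall_eq_zero fun s hs => ?_
  rw [superlevel_gaugeGaussian hc hs]
  obtain hr | hr := (sqrt_nonneg (-log s / c)).eq_or_lt'
  · rw [hr, setOf_gauge_lt_eq_empty le_rfl, setIntegral_empty]
  · rw [setIntegral_gauge_lt hK h0 hr]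
    simp only [id_eq]
    rw [integral_smul, hcenter, smul_zero, smul_zero]

theorem integral_gaugeGaussian_closedBall (hc : 0 < c) :
    ∫ x, gaugeGaussian c (Metric.closedBall (0 : V) 1) x =
      (π / c) ^ (Module.finrank ℝ V / 2 : ℝ) := by
  simp only [gaugeGaussian, gauge_closedBall zero_le_one, div_one, ← neg_mul]
  exact GaussianFourier.integral_rexp_neg_mul_sq_norm hc

end GaugeGaussian

section Ellipsoid

theorem exists_linearEquiv_norm_eq {E : Type*} [AddCommGroup E] [Module ℝ E]
    [FiniteDimensional ℝ E] {n : ℕ} (hn : Module.finrank ℝ E = n) (p : Seminorm ℝ E)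
    (hp : ∀ x, p x = 0 → x = 0)
    (hpar : ∀ x y, p (x + y) ^ 2 + p (x - y) ^ 2 = 2 * (p x ^ 2 + p y ^ 2)) :
    ∃ A : E ≃ₗ[ℝ] EuclideanSpace ℝ (Fin n), ∀ x, ‖A x‖ = p x := by
  subst hn
  let pnorm : AddGroupNorm E := { p with
    toFun := p
    eq_zero_of_map_eq_zero' := hp }
  let _ : NormedAddCommGroup E := pnorm.toNormedAddCommGroup
  let _ : NormedSpace ℝ E := ⟨fun r x => (map_smul_eq_mul p r x).le⟩
  let _ : InnerProductSpace ℝ E := .ofNorm ℝ fun x y => by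
    simp only [← sq]
    exact hpar x y
  exact ⟨(stdOrthonormalBasis ℝ E).repr.toLinearEquiv, (stdOrthonormalBasis ℝ E).repr.norm_map⟩

variable {V : Type*} [NormedAddCommGroup V] {K : Set V}

section NormedSpace

variable [NormedSpace ℝ V]

theorem exists_linearEquiv_norm_eq_gauge [FiniteDimensional ℝ V] {n : ℕ}
    (hn : Module.finrank ℝ V = n) (hK : Convex ℝ K) (h0 : K ∈ 𝓝 0) (hb : Bornology.IsBounded K)
    (hpar : ∀ x y,
      gauge K (x + y) ^ 2 + gauge K (x - y) ^ 2 = 2 * (gauge K x ^ 2 + gauge K y ^ 2)) :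
    ∃ A : V ≃ₗ[ℝ] EuclideanSpace ℝ (Fin n), ∀ x, ‖A x‖ = gauge K x := by
  have hneg (x : V) : gauge K (-x) = gauge K x := by
    have h := hpar 0 x
    rw [zero_add, zero_sub, gauge_zero] at h
    exact (sq_eq_sq₀ (gauge_nonneg _) (gauge_nonneg _)).1 (by linarith)
  have hsmul (r : ℝ) (x : V) : gauge K (r • x) = ‖r‖ * gauge K x := by
    obtain hr | hr := le_total 0 r
    · rw [gauge_smul_of_nonneg hr, Real.norm_of_nonneg hr, smul_eq_mul]
    · rw [← hneg, ← neg_smul, gauge_smul_of_nonneg (neg_nonneg.2 hr), Real.norm_of_nonpos hr,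
        smul_eq_mul]
  have habs : Absorbent ℝ K := absorbent_nhds_zero h0
  exact exists_linearEquiv_norm_eq hn (Seminorm.of (gauge K) (gauge_add_le hK habs) hsmul)
    (fun x => (gauge_eq_zero habs ((NormedSpace.isVonNBounded_iff ℝ).2 hb)).1) hpar

theorem exists_linearEquiv_image_closedBall_of_norm_eq {W : Type*} [NormedAddCommGroup W]
    [NormedSpace ℝ W] (hK : Convex ℝ K) (h0 : K ∈ 𝓝 0) (hcl : IsClosed K) {A : V ≃ₗ[ℝ] W}
    (hA : ∀ x, ‖A x‖ = gauge K x) {r : ℝ} (hr : 0 < r) :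
    ∃ B : W ≃ₗ[ℝ] V, K = B '' Metric.closedBall 0 r := by
  refine ⟨(A.trans (LinearEquiv.smulOfNeZero ℝ W r hr.ne')).symm, ?_⟩
  ext x
  rw [LinearEquiv.image_symm_eq_preimage, mem_preimage, mem_closedBall_zero_iff,
    LinearEquiv.trans_apply, LinearEquiv.smulOfNeZero_apply, norm_smul, Real.norm_of_nonneg hr.le,
    hA, mul_le_iff_le_one_right hr, gauge_le_one_iff_mem_closure hK h0, hcl.closure_eq]

theorem gauge_sq_eq_of_forall_pos (hK : Convex ℝ K) (h0 : K ∈ 𝓝 0) {u w : V} {α β : ℝ}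
    (h : ∀ t ∈ Ioi (0 : ℝ), gauge K (t • u + w) ^ 2 = α + t ^ 2 * β) :
    gauge K w ^ 2 = α ∧ gauge K u ^ 2 = β := by
  have := continuous_gauge hK h0
  have hzero {φ ψ : ℝ → ℝ} (hφ : Continuous φ) (hψ : Continuous ψ) (heq : EqOn φ ψ (Ioi 0)) :
      φ 0 = ψ 0 := heq.closure hφ hψ (closure_Ioi (0 : ℝ) ▸ self_mem_Ici)
  have hrev : EqOn (fun s : ℝ => gauge K (u + s • w) ^ 2) (fun s => s ^ 2 * α + β) (Ioi 0) := by
    intro s (hs : 0 < s)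
    have hscale : u + s • w = s • (s⁻¹ • u + w) := by
      rw [smul_add, smul_inv_smul₀ hs.ne']
    simp only [hscale, gauge_smul_of_nonneg hs.le, smul_eq_mul, mul_pow,
      h _ (mem_Ioi.2 (inv_pos.2 hs))]
    field_simp
  constructor
  · simpa using hzero (φ := fun t => gauge K (t • u + w) ^ 2) (by fun_prop) (by fun_prop) h
  · simpa using hzero (by fun_prop) (by fun_prop) hrev

theorem gauge_sq_smul_add_of_gaussian (hK : Convex ℝ K) (h0 : K ∈ 𝓝 0) {u w : V} {b c l : ℝ}
    (hb : 0 < b)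
    (h : ∀ t ∈ Ioi (0 : ℝ), gaugeGaussian b K (t • u + w) = c * exp (-(l * t ^ 2))) {t : ℝ}
    (ht : 0 ≤ t) : gauge K (t • u + w) ^ 2 = gauge K w ^ 2 + t ^ 2 * gauge K u ^ 2 := by
  have hc : 0 < c :=
    pos_of_mul_pos_left ((exp_pos _).trans_eq (h 1 (mem_Ioi.2 one_pos))) (exp_pos _).le
  have hquad : ∀ t ∈ Ioi (0 : ℝ), gauge K (t • u + w) ^ 2 = -log c / b + t ^ 2 * (l / b) := by
    intro t ht
    have hlog := congrArg log (h t ht)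
    rw [gaugeGaussian, log_exp, log_mul hc.ne' (exp_pos _).ne', log_exp] at hlog
    field_simp
    linarith
  obtain ⟨hw, hu⟩ := gauge_sq_eq_of_forall_pos hK h0 hquad
  obtain rfl | ht := ht.eq_or_lt
  · simp
  · rw [hquad t ht, hw, hu]

theorem halfMarginal_gaugeGaussian {H : Type*} [NormedAddCommGroup H] [NormedSpace ℝ H]
    {u : V} {M : H →ₗ[ℝ] V} {y : H}
    (h : ∀ t ∈ Ioi (0 : ℝ), gauge K (t • u + M y) ^ 2 = gauge K (M y) ^ 2 + t ^ 2 * gauge K u ^ 2)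
    (b : ℝ) : halfMarginal u M (gaugeGaussian b K) y =
      √(π / (b * gauge K u ^ 2)) / 2 * gaugeGaussian b K (M y) := by
  rw [halfMarginal, ← integral_gaussian_Ioi, ← integral_mul_const]
  refine setIntegral_congr_fun measurableSet_Ioi fun t ht => ?_
  simp only [gaugeGaussian, h t ht, ← exp_add]
  ring_nf

theorem gauge_neg_eq_of_integral_halfMarginal_eq {H : Type*} [NormedAddCommGroup H]
    [NormedSpace ℝ H] [MeasureSpace H] {u : V} {M : H →ₗ[ℝ] V} {b : ℝ} (hb : 0 < b)
    (h : ∀ y, ∀ t ∈ Ioi (0 : ℝ),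
      gauge K (t • u + M y) ^ 2 = gauge K (M y) ^ 2 + t ^ 2 * gauge K u ^ 2)
    (hneg : ∀ y, ∀ t ∈ Ioi (0 : ℝ),
      gauge K (t • -u + M y) ^ 2 = gauge K (M y) ^ 2 + t ^ 2 * gauge K (-u) ^ 2)
    (hpos : 0 < ∫ y, halfMarginal u M (gaugeGaussian b K) y)
    (heq : ∫ y, halfMarginal u M (gaugeGaussian b K) y =
      ∫ y, halfMarginal (-u) M (gaugeGaussian b K) y) :
    gauge K (-u) = gauge K u := by
  simp only [fun y => halfMarginal_gaugeGaussian (h y) b,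
    fun y => halfMarginal_gaugeGaussian (hneg y) b, integral_const_mul] at hpos heq
  have hsqrt := mul_right_cancel₀ (right_ne_zero_of_mul hpos.ne') heq
  rw [div_left_inj' two_ne_zero, sqrt_inj (by positivity) (by positivity),
    div_eq_mul_inv, div_eq_mul_inv, mul_right_inj' pi_ne_zero, inv_inj, mul_right_inj' hb.ne',
    sq_eq_sq₀ (gauge_nonneg _) (gauge_nonneg _)] at hsqrt
  exact hsqrt.symm

end NormedSpace

variable [InnerProductSpace ℝ V]

theorem exists_obliqueProj_eq {u e w : V} (hu : ‖u‖ = 1) (hue : ⟪u, e⟫ = 1) (hw : ⟪w, e⟫ = 0) :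
    ∃ y, obliqueProj e u y = w := by
  have hmem : w - ⟪u, w⟫ • u ∈ (ℝ ∙ u)ᗮ := by
    rw [Submodule.mem_orthogonal_singleton_iff_inner_right, inner_sub_right, real_inner_smul_right,
      real_inner_self_eq_norm_sq, hu]
    ring
  refine ⟨⟨_, hmem⟩, ?_⟩
  rw [obliqueProj_apply, Subtype.coe_mk, inner_sub_right, real_inner_smul_right,
    real_inner_comm w e, hw, real_inner_comm u e, hue]
  module

variable [FiniteDimensional ℝ V] [MeasurableSpace V] [BorelSpace V]

theorem exists_gauge_sq_smul_add {b : ℝ} (hb : 0 < b) (hK : Convex ℝ K) (h0 : K ∈ 𝓝 0)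
    {g : V → ℝ} (h : PolarPair (gaugeGaussian b K) g) (hc : Centered (gaugeGaussian b K))
    (heq : (2 * π) ^ Module.finrank ℝ V ≤ (∫ x, gaugeGaussian b K x) * ∫ y, g y) {u : V}
    (hu : ‖u‖ = 1) : ∃ e, ⟪u, e⟫ = 1 ∧ ∀ w, ⟪w, e⟫ = 0 → ∀ t : ℝ,
      gauge K (t • u + w) ^ 2 = gauge K w ^ 2 + t ^ 2 * gauge K u ^ 2 := by
  obtain ⟨e, hbal⟩ := h.exists_balancedHalves_of_le hc heq hu
  obtain ⟨hgauss, hsame⟩ :=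
    hbal.exists_eq_gaussian hu h.symm (heq.trans_eq (mul_comm _ _))
  have hright (y) {t : ℝ} (ht : 0 ≤ t) :=
    have ⟨_, _, hy⟩ := (hgauss y).1
    gauge_sq_smul_add_of_gaussian hK h0 hb hy ht
  have hleft (y) {t : ℝ} (ht : 0 ≤ t) :=
    have ⟨_, _, hy⟩ := (hgauss y).2
    gauge_sq_smul_add_of_gaussian hK h0 hb hy ht
  have hpos : 0 < ∫ y, halfMarginal u (obliqueProj e u) (gaugeGaussian b K) y := by
    have := ((hbal.dualFrame hu).polarPair h.symm).rapidDensity_right.integral_pos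
    rw [integral_const_mul] at this
    exact pos_of_mul_pos_right this (by positivity)
  have hneg := gauge_neg_eq_of_integral_halfMarginal_eq hb
    (fun y _ ht => hright y (le_of_lt ht)) (fun y _ ht => hleft y (le_of_lt ht)) hpos hsame
  refine ⟨e, hbal.inner_eq_one, fun w hw t => ?_⟩
  obtain ⟨y, rfl⟩ := exists_obliqueProj_eq hu hbal.inner_eq_one hw
  obtain ht | ht := le_total 0 t
  · exact hright y ht
  · simpa only [neg_smul_neg, neg_sq, hneg] using hleft y (neg_nonneg.2 ht)

theorem gauge_parallelogram {b : ℝ} (hb : 0 < b) (hK : Convex ℝ K) (h0 : K ∈ 𝓝 0)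
    {g : V → ℝ} (h : PolarPair (gaugeGaussian b K) g) (hc : Centered (gaugeGaussian b K))
    (heq : (2 * π) ^ Module.finrank ℝ V ≤ (∫ x, gaugeGaussian b K x) * ∫ y, g y) (x y : V) :
    gauge K (x + y) ^ 2 + gauge K (x - y) ^ 2 = 2 * (gauge K x ^ 2 + gauge K y ^ 2) := by
  obtain rfl | hy := eq_or_ne y 0
  · rw [add_zero, sub_zero, gauge_zero]
    ring
  have hu : ‖‖y‖⁻¹ • y‖ = 1 := norm_smul_inv_norm hy
  have hyu : y = ‖y‖ • ‖y‖⁻¹ • y := (smul_inv_smul₀ (norm_ne_zero_iff.2 hy) y).symm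
  generalize ‖y‖ = r, ‖y‖⁻¹ • y = u at hu hyu
  subst hyu
  obtain ⟨e, hue, hsplit⟩ := exists_gauge_sq_smul_add hb hK h0 h hc heq hu
  obtain ⟨t, w, hw, rfl⟩ : ∃ t : ℝ, ∃ w, ⟪w, e⟫ = 0 ∧ x = t • u + w :=
    ⟨⟪x, e⟫, x - ⟪x, e⟫ • u, by
      rw [inner_sub_left, real_inner_smul_left, hue, mul_one, sub_self], by abel⟩
  have hadd : t • u + w + r • u = (t + r) • u + w := by module
  have hsub : t • u + w - r • u = (t - r) • u + w := by module
  have hru := hsplit 0 (inner_zero_left e) r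
  rw [add_zero, gauge_zero] at hru
  rw [hadd, hsub, hru, hsplit w hw, hsplit w hw, hsplit w hw]
  ring

end Ellipsoid

section Centroid

variable {E : Type*} [NormedAddCommGroup E] [NormedSpace ℝ E] [FiniteDimensional ℝ E]
  [MeasurableSpace E] [BorelSpace E] {μ : Measure E} [μ.IsAddHaarMeasure] {K : Set E}

theorem mem_nhds_zero_of_setIntegral_eq_zero (hK : Convex ℝ K) (hcomp : IsCompact K)
    (hne : (interior K).Nonempty) (hcenter : ∫ x in K, x ∂μ = 0) : K ∈ 𝓝 0 := by
  by_contra h0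
  obtain ⟨ℓ, hℓ⟩ := geometric_hahn_banach_open_point hK.interior isOpen_interior
    fun h => h0 (mem_interior_iff_mem_nhds.1 h)
  rw [map_zero] at hℓ
  have hint : IntegrableOn id (interior K) μ :=
    (continuousOn_id.integrableOn_compact hcomp).mono_set interior_subset
  have hzero : ∫ x in interior K, ℓ x ∂μ = 0 := by
    have hcomm := ℓ.integral_comp_comm hint
    simp only [id_eq] at hcomm
    rw [hcomm, setIntegral_congr_set (interior_ae_eq_of_null_frontier (hK.addHaar_frontier μ)),
      hcenter, map_zero]
  obtain ⟨x, hx⟩ := hne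
  have heq := eqOn_of_setIntegral_le (μ := μ) (g := 0) isOpen_interior ℓ.continuous.continuousOn
    continuousOn_const (ℓ.integrable_comp hint) integrableOn_zero (fun x hx => (hℓ x hx).le)
    (by rw [hzero]; simp)
  exact (hℓ x hx).ne (heq hx)

theorem setIntegral_eq_zero_of_eq_neg (hK : K = -K) : ∫ x in K, x ∂μ = 0 := by
  have hneg : ∫ x in -K, -x ∂μ = ∫ x in K, x ∂μ :=
    (Measure.measurePreserving_neg μ).setIntegral_preimage_emb
      (MeasurableEquiv.neg E).measurableEmbedding id K
  rw [← hK, integral_neg] at hneg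
  have : IsAddTorsionFree E := .of_isTorsionFree ℝ E
  exact self_eq_neg.1 hneg.symm

end Centroid

section Volume

variable {V : Type*} [NormedAddCommGroup V] [InnerProductSpace ℝ V] [FiniteDimensional ℝ V]
  [MeasurableSpace V] [BorelSpace V] {K L : Set V}

theorem volume_mul_volume_mul_two_pi_pow {b : ℝ} (hb : 0 < b) (hK : Convex ℝ K) (hK0 : K ∈ 𝓝 0)
    (hKb : Bornology.IsBounded K) (hL : Convex ℝ L) (hL0 : L ∈ 𝓝 0) (hLb : Bornology.IsBounded L) :
    volume.real K * volume.real L * (2 * π) ^ Module.finrank ℝ V =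
      (∫ x, gaugeGaussian (b / 2) K x) * (∫ x, gaugeGaussian (b / 2) L x) *
        volume.real (Metric.closedBall (0 : V) √b) ^ 2 := by
  have hball {S : Set V} (hS : Convex ℝ S) (hS0 : S ∈ 𝓝 0) (hSb : Bornology.IsBounded S) :
      (∫ x, gaugeGaussian (b / 2) S x) * volume.real (Metric.closedBall (0 : V) 1) =
        (π / (b / 2)) ^ (Module.finrank ℝ V / 2 : ℝ) * volume.real S := by
    rw [← integral_gaugeGaussian_closedBall (half_pos hb)]
    exact integral_gaugeGaussian_mul_volume (half_pos hb) hS hS0 hSb (convex_closedBall 0 1)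
      (Metric.closedBall_mem_nhds 0 one_pos) Metric.isBounded_closedBall
  have hsqrt : (√b ^ Module.finrank ℝ V) ^ 2 = b ^ Module.finrank ℝ V := by
    rw [← pow_mul, mul_comm, pow_mul, sq_sqrt hb.le]
  have hconst : ((π / (b / 2)) ^ (Module.finrank ℝ V / 2 : ℝ)) ^ 2 * b ^ Module.finrank ℝ V =
      (2 * π) ^ Module.finrank ℝ V := by
    rw [← rpow_mul_natCast (by positivity), Nat.cast_ofNat, div_mul_cancel₀ _ two_ne_zero,
      rpow_natCast, ← mul_pow]
    congr 1
    field_simp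
  rw [Measure.addHaar_real_closedBall' _ _ (sqrt_nonneg b), mul_pow (√b ^ _), hsqrt, ← hconst]
  linear_combination (-b ^ Module.finrank ℝ V) *
    ((∫ x, gaugeGaussian (b / 2) L x) * volume.real (Metric.closedBall (0 : V) 1) *
        hball hK hK0 hKb +
      (π / (b / 2)) ^ (Module.finrank ℝ V / 2 : ℝ) * volume.real K * hball hL hL0 hLb)

theorem volume_closedBall_sqrt_sq (n : ℕ) {b : ℝ} (hb : 0 ≤ b) :
    volume (Metric.closedBall (0 : EuclideanSpace ℝ (Fin n)) √b) ^ 2 =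
      ENNReal.ofReal ((π * b) ^ n / Gamma (n / 2 + 1) ^ 2) := by
  have hvol : volume (Metric.closedBall (0 : EuclideanSpace ℝ (Fin n)) √b) =
      ENNReal.ofReal (√b ^ n * (√π ^ n / Gamma (n / 2 + 1))) := by
    obtain rfl | hn := n.eq_zero_or_pos
    · rw [(Metric.nonempty_closedBall.2 (sqrt_nonneg b)).eq_univ,
        ← (PiLp.volume_preserving_toLp (Fin 0)).measure_preimage nullMeasurableSet_univ]
      simp [volume_pi]
    · have : Nonempty (Fin n) := ⟨⟨0, hn⟩⟩
      rw [EuclideanSpace.volume_closedBall, Fintype.card_fin, ENNReal.ofReal_mul (by positivity),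
        ENNReal.ofReal_pow (sqrt_nonneg b)]
  have : 0 < Gamma (n / 2 + 1) := Gamma_pos_of_pos (by positivity)
  rw [hvol, ← ENNReal.ofReal_pow (by positivity), ← mul_div_assoc, ← mul_pow, div_pow, ← pow_mul,
    mul_comm n, pow_mul, mul_pow, sq_sqrt hb, sq_sqrt pi_nonneg, mul_comm b]

end Volume

section PolarDualSet

variable {n : ℕ} {hb : ℝ} {X Y : Set (EuclideanSpace ℝ (Fin n))}

theorem polarDualSet_anti (hXY : X ⊆ Y) : polarDualSet n hb Y ⊆ polarDualSet n hb X :=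
  fun _ hp x hx => hp x (hXY hx)

theorem convex_polarDualSet : Convex ℝ (polarDualSet n hb X) := by
  intro p hp q hq s t hs ht hst x hx
  rw [inner_add_left, real_inner_smul_left, real_inner_smul_left]
  exact convex_Iic hb (hp x hx) (hq x hx) hs ht hst

theorem polarDualSet_closedBall (hhb : 0 ≤ hb) {r : ℝ} (hr : 0 < r) :
    polarDualSet n hb (Metric.closedBall 0 r) = Metric.closedBall 0 (hb / r) := by
  ext p
  rw [mem_closedBall_zero_iff, le_div_iff₀ hr]
  refine ⟨fun hp => ?_, fun hp x hx => ?_⟩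
  · obtain rfl | hp0 := eq_or_ne p 0
    · simpa using hhb
    have hmem : (r * ‖p‖⁻¹) • p ∈ Metric.closedBall 0 r := by
      rw [mem_closedBall_zero_iff, norm_smul, norm_mul, norm_inv, norm_norm,
        inv_mul_cancel_right₀ (norm_ne_zero_iff.2 hp0), Real.norm_of_nonneg hr.le]
    have hle := hp _ hmem
    rw [real_inner_smul_right, real_inner_self_eq_norm_sq] at hle
    calc ‖p‖ * r = r * ‖p‖⁻¹ * ‖p‖ ^ 2 := by field_simp
      _ ≤ hb := hle
  · calc ⟪p, x⟫ ≤ ‖p‖ * ‖x‖ := real_inner_le_norm p x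
      _ ≤ ‖p‖ * r := by gcongr; exact mem_closedBall_zero_iff.1 hx
      _ ≤ hb := hp

theorem isBounded_polarDualSet (hhb : 0 ≤ hb) (h0 : X ∈ 𝓝 0) :
    Bornology.IsBounded (polarDualSet n hb X) := by
  obtain ⟨r, hr, hrX⟩ := Metric.nhds_basis_closedBall.mem_iff.1 h0
  exact (polarDualSet_closedBall hhb hr ▸ Metric.isBounded_closedBall).subset
    (polarDualSet_anti hrX)

theorem polarDualSet_mem_nhds_zero (hhb : 0 < hb) (hX : Bornology.IsBounded X) :
    polarDualSet n hb X ∈ 𝓝 0 := by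
  obtain ⟨R, hR, hXR⟩ := hX.subset_closedBall_lt 0 0
  exact mem_of_superset (polarDualSet_closedBall hhb.le hR ▸
    Metric.closedBall_mem_nhds 0 (div_pos hhb hR)) (polarDualSet_anti hXR)

theorem inner_le_mul_gauge_mul_gauge (hhb : 0 < hb) (h0 : X ∈ 𝓝 0) (hX : Bornology.IsBounded X)
    (x y : EuclideanSpace ℝ (Fin n)) :
    ⟪x, y⟫ ≤ hb * (gauge X x * gauge (polarDualSet n hb X) y) := by
  rw [← div_le_iff₀' hhb]
  refine le_mul_of_forall_lt₀ fun a ha b hb' => ?_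
  obtain ⟨s, hs, hsa, x, hx, rfl⟩ := exists_lt_of_gauge_lt (absorbent_nhds_zero h0) ha
  obtain ⟨t, ht, htb, p, hp, rfl⟩ := exists_lt_of_gauge_lt
    (absorbent_nhds_zero (polarDualSet_mem_nhds_zero hhb hX)) hb'
  rw [div_le_iff₀' hhb, real_inner_comm]
  calc ⟪t • p, s • x⟫ = s * t * ⟪p, x⟫ := by
        rw [real_inner_smul_left, real_inner_smul_right]; ring
    _ ≤ s * t * hb := by gcongr; exact hp x hx
    _ ≤ hb * (a * b) := by rw [mul_comm]; have := hs.trans hsa; gcongr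

theorem polarPair_gaugeGaussian (hhb : 0 < hb) (hXc : Convex ℝ X) (h0 : X ∈ 𝓝 0)
    (hX : Bornology.IsBounded X) :
    PolarPair (gaugeGaussian (hb / 2) X) (gaugeGaussian (hb / 2) (polarDualSet n hb X)) where
  continuous_left := (rapidDensity_gaugeGaussian (half_pos hhb) hXc h0 hX).continuous
  continuous_right := (rapidDensity_gaugeGaussian (half_pos hhb) convex_polarDualSet
    (polarDualSet_mem_nhds_zero hhb hX) (isBounded_polarDualSet hhb.le h0)).continuous
  pos_left _ := exp_pos _
  pos_right _ := exp_pos _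
  mul_le x y := by
    rw [gaugeGaussian, gaugeGaussian, ← exp_add, exp_le_exp]
    linarith [inner_le_mul_gauge_mul_gauge hhb h0 hX x y, mul_le_mul_of_nonneg_left
      (two_mul_le_add_sq (gauge X x) (gauge (polarDualSet n hb X) y)) (half_pos hhb).le]

theorem polarDualSet_image (A : EuclideanSpace ℝ (Fin n) →ₗ[ℝ] EuclideanSpace ℝ (Fin n)) :
    polarDualSet n hb (A '' X) = LinearMap.adjoint A ⁻¹' polarDualSet n hb X := by
  ext p
  simp only [polarDualSet, mem_preimage, mem_ofPred_eq, forall_mem_image,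
    LinearMap.adjoint_inner_left]

theorem volume_image_mul_volume_polarDualSet_image
    (A : EuclideanSpace ℝ (Fin n) ≃ₗ[ℝ] EuclideanSpace ℝ (Fin n)) :
    volume (A '' X) * volume (polarDualSet n hb (A '' X)) =
      volume X * volume (polarDualSet n hb X) := by
  have hdet : LinearMap.det (LinearMap.adjoint A.toLinearMap) = LinearMap.det A.toLinearMap := by
    have b := EuclideanSpace.basisFun (Fin n) ℝ
    rw [← LinearMap.det_toMatrix b.toBasis, ← LinearMap.det_toMatrix b.toBasis A.toLinearMap,
      LinearMap.toMatrix_adjoint, Matrix.det_conjTranspose, star_trivial]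
  have hA : LinearMap.det A.toLinearMap ≠ 0 := (LinearEquiv.isUnit_det' A).ne_zero
  have himage := Measure.addHaar_image_linearMap volume A.toLinearMap X
  have hpolar := polarDualSet_image (hb := hb) (X := X) A.toLinearMap
  rw [LinearEquiv.coe_coe] at himage hpolar
  rw [himage, hpolar, Measure.addHaar_preimage_linearMap _ (by rwa [hdet]), hdet, mul_mul_mul_comm,
    ← ENNReal.ofReal_mul (abs_nonneg _), ← abs_mul, mul_inv_cancel₀ hA, abs_one,
    ENNReal.ofReal_one, one_mul]

end PolarDualSet

section BlaschkeSantalo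

variable {n : ℕ} {hb : ℝ} {X : Set (EuclideanSpace ℝ (Fin n))}

theorem integral_gaugeGaussian_mul_integral_polarDualSet (hhb : 0 < hb) (hXconv : Convex ℝ X)
    (h0 : X ∈ 𝓝 0) (hXb : Bornology.IsBounded X) :
    volume.real X * volume.real (polarDualSet n hb X) * (2 * π) ^ n =
      (∫ x, gaugeGaussian (hb / 2) X x) * (∫ x, gaugeGaussian (hb / 2) (polarDualSet n hb X) x) *
        volume.real (Metric.closedBall (0 : EuclideanSpace ℝ (Fin n)) √hb) ^ 2 := by
  simpa only [finrank_euclideanSpace_fin] using volume_mul_volume_mul_two_pi_pow hhb hXconv h0 hXb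
    convex_polarDualSet (polarDualSet_mem_nhds_zero hhb hXb) (isBounded_polarDualSet hhb.le h0)

theorem volume_mul_volume_polarDualSet_le (hhb : 0 < hb) (hXconv : Convex ℝ X)
    (h0 : X ∈ 𝓝 0) (hXb : Bornology.IsBounded X) (hcenter : ∫ x in X, x = 0) :
    volume.real X * volume.real (polarDualSet n hb X) ≤
      volume.real (Metric.closedBall (0 : EuclideanSpace ℝ (Fin n)) √hb) ^ 2 := by
  have hfunc := (polarPair_gaugeGaussian hhb hXconv h0 hXb).integral_mul_integral_le
    (centered_gaugeGaussian (half_pos hhb) hXconv h0 hXb hcenter)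
  rw [finrank_euclideanSpace_fin] at hfunc
  refine le_of_mul_le_mul_right ?_ (pow_pos two_pi_pos n)
  rw [integral_gaugeGaussian_mul_integral_polarDualSet hhb hXconv h0 hXb, mul_comm (_ ^ 2)]
  gcongr

theorem exists_linearEquiv_image_closedBall_of_le (hhb : 0 < hb) (hXconv : Convex ℝ X)
    (h0 : X ∈ 𝓝 0) (hXc : IsCompact X) (hcenter : ∫ x in X, x = 0)
    (h : volume.real (Metric.closedBall (0 : EuclideanSpace ℝ (Fin n)) √hb) ^ 2 ≤
      volume.real X * volume.real (polarDualSet n hb X)) :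
    ∃ A : EuclideanSpace ℝ (Fin n) ≃ₗ[ℝ] EuclideanSpace ℝ (Fin n),
      X = A '' Metric.closedBall 0 √hb := by
  have hXb := hXc.isBounded
  have hball : 0 < volume.real (Metric.closedBall (0 : EuclideanSpace ℝ (Fin n)) √hb) :=
    ENNReal.toReal_pos (Metric.measure_closedBall_pos volume 0 (sqrt_pos.2 hhb)).ne'
      measure_closedBall_lt_top.ne
  have hfunc : (2 * π) ^ Module.finrank ℝ (EuclideanSpace ℝ (Fin n)) ≤
      (∫ x, gaugeGaussian (hb / 2) X x) * ∫ y, gaugeGaussian (hb / 2) (polarDualSet n hb X) y := by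
    rw [finrank_euclideanSpace_fin]
    refine le_of_mul_le_mul_right ?_ (pow_pos hball 2)
    rw [← integral_gaugeGaussian_mul_integral_polarDualSet hhb hXconv h0 hXb, mul_comm]
    gcongr
  obtain ⟨A, hA⟩ := exists_linearEquiv_norm_eq_gauge finrank_euclideanSpace_fin hXconv h0 hXb
    (gauge_parallelogram (half_pos hhb) hXconv h0 (polarPair_gaugeGaussian hhb hXconv h0 hXb)
      (centered_gaugeGaussian (half_pos hhb) hXconv h0 hXb hcenter) hfunc)
  exact exists_linearEquiv_image_closedBall_of_norm_eq hXconv h0 hXc.isClosed hA (sqrt_pos.2 hhb)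

theorem volume_mul_volume_polarDualSet_ellipsoid (hhb : 0 < hb)
    (A : EuclideanSpace ℝ (Fin n) ≃ₗ[ℝ] EuclideanSpace ℝ (Fin n)) :
    volume (A '' Metric.closedBall 0 √hb) *
        volume (polarDualSet n hb (A '' Metric.closedBall 0 √hb)) =
      volume (Metric.closedBall (0 : EuclideanSpace ℝ (Fin n)) √hb) ^ 2 := by
  rw [volume_image_mul_volume_polarDualSet_image, polarDualSet_closedBall hhb.le (sqrt_pos.2 hhb),
    div_sqrt, sq]

theorem blaschke_santalo_general (n : ℕ) (hb : ℝ) (hhb : 0 < hb)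
    (X : Set (EuclideanSpace ℝ (Fin n)))
    (hXc : IsCompact X) (hXconv : Convex ℝ X) (hXint : (interior X).Nonempty)
    (hXcenter : ∫ x in X, x = 0) :
    volume X * volume (polarDualSet n hb X) ≤
        ENNReal.ofReal ((Real.pi * hb) ^ n / Real.Gamma ((n : ℝ) / 2 + 1) ^ 2) ∧
      (volume X * volume (polarDualSet n hb X) =
          ENNReal.ofReal ((Real.pi * hb) ^ n / Real.Gamma ((n : ℝ) / 2 + 1) ^ 2) ↔
        ∃ A : EuclideanSpace ℝ (Fin n) ≃ₗ[ℝ] EuclideanSpace ℝ (Fin n),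
          X = ⇑A '' Metric.closedBall 0 (Real.sqrt hb)) := by
  have h0 := mem_nhds_zero_of_setIntegral_eq_zero hXconv hXc hXint hXcenter
  have hfin : volume X * volume (polarDualSet n hb X) ≠ ⊤ :=
    ENNReal.mul_ne_top hXc.measure_ne_top (isBounded_polarDualSet hhb.le h0).measure_lt_top.ne
  have hballfin : volume (Metric.closedBall (0 : EuclideanSpace ℝ (Fin n)) √hb) ^ 2 ≠ ⊤ :=
    ENNReal.pow_ne_top measure_closedBall_lt_top.ne
  rw [← volume_closedBall_sqrt_sq n hhb.le]
  refine ⟨?_, fun heq => ?_, ?_⟩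
  · rw [← ENNReal.toReal_le_toReal hfin hballfin, ENNReal.toReal_mul, ENNReal.toReal_pow]
    exact volume_mul_volume_polarDualSet_le hhb hXconv h0 hXc.isBounded hXcenter
  · have hge := ENNReal.toReal_mono hfin heq.ge
    rw [ENNReal.toReal_mul, ENNReal.toReal_pow] at hge
    exact exists_linearEquiv_image_closedBall_of_le hhb hXconv h0 hXc hXcenter hge
  · rintro ⟨A, rfl⟩
    exact volume_mul_volume_polarDualSet_ellipsoid hhb A

end BlaschkeSantalo

/-- **Blaschke–Santaló inequality.** For a symmetric convex body `X ⊂ ℝⁿ`, the Mahler volume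
satisfies `Vol(X)·Vol(X^ħ) ≤ (πħ)ⁿ/Γ(n/2+1)² = Vol(Bⁿ(√ħ))²`, with equality iff `X` is an
ellipsoid centered at the origin (the image of `Bⁿ(√ħ)` by an invertible linear map). -/
theorem blaschke_santalo (n : ℕ) (hb : ℝ) (hhb : 0 < hb)
    (X : Set (EuclideanSpace ℝ (Fin n)))
    (hXc : IsCompact X) (hXconv : Convex ℝ X) (hXint : (interior X).Nonempty) (hXsym : X = -X) :
    volume X * volume (polarDualSet n hb X) ≤
        ENNReal.ofReal ((Real.pi * hb) ^ n / Real.Gamma ((n : ℝ) / 2 + 1) ^ 2) ∧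
      (volume X * volume (polarDualSet n hb X) =
          ENNReal.ofReal ((Real.pi * hb) ^ n / Real.Gamma ((n : ℝ) / 2 + 1) ^ 2) ↔
        ∃ A : EuclideanSpace ℝ (Fin n) ≃ₗ[ℝ] EuclideanSpace ℝ (Fin n),
          X = ⇑A '' Metric.closedBall 0 (Real.sqrt hb)) := by
  exact blaschke_santalo_general n hb hhb X hXc hXconv hXint (setIntegral_eq_zero_of_eq_neg hXsym)
end

section
/- (Kuperberg's bound) Let X ⊂ ℝⁿ be a symmetric convex body and ħ > 0. Then the Mahler volume satisfies v(X) = Vol(X)·Vol(X^ħ) ≥ (πħ)ⁿ/(4ⁿ n!). -/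
open MeasureTheory
open scoped RealInnerProductSpace

/-!
Let `R = 2P - id` be the reflection in the metric projection `P` onto the body `K`; it is
1-Lipschitz. For `N (y, z) = (R z, -R y)` and `|s| < 1` the map `x ↦ x + s N x` is a bi-Lipschitz
bijection of `E ⊕ E`, so the Gaussian pulled back along it, times its Jacobian, integrates to the
Gaussian integral `(4π)^d`. This weighted pullback is holomorphic in `s`, and continuing to `s → i`
replaces `s² = 1` by `-1`: the Jacobian becomes that of `x ↦ x + M x` with `M (y, z) = (R z, R y)`,
and the Gaussian becomes `exp (-(‖x‖² - ‖M x‖²) / 4)`. Now `M` is symmetric rather than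
antisymmetric: `x + M x` has sum of components `2 (P y + P z) ∈ 4 K` and half difference
`(y - P y) - (z - P z)`, at which the support function `h` of `K` is at most
`(‖x‖² - ‖M x‖²) / 4`. Hence `(4π)^d ≤ Vol (4 K) * ∫ exp (-h)`, and `∫ exp (-h) = d! Vol {h < 1}`.
-/

open Filter Topology Set Module
open scoped ENNReal NNReal

section LipschitzPerturbation

theorem bijective_add_of_lipschitz_lt_one {V : Type*} [NormedAddCommGroup V] [CompleteSpace V]
    {k : ℝ≥0} {N : V → V} (hN : LipschitzWith k N) (hk : k < 1) :
    Function.Bijective fun x => x + N x := by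
  have contracting (w : V) : ContractingWith k fun x => w - N x :=
    ⟨hk, LipschitzWith.of_dist_le_mul fun x y => by
      simpa only [dist_sub_left] using hN.dist_le_mul x y⟩
  have isFixedPt_iff (w x : V) : Function.IsFixedPt (fun x => w - N x) x ↔ x + N x = w := by
    rw [Function.IsFixedPt, sub_eq_iff_eq_add, eq_comm]
  refine ⟨fun x y hxy => ?_, fun w =>
    ⟨_, (isFixedPt_iff w _).1 (contracting w).fixedPoint_isFixedPt⟩⟩
  exact (contracting (y + N y)).fixedPoint_unique' ((isFixedPt_iff _ x).2 hxy)
    ((isFixedPt_iff _ y).2 rfl)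

theorem hasFDerivAt_add_self {V : Type*} [NormedAddCommGroup V] [NormedSpace ℝ V] {N : V → V}
    {x : V} (hx : DifferentiableAt ℝ N x) :
    HasFDerivAt (fun x => x + N x) (1 + fderiv ℝ N x) x :=
  (hasFDerivAt_id x).add hx.hasFDerivAt

variable {V : Type*} [NormedAddCommGroup V] [NormedSpace ℝ V] [FiniteDimensional ℝ V]

theorem det_one_add_ne_zero {f : V →L[ℝ] V} (hf : ‖f‖ < 1) : (1 + f).det ≠ 0 := by
  intro hdet
  obtain ⟨x, hx, hx0⟩ := (Submodule.ne_bot_iff _).1 (LinearMap.bot_lt_ker_of_det_eq_zero hdet).ne'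
  have hfx : f x = -x := (neg_eq_of_add_eq_zero_right hx).symm
  have := f.le_of_opNorm_le le_rfl x
  rw [hfx, norm_neg] at this
  nlinarith [norm_pos_iff.2 hx0]

theorem det_one_add_pos {f : V →L[ℝ] V} (hf : ‖f‖ < 1) : 0 < (1 + f).det := by
  have hcont : Continuous fun r : ℝ => (1 + r • f).det :=
    ContinuousLinearMap.continuous_det.comp (by fun_prop)
  by_contra! hneg
  obtain ⟨r, ⟨hr0, hr1⟩, hr⟩ := intermediate_value_Icc' zero_le_one hcont.continuousOn
    (show (0 : ℝ) ∈ Icc _ _ by simpa [ContinuousLinearMap.det] using hneg)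
  refine det_one_add_ne_zero ?_ hr
  rw [norm_smul, Real.norm_of_nonneg hr0]
  nlinarith [norm_nonneg f]

theorem abs_det_one_add_fderiv {k : ℝ≥0} {N : V → V} (hN : LipschitzWith k N) (hk : k < 1)
    (x : V) : |(1 + fderiv ℝ N x).det| = (1 + fderiv ℝ N x).det :=
  abs_of_pos (det_one_add_pos ((norm_fderiv_le_of_lipschitz ℝ hN).trans_lt (mod_cast hk)))

variable [MeasurableSpace V] [BorelSpace V] {μ : Measure V} [μ.IsAddHaarMeasure]

theorem addHaar_image_eq_zero_of_lipschitz {f : V → V} {C : ℝ≥0} (hf : LipschitzWith C f)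
    {s : Set V} (hs : μ s = 0) : μ (f '' s) = 0 := by
  have hausdorff_null : Measure.hausdorffMeasure (finrank ℝ V) s = 0 :=
    Measure.absolutelyContinuous_isAddHaarMeasure _ μ hs
  refine Measure.absolutelyContinuous_isAddHaarMeasure μ
    (Measure.hausdorffMeasure (finrank ℝ V)) (le_bot_iff.1 ?_)
  simpa [hausdorff_null] using hf.hausdorffMeasure_image_le (Nat.cast_nonneg (finrank ℝ V)) s

variable {k : ℝ≥0} {N : V → V}

theorem image_add_self_differentiableAt_ae_eq_univ (hN : LipschitzWith k N) (hk : k < 1) :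
    ((fun x => x + N x) '' {x | DifferentiableAt ℝ N x}) =ᵐ[μ] univ := by
  rw [ae_eq_univ, ← image_compl_eq (bijective_add_of_lipschitz_lt_one hN hk)]
  exact addHaar_image_eq_zero_of_lipschitz (LipschitzWith.id.add hN) hN.ae_differentiableAt

theorem lintegral_det_one_add_fderiv_mul (hN : LipschitzWith k N) (hk : k < 1) (g : V → ℝ≥0∞) :
    ∫⁻ x, ENNReal.ofReal (1 + fderiv ℝ N x).det * g (x + N x) ∂μ = ∫⁻ x, g x ∂μ := by
  have change := lintegral_image_eq_lintegral_abs_det_fderiv_mul μ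
    (measurableSet_of_differentiableAt ℝ N)
    (fun x hx => (hasFDerivAt_add_self hx).hasFDerivWithinAt)
    (bijective_add_of_lipschitz_lt_one hN hk).1.injOn g
  rw [setLIntegral_congr (image_add_self_differentiableAt_ae_eq_univ hN hk),
    setLIntegral_congr (eventuallyEq_univ.2 hN.ae_differentiableAt),
    setLIntegral_univ, setLIntegral_univ] at change
  simpa only [abs_det_one_add_fderiv hN hk] using change.symm

theorem integral_det_one_add_fderiv_smul {G : Type*} [NormedAddCommGroup G] [NormedSpace ℝ G]
    (hN : LipschitzWith k N) (hk : k < 1) (g : V → G) :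
    ∫ x, (1 + fderiv ℝ N x).det • g (x + N x) ∂μ = ∫ x, g x ∂μ := by
  have change := integral_image_eq_integral_abs_det_fderiv_smul μ
    (measurableSet_of_differentiableAt ℝ N)
    (fun x hx => (hasFDerivAt_add_self hx).hasFDerivWithinAt)
    (bijective_add_of_lipschitz_lt_one hN hk).1.injOn g
  rw [setIntegral_congr_set (image_add_self_differentiableAt_ae_eq_univ hN hk),
    setIntegral_congr_set (eventuallyEq_univ.2 hN.ae_differentiableAt),
    setIntegral_univ, setIntegral_univ] at change
  simpa only [abs_det_one_add_fderiv hN hk] using change.symm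

end LipschitzPerturbation

section HolomorphicIntegral

variable {α : Type*} [MeasurableSpace α] {μ : Measure α}

theorem aestronglyMeasurable_of_hasDerivAt_param {𝕜 G : Type*} [NontriviallyNormedField 𝕜]
    [NormedAddCommGroup G] [NormedSpace 𝕜 G] {F : 𝕜 → α → G} {F' : α → G} {τ₀ : 𝕜}
    (hF : ∀ᶠ τ in 𝓝 τ₀, AEStronglyMeasurable (F τ) μ)
    (hF' : ∀ᵐ a ∂μ, HasDerivAt (fun τ => F τ a) (F' a) τ₀) : AEStronglyMeasurable F' μ := by
  obtain ⟨u, hu, hmeas⟩ := exists_seq_forall_of_frequently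
    (hF.filter_mono (nhdsWithin_le_nhds (s := {τ₀}ᶜ))).frequently
  refine aestronglyMeasurable_of_tendsto_ae atTop
    (fun n => ((hmeas n).sub hF.self_of_nhds).const_smul (u n - τ₀)⁻¹) ?_
  filter_upwards [hF'] with a ha
  exact (hasDerivAt_iff_tendsto_slope.1 ha).comp hu

theorem differentiableOn_integral_of_norm_le {F : ℂ → α → ℂ} {Ω : Set ℂ} {bound : α → ℝ}
    (hΩ : IsOpen Ω) (hmeas : ∀ τ ∈ Ω, AEStronglyMeasurable (F τ) μ)
    (hdiff : ∀ a, DifferentiableOn ℂ (fun τ => F τ a) Ω)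
    (hbound : Integrable bound μ) (hle : ∀ τ ∈ Ω, ∀ a, ‖F τ a‖ ≤ bound a) :
    DifferentiableOn ℂ (fun τ => ∫ a, F τ a ∂μ) Ω := by
  intro τ₀ hτ₀
  obtain ⟨ε, hε, hball⟩ := Metric.isOpen_iff.1 hΩ τ₀ hτ₀
  have closedBall_sub {τ : ℂ} (hτ : τ ∈ Metric.ball τ₀ (ε / 2)) : Metric.closedBall τ (ε / 4) ⊆ Ω :=
    (Metric.closedBall_subset_ball' (by linarith [Metric.mem_ball.1 hτ])).trans hball
  have hasDeriv (a : α) {τ : ℂ} (hτ : τ ∈ Ω) :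
      HasDerivAt (fun τ => F τ a) (deriv (fun τ => F τ a) τ) τ :=
    ((hdiff a).differentiableAt (hΩ.mem_nhds hτ)).hasDerivAt
  have hmeas_nhds : ∀ᶠ τ in 𝓝 τ₀, AEStronglyMeasurable (F τ) μ :=
    eventually_of_mem (hΩ.mem_nhds hτ₀) hmeas
  have cauchy_estimate (a : α) {τ : ℂ} (hτ : τ ∈ Metric.ball τ₀ (ε / 2)) :
      ‖deriv (fun τ => F τ a) τ‖ ≤ bound a / (ε / 4) := by
    refine Complex.norm_deriv_le_of_forall_mem_sphere_norm_le (by positivity)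
      (DifferentiableOn.diffContOnCl ?_) fun z hz =>
        hle z (closedBall_sub hτ (Metric.sphere_subset_closedBall hz)) a
    rw [closure_ball _ (by positivity)]
    exact (hdiff a).mono (closedBall_sub hτ)
  have hasDeriv_integral := (hasDerivAt_integral_of_dominated_loc_of_deriv_le
    (Metric.ball_mem_nhds τ₀ (half_pos hε)) hmeas_nhds
    (hbound.mono' (hmeas τ₀ hτ₀) (Eventually.of_forall (hle τ₀ hτ₀)))
    (aestronglyMeasurable_of_hasDerivAt_param hmeas_nhds
      (Eventually.of_forall fun a => hasDeriv a hτ₀))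
    (Eventually.of_forall fun a τ hτ => cauchy_estimate a hτ) (hbound.div_const _)
    (Eventually.of_forall fun a τ hτ => hasDeriv a
      (closedBall_sub hτ (Metric.mem_closedBall_self (by positivity))))).2
  exact hasDeriv_integral.differentiableAt.differentiableWithinAt

end HolomorphicIntegral

section ComplexDet

variable {V : Type*} [NormedAddCommGroup V] [NormedSpace ℝ V]

/-- The determinant of `1 + c • f` for an endomorphism `f` of a real vector space and a complex
scalar `c`, computed on the complexification. -/
noncomputable def complexDet (f : V →L[ℝ] V) (c : ℂ) : ℂ :=
  LinearMap.det (1 + c • (f : V →ₗ[ℝ] V).baseChange ℂ)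

theorem complexDet_eq_det_toMatrix {ι : Type*} [Fintype ι] [DecidableEq ι] (b : Basis ι ℝ V)
    (f : V →L[ℝ] V) (c : ℂ) :
    complexDet f c =
      (1 + c • (LinearMap.toMatrix b b (f : V →ₗ[ℝ] V)).map Complex.ofReal).det := by
  rw [complexDet, ← LinearMap.det_toMatrix (Algebra.TensorProduct.basis ℂ b), map_add, map_smul,
    LinearMap.toMatrix_one, LinearMap.toMatrix_baseChange]
  rfl

variable [FiniteDimensional ℝ V]

theorem complexDet_ofReal (f : V →L[ℝ] V) (r : ℝ) : complexDet f r = (1 + r • f).det := by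
  have : (1 : End ℂ (TensorProduct ℝ ℂ V)) + (r : ℂ) • (f : V →ₗ[ℝ] V).baseChange ℂ =
      (1 + r • (f : V →ₗ[ℝ] V)).baseChange ℂ := by
    ext; simp [TensorProduct.smul_tmul']
  rw [complexDet, this, LinearMap.det_baseChange]
  rfl

theorem continuous_complexDet : Continuous fun p : (V →L[ℝ] V) × ℂ => complexDet p.1 p.2 := by
  simp only [complexDet_eq_det_toMatrix (finBasis ℝ V)]
  have entry (i j) : Continuous fun f : V →L[ℝ] V =>
      LinearMap.toMatrix (finBasis ℝ V) (finBasis ℝ V) (f : V →ₗ[ℝ] V) i j := by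
    simp only [LinearMap.toMatrix_apply]
    exact ((finBasis ℝ V).coord i).continuous_of_finiteDimensional.comp (continuous_eval_const _)
  exact Continuous.matrix_det (continuous_const.add (continuous_snd.smul (continuous_matrix
    fun i j => Complex.continuous_ofReal.comp ((entry i j).comp continuous_fst))))

theorem differentiable_complexDet (f : V →L[ℝ] V) : Differentiable ℂ (complexDet f) := by
  simp only [funext (complexDet_eq_det_toMatrix (finBasis ℝ V) f), Matrix.det_apply,
    Matrix.add_apply, Matrix.smul_apply]
  fun_prop

theorem exists_norm_complexDet_le (r : ℝ) :
    ∃ C, ∀ (f : V →L[ℝ] V) (c : ℂ), ‖f‖ ≤ 1 → ‖c‖ ≤ r → ‖complexDet f c‖ ≤ C := by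
  obtain ⟨C, hC⟩ := ((isCompact_closedBall (0 : V →L[ℝ] V) 1).prod
    (isCompact_closedBall (0 : ℂ) r)).exists_bound_of_continuousOn
      continuous_complexDet.continuousOn
  exact ⟨C, fun f c hf hc => hC (f, c) (by simpa using ⟨hf, hc⟩)⟩

end ComplexDet

section GaussianContinuation

theorem norm_apply_le_of_lipschitz_one {V : Type*} [NormedAddCommGroup V] {N : V → V}
    (hN : LipschitzWith 1 N) (hN0 : N 0 = 0) (x : V) : ‖N x‖ ≤ ‖x‖ := by
  simpa [hN0] using hN.norm_sub_le x 0

variable {V : Type*} [NormedAddCommGroup V] [InnerProductSpace ℝ V]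

/-- The integrand `exp (-‖x + τ N x‖² / 4) * det (1 + τ N'(x))` produced by substituting
`x + τ N x` in the Gaussian integral, continued holomorphically from real to complex `τ`. -/
noncomputable def gaussianPullback (N : V → V) (τ : ℂ) (x : V) : ℂ :=
  Complex.exp (-(‖x‖ ^ 2 + 2 * τ * ⟪x, N x⟫ + τ ^ 2 * ‖N x‖ ^ 2 : ℂ) / 4) *
    complexDet (fderiv ℝ N x) τ

theorem norm_gaussianPullback (N : V → V) (τ : ℂ) (x : V) :
    ‖gaussianPullback N τ x‖ =
      Real.exp (-(‖x‖ ^ 2 + 2 * τ.re * ⟪x, N x⟫ + (τ.re ^ 2 - τ.im ^ 2) * ‖N x‖ ^ 2) / 4) *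
        ‖complexDet (fderiv ℝ N x) τ‖ := by
  rw [gaussianPullback, norm_mul, Complex.norm_exp]
  simp [sq]

theorem norm_gaussianPullback_mul_I (N : V → V) (t : ℝ) (x : V) :
    ‖gaussianPullback N (t * Complex.I) x‖ = Real.exp (-(‖x‖ ^ 2 - t ^ 2 * ‖N x‖ ^ 2) / 4) *
      ‖complexDet (fderiv ℝ N x) (t * Complex.I)‖ := by
  rw [norm_gaussianPullback]
  simp [sub_eq_add_neg]

variable [FiniteDimensional ℝ V]

theorem gaussianPullback_ofReal {N : V → V} (s : ℝ) (x : V) :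
    gaussianPullback N s x =
      (1 + fderiv ℝ (s • N) x).det • (Real.exp (-(1 / 4) * ‖x + (s • N) x‖ ^ 2) : ℂ) := by
  rw [gaussianPullback, complexDet_ofReal, fderiv_const_smul_field, Pi.smul_apply,
    norm_add_sq_real, Pi.smul_apply, inner_smul_right, norm_smul, mul_pow, Real.norm_eq_abs, sq_abs,
    Complex.real_smul, mul_comm]
  congr 1
  push_cast
  ring_nf

theorem differentiable_gaussianPullback (N : V → V) (x : V) :
    Differentiable ℂ fun τ => gaussianPullback N τ x := by
  unfold gaussianPullback
  exact Differentiable.mul (by fun_prop) (differentiable_complexDet _)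

theorem exists_norm_gaussianPullback_le {N : V → V} (hN : LipschitzWith 1 N) (hN0 : N 0 = 0) :
    ∃ C, ∀ {τ : ℂ} {q : ℝ}, 2 * |τ.re| + τ.im ^ 2 ≤ q → q ≤ 1 → ∀ x,
      ‖gaussianPullback N τ x‖ ≤ Real.exp (-((1 - q) / 4) * ‖x‖ ^ 2) * C := by
  obtain ⟨C, hC⟩ := exists_norm_complexDet_le (V := V) 2
  refine ⟨C, fun {τ q} hτ hq x => ?_⟩
  have hre : |τ.re| ≤ 1 := by nlinarith [sq_nonneg τ.im]
  have him : |τ.im| ≤ 1 := (sq_le_one_iff_abs_le_one _).1 (by linarith [abs_nonneg τ.re])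
  have hdet := hC (fderiv ℝ N x) τ (norm_fderiv_le_of_lipschitz ℝ hN)
    (by linarith [Complex.norm_le_abs_re_add_abs_im τ])
  rw [norm_gaussianPullback]
  refine mul_le_mul (Real.exp_le_exp.2 ?_) hdet (norm_nonneg _) (Real.exp_nonneg _)
  have hNx : ‖N x‖ ^ 2 ≤ ‖x‖ ^ 2 :=
    pow_le_pow_left₀ (norm_nonneg _) (norm_apply_le_of_lipschitz_one hN hN0 x) 2
  have hinner : |⟪x, N x⟫| ≤ ‖x‖ ^ 2 := (abs_real_inner_le_norm _ _).trans <| by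
    nlinarith [norm_nonneg x, norm_apply_le_of_lipschitz_one hN hN0 x]
  have hcross : -(τ.re * ⟪x, N x⟫) ≤ |τ.re| * ‖x‖ ^ 2 :=
    (neg_le_abs _).trans ((abs_mul _ _).le.trans (by gcongr))
  nlinarith [mul_nonneg (sq_nonneg τ.re) (sq_nonneg ‖N x‖),
    mul_le_mul_of_nonneg_left hNx (sq_nonneg τ.im), mul_le_mul_of_nonneg_right hτ (sq_nonneg ‖x‖)]

variable [MeasurableSpace V] [BorelSpace V]

theorem measurable_gaussianPullback {N : V → V} (hN : Continuous N) (τ : ℂ) :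
    Measurable (gaussianPullback N τ) := by
  have hexp : Continuous fun x =>
      Complex.exp (-(‖x‖ ^ 2 + 2 * τ * ⟪x, N x⟫ + τ ^ 2 * ‖N x‖ ^ 2 : ℂ) / 4) := by fun_prop
  have hdet : Continuous fun f : V →L[ℝ] V => complexDet f τ :=
    continuous_complexDet.uncurry_right τ
  unfold gaussianPullback
  exact Measurable.mul hexp.measurable (hdet.measurable.comp (measurable_fderiv ℝ N))

theorem integrable_exp_neg_mul_norm_sq {b : ℝ} (hb : 0 < b) :
    Integrable fun x : V => Real.exp (-b * ‖x‖ ^ 2) := by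
  refine (GaussianFourier.integrable_cexp_neg_mul_sq_norm_add (V := V) (b := b)
    (by simpa using hb) 0 0).norm.congr (Eventually.of_forall fun x => ?_)
  simp [Complex.norm_exp, ← Complex.ofReal_pow]

theorem integral_gaussianPullback_ofReal {N : V → V} (hN : LipschitzWith 1 N) {s : ℝ}
    (hs : |s| < 1) :
    ∫ x, gaussianPullback N s x = ((4 * Real.pi) ^ (finrank ℝ V / 2 : ℝ) : ℝ) := by
  have hsN : LipschitzWith ‖s‖₊ (s • N) := by
    simpa only [mul_one] using! (lipschitzWith_smul s).comp hN
  simp only [gaussianPullback_ofReal]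
  rw [integral_det_one_add_fderiv_smul (μ := volume) hsN
    (by rwa [← NNReal.coe_lt_coe, coe_nnnorm, Real.norm_eq_abs])
    fun x => (Real.exp (-(1 / 4) * ‖x‖ ^ 2) : ℂ), integral_complex_ofReal,
    GaussianFourier.integral_rexp_neg_mul_sq_norm (by norm_num)]
  norm_num [div_eq_mul_inv, mul_comm]

theorem integral_gaussianPullback_mul_I {N : V → V} (hN : LipschitzWith 1 N) (hN0 : N 0 = 0)
    {t : ℝ} (ht0 : 0 ≤ t) (ht1 : t < 1) :
    ∫ x, gaussianPullback N (t * Complex.I) x =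
      ((4 * Real.pi) ^ (finrank ℝ V / 2 : ℝ) : ℝ) := by
  obtain ⟨T, htT, hT1⟩ := exists_between ht1
  have hT0 : 0 < T := ht0.trans_lt htT
  set δ : ℝ := (1 - T ^ 2) / 4 with hδ
  have hδ0 : 0 < δ := by nlinarith
  set Ω : Set ℂ := Ioo (-δ) δ ×ℂ Ioo (-T) T
  have hΩ : IsOpen Ω := isOpen_Ioo.reProdIm isOpen_Ioo
  have hΩ_conn : IsPreconnected Ω :=
    (((convex_Ioo _ _).linear_preimage Complex.reLm).inter
      ((convex_Ioo _ _).linear_preimage Complex.imLm)).isPreconnected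
  obtain ⟨C, hC⟩ := exists_norm_gaussianPullback_le hN hN0
  have hdiff : DifferentiableOn ℂ (fun τ => ∫ x, gaussianPullback N τ x) Ω := by
    refine differentiableOn_integral_of_norm_le hΩ
      (fun τ _ => (measurable_gaussianPullback hN.continuous τ).aestronglyMeasurable)
      (fun x => (differentiable_gaussianPullback N x).differentiableOn)
      ((integrable_exp_neg_mul_norm_sq (b := (1 - (2 * δ + T ^ 2)) / 4) (by nlinarith)).mul_const C)
      fun τ hτ x => hC ?_ (by nlinarith) x
    have := abs_lt.2 hτ.1
    have := sq_lt_sq.2 ((abs_lt.2 hτ.2).trans_eq (abs_of_pos hT0).symm)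
    linarith
  have hreal : ∃ᶠ τ in 𝓝[≠] (0 : ℂ),
      ∫ x, gaussianPullback N τ x = ((4 * Real.pi) ^ (finrank ℝ V / 2 : ℝ) : ℝ) := by
    have hofReal : Tendsto Complex.ofReal (𝓝[≠] 0) (𝓝[≠] 0) :=
      (Complex.continuous_ofReal.tendsto' 0 0 rfl).inf (by simp)
    refine hofReal.frequently (Eventually.frequently ?_)
    filter_upwards [nhdsWithin_le_nhds (Metric.ball_mem_nhds (0 : ℝ) one_pos)] with s hs
    exact integral_gaussianPullback_ofReal hN (by simpa using hs)
  refine (hdiff.analyticOnNhd hΩ).eqOn_of_preconnected_of_frequently_eq analyticOnNhd_const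
    hΩ_conn (z₀ := 0) ?_ hreal ?_
  · simpa [Ω, Complex.mem_reProdIm] using ⟨hδ0, hT0⟩
  · simpa [Ω, Complex.mem_reProdIm] using ⟨hδ0, by linarith, htT⟩

end GaussianContinuation

section UnitParameterLimit

theorem det_one_add_nonneg {V : Type*} [NormedAddCommGroup V] [NormedSpace ℝ V]
    [FiniteDimensional ℝ V] {f : V →L[ℝ] V} (hf : ‖f‖ ≤ 1) : 0 ≤ (1 + f).det := by
  have hcont : Continuous fun r : ℝ => (1 + r • f).det :=
    ContinuousLinearMap.continuous_det.comp (by fun_prop)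
  have hlim : Tendsto (fun r : ℝ => (1 + r • f).det) (𝓝[<] 1) (𝓝 (1 + f).det) :=
    (hcont.tendsto' 1 _ (by rw [one_smul])).mono_left nhdsWithin_le_nhds
  refine ge_of_tendsto hlim ?_
  filter_upwards [Ioo_mem_nhdsLT zero_lt_one] with r hr
  refine (det_one_add_pos ?_).le
  rw [norm_smul, Real.norm_of_nonneg hr.1.le]
  nlinarith [hr.1, hr.2]

theorem lintegral_det_one_add_fderiv_mul_le {V : Type*} [NormedAddCommGroup V] [NormedSpace ℝ V]
    [FiniteDimensional ℝ V] [MeasurableSpace V] [BorelSpace V] {μ : Measure V}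
    [μ.IsAddHaarMeasure] {M : V → V} (hM : LipschitzWith 1 M) {g : V → ℝ≥0∞}
    (hg : LowerSemicontinuous g) :
    ∫⁻ x, ENNReal.ofReal (1 + fderiv ℝ M x).det * g (x + M x) ∂μ ≤ ∫⁻ x, g x ∂μ := by
  let F (t : ℝ) (x : V) : ℝ≥0∞ := ENNReal.ofReal (1 + t • fderiv ℝ M x).det * g (x + t • M x)
  have measurable_F (t : ℝ) : Measurable (F t) := by
    have hMc := hM.continuous
    have hdet : Continuous fun f : V →L[ℝ] V => (1 + t • f).det :=
      ContinuousLinearMap.continuous_det.comp (by fun_prop)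
    exact (hdet.measurable.comp (measurable_fderiv ℝ M)).ennreal_ofReal.mul
      (hg.measurable.comp (show Continuous fun x => x + t • M x by fun_prop).measurable)
  have lintegral_F {t : ℝ} (ht : t ∈ Ioo (0 : ℝ) 1) : ∫⁻ x, F t x ∂μ = ∫⁻ x, g x ∂μ := by
    have htM : LipschitzWith ‖t‖₊ (t • M) := by
      simpa only [mul_one] using! (lipschitzWith_smul t).comp hM
    have ht1 : ‖t‖₊ < 1 := by
      rw [← NNReal.coe_lt_coe, coe_nnnorm, Real.norm_of_nonneg ht.1.le]
      exact ht.2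
    simpa only [fderiv_const_smul_field] using! lintegral_det_one_add_fderiv_mul (μ := μ) htM ht1 g
  have le_liminf_F (x : V) :
      ENNReal.ofReal (1 + fderiv ℝ M x).det * g (x + M x) ≤ liminf (F · x) (𝓝[<] 1) := by
    refine le_trans (mul_le_mul' (Tendsto.liminf_eq ?_).ge ?_) ENNReal.le_liminf_mul
    · have hcont : Continuous fun t : ℝ => (1 + t • fderiv ℝ M x).det :=
        ContinuousLinearMap.continuous_det.comp (by fun_prop)
      exact ((ENNReal.continuous_ofReal.comp hcont).tendsto' 1 _ (by simp)).mono_left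
        nhdsWithin_le_nhds
    · have hline : Tendsto (fun t : ℝ => x + t • M x) (𝓝[<] 1) (𝓝 (x + M x)) :=
        (Continuous.tendsto' (by fun_prop) 1 _ (by rw [one_smul])).mono_left nhdsWithin_le_nhds
      exact (hg.le_liminf _).trans (liminf_le_liminf_of_le hline)
  calc ∫⁻ x, ENNReal.ofReal (1 + fderiv ℝ M x).det * g (x + M x) ∂μ
      ≤ ∫⁻ x, liminf (F · x) (𝓝[<] 1) ∂μ := lintegral_mono le_liminf_F
    _ ≤ liminf (fun t => ∫⁻ x, F t x ∂μ) (𝓝[<] 1) := lintegral_liminf_le measurable_F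
    _ = ∫⁻ x, g x ∂μ := by
        rw [liminf_congr (eventually_of_mem (Ioo_mem_nhdsLT zero_lt_one) fun t => lintegral_F),
          liminf_const]

theorem le_lintegral_enorm_gaussianPullback_I {V : Type*} [NormedAddCommGroup V]
    [InnerProductSpace ℝ V] [FiniteDimensional ℝ V] [MeasurableSpace V] [BorelSpace V]
    {N : V → V} (hN : LipschitzWith 1 N) (hN0 : N 0 = 0)
    (hfin : ∫⁻ x, ENNReal.ofReal (Real.exp (-(‖x‖ ^ 2 - ‖N x‖ ^ 2) / 4)) ≠ ∞) :
    ENNReal.ofReal ((4 * Real.pi) ^ (finrank ℝ V / 2 : ℝ)) ≤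
      ∫⁻ x, ‖gaussianPullback N Complex.I x‖ₑ := by
  obtain ⟨C, hC⟩ := exists_norm_complexDet_le (V := V) 1
  have lower {t : ℝ} (ht : t ∈ Ioo (0 : ℝ) 1) :
      ENNReal.ofReal ((4 * Real.pi) ^ (finrank ℝ V / 2 : ℝ)) ≤
        ∫⁻ x, ‖gaussianPullback N (t * Complex.I) x‖ₑ := by
    refine le_trans (le_of_eq ?_) (enorm_integral_le_lintegral_enorm _)
    rw [integral_gaussianPullback_mul_I hN hN0 ht.1.le ht.2, ← ofReal_norm, Complex.norm_real,
      Real.norm_of_nonneg (by positivity)]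
  have dominated {t : ℝ} (ht : t ∈ Ioo (0 : ℝ) 1) (x : V) :
      ‖gaussianPullback N (t * Complex.I) x‖ₑ ≤
        ENNReal.ofReal (Real.exp (-(‖x‖ ^ 2 - ‖N x‖ ^ 2) / 4)) * ENNReal.ofReal C := by
    rw [← ofReal_norm, norm_gaussianPullback_mul_I, ← ENNReal.ofReal_mul (Real.exp_nonneg _)]
    gcongr
    · exact mul_le_of_le_one_left (sq_nonneg _) (pow_le_one₀ ht.1.le ht.2.le)
    · refine hC _ _ (norm_fderiv_le_of_lipschitz ℝ hN) ?_
      simpa [abs_of_pos ht.1] using ht.2.le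
  refine ge_of_tendsto (tendsto_lintegral_filter_of_dominated_convergence _
    (Eventually.of_forall fun t => (measurable_gaussianPullback hN.continuous _).enorm)
    (eventually_of_mem (Ioo_mem_nhdsLT zero_lt_one) fun t ht =>
      Eventually.of_forall (dominated ht))
    (by simpa only [lintegral_mul_const' _ _ ENNReal.ofReal_ne_top] using
      ENNReal.mul_ne_top hfin ENNReal.ofReal_ne_top)
    (Eventually.of_forall fun x => ?_))
    (eventually_of_mem (Ioo_mem_nhdsLT zero_lt_one) fun t ht => lower ht)
  have hcont : Continuous fun t : ℝ => gaussianPullback N (t * Complex.I) x :=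
    (differentiable_gaussianPullback N x).continuous.comp (by fun_prop)
  exact (hcont.enorm.tendsto' 1 _ (by simp)).mono_left nhdsWithin_le_nhds

end UnitParameterLimit

section CrossMap

variable {E : Type*} [NormedAddCommGroup E]

/-- The map `(y, z) ↦ (A z, B y)` on the Hilbert sum `E ⊕ E`. -/
def crossMap (A B : E → E) (x : WithLp 2 (E × E)) : WithLp 2 (E × E) :=
  WithLp.toLp 2 (A x.snd, B x.fst)

theorem norm_sq_crossMap (A B : E → E) (x : WithLp 2 (E × E)) :
    ‖crossMap A B x‖ ^ 2 = ‖A x.snd‖ ^ 2 + ‖B x.fst‖ ^ 2 :=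
  WithLp.prod_norm_sq_eq_of_L2 _

theorem lipschitzWith_crossMap {k : ℝ≥0} {A B : E → E} (hA : LipschitzWith k A)
    (hB : LipschitzWith k B) : LipschitzWith k (crossMap A B) := by
  refine LipschitzWith.of_dist_le_mul fun x y => le_of_sq_le_sq ?_ (by positivity)
  have hAsq := pow_le_pow_left₀ (norm_nonneg _) (hA.norm_sub_le x.snd y.snd) 2
  have hBsq := pow_le_pow_left₀ (norm_nonneg _) (hB.norm_sub_le x.fst y.fst) 2
  rw [mul_pow] at hAsq hBsq
  rw [dist_eq_norm, dist_eq_norm, mul_pow, WithLp.prod_norm_sq_eq_of_L2,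
    WithLp.prod_norm_sq_eq_of_L2]
  change ‖A x.snd - A y.snd‖ ^ 2 + ‖B x.fst - B y.fst‖ ^ 2 ≤
    (k : ℝ) ^ 2 * (‖x.fst - y.fst‖ ^ 2 + ‖x.snd - y.snd‖ ^ 2)
  linarith

variable [NormedSpace ℝ E]

/-- The continuous linear version of `crossMap`. -/
noncomputable def crossMapL (a b : E →L[ℝ] E) : WithLp 2 (E × E) →L[ℝ] WithLp 2 (E × E) :=
  (WithLp.prodContinuousLinearEquiv 2 ℝ E E).symm ∘L
    (a ∘L WithLp.sndL 2 ℝ E E).prod (b ∘L WithLp.fstL 2 ℝ E E)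

theorem hasFDerivAt_crossMap {A B : E → E} {a b : E →L[ℝ] E} {x : WithLp 2 (E × E)}
    (hA : HasFDerivAt A a x.snd) (hB : HasFDerivAt B b x.fst) :
    HasFDerivAt (crossMap A B) (crossMapL a b) x :=
  (WithLp.prodContinuousLinearEquiv 2 ℝ E E).symm.hasFDerivAt.comp x
    ((hA.comp x (WithLp.sndL 2 ℝ E E).hasFDerivAt).prodMk
      (hB.comp x (WithLp.fstL 2 ℝ E E).hasFDerivAt))

theorem complexDet_crossMapL {ι : Type*} [Fintype ι] [DecidableEq ι] (v : Basis ι ℝ E)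
    (a b : E →L[ℝ] E) (c : ℂ) :
    complexDet (crossMapL a b) c =
      (1 - c ^ 2 • ((LinearMap.toMatrix v v (b : E →ₗ[ℝ] E)).map Complex.ofReal *
        (LinearMap.toMatrix v v (a : E →ₗ[ℝ] E)).map Complex.ofReal)).det := by
  set w := (v.prod v).map (WithLp.linearEquiv 2 ℝ (E × E)).symm with hw
  have blocks : 1 + c • (LinearMap.toMatrix w w
      (crossMapL a b : WithLp 2 (E × E) →ₗ[ℝ] WithLp 2 (E × E))).map Complex.ofReal =
      Matrix.fromBlocks 1 (c • (LinearMap.toMatrix v v (a : E →ₗ[ℝ] E)).map Complex.ofReal)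
        (c • (LinearMap.toMatrix v v (b : E →ₗ[ℝ] E)).map Complex.ofReal) 1 := by
    ext (i | i) (j | j) <;>
      simp [hw, LinearMap.toMatrix_apply, crossMapL, Matrix.one_apply]
  rw [complexDet_eq_det_toMatrix w, blocks, Matrix.det_fromBlocks_one₁₁, Matrix.smul_mul,
    Matrix.mul_smul, smul_smul, sq]

theorem complexDet_crossMapL_neg_I [FiniteDimensional ℝ E] (a b : E →L[ℝ] E) :
    complexDet (crossMapL a (-b)) Complex.I = (1 + crossMapL a b).det := by
  have := complexDet_ofReal (crossMapL a b) 1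
  rw [one_smul] at this
  rw [← this, complexDet_crossMapL (finBasis ℝ E), complexDet_crossMapL (finBasis ℝ E)]
  simp [Matrix.map_neg]

theorem finrank_withLp_prod_self [FiniteDimensional ℝ E] :
    finrank ℝ (WithLp 2 (E × E)) = finrank ℝ E + finrank ℝ E := by
  rw [(WithLp.linearEquiv 2 ℝ (E × E)).finrank_eq, finrank_prod]

end CrossMap

section CrossMapInequality

variable {E : Type*} [NormedAddCommGroup E] [InnerProductSpace ℝ E] [FiniteDimensional ℝ E]

theorem enorm_gaussianPullback_crossMap_I {R : E → E} (hR : LipschitzWith 1 R)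
    {x : WithLp 2 (E × E)}
    (hx : DifferentiableAt ℝ R x.fst ∧ DifferentiableAt ℝ R x.snd) :
    ‖gaussianPullback (crossMap R (-R)) Complex.I x‖ₑ =
      ENNReal.ofReal (1 + fderiv ℝ (crossMap R R) x).det *
        ENNReal.ofReal (Real.exp (-(‖x‖ ^ 2 - ‖crossMap R R x‖ ^ 2) / 4)) := by
  have hN := (hasFDerivAt_crossMap hx.2.hasFDerivAt hx.1.hasFDerivAt.neg).fderiv
  have hM := (hasFDerivAt_crossMap hx.2.hasFDerivAt hx.1.hasFDerivAt).fderiv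
  have hdet := det_one_add_nonneg
    (norm_fderiv_le_of_lipschitz ℝ (lipschitzWith_crossMap hR hR) (x₀ := x))
  have hnorm := norm_gaussianPullback_mul_I (crossMap R (-R)) 1 x
  rw [Complex.ofReal_one, one_mul, hN, complexDet_crossMapL_neg_I, ← hM, Complex.norm_real,
    Real.norm_of_nonneg hdet, one_pow, one_mul, norm_sq_crossMap, Pi.neg_apply, norm_neg,
    ← norm_sq_crossMap] at hnorm
  rw [← ofReal_norm, hnorm, mul_comm, ENNReal.ofReal_mul hdet]

variable [MeasurableSpace E] [BorelSpace E]

theorem ae_differentiableAt_fst_snd {R : E → E} (hR : LipschitzWith 1 R) :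
    ∀ᵐ x : WithLp 2 (E × E), DifferentiableAt ℝ R x.fst ∧ DifferentiableAt ℝ R x.snd := by
  have hdiff : ∀ᵐ x : E × E, DifferentiableAt ℝ R x.1 ∧ DifferentiableAt ℝ R x.2 :=
    (Measure.quasiMeasurePreserving_fst.ae hR.ae_differentiableAt).and
      (Measure.quasiMeasurePreserving_snd.ae hR.ae_differentiableAt)
  exact (WithLp.volume_preserving_ofLp E E).quasiMeasurePreserving.ae hdiff

theorem le_lintegral_of_exp_le_add_crossMap {R : E → E} (hR : LipschitzWith 1 R) (hR0 : R 0 = 0)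
    {g : WithLp 2 (E × E) → ℝ≥0∞} (hg : LowerSemicontinuous g)
    (hfin : ∫⁻ x : WithLp 2 (E × E),
      ENNReal.ofReal (Real.exp (-(‖x‖ ^ 2 - ‖crossMap R R x‖ ^ 2) / 4)) ≠ ∞)
    (hle : ∀ x : WithLp 2 (E × E),
      ENNReal.ofReal (Real.exp (-(‖x‖ ^ 2 - ‖crossMap R R x‖ ^ 2) / 4)) ≤
        g (x + crossMap R R x)) :
    ENNReal.ofReal ((4 * Real.pi) ^ finrank ℝ E) ≤ ∫⁻ x, g x := by
  have hnorm (x : WithLp 2 (E × E)) : ‖crossMap R (-R) x‖ ^ 2 = ‖crossMap R R x‖ ^ 2 := by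
    simp only [norm_sq_crossMap, Pi.neg_apply, norm_neg]
  calc ENNReal.ofReal ((4 * Real.pi) ^ finrank ℝ E)
      = ENNReal.ofReal ((4 * Real.pi) ^ (finrank ℝ (WithLp 2 (E × E)) / 2 : ℝ)) := by
        rw [finrank_withLp_prod_self, Nat.cast_add, add_self_div_two, Real.rpow_natCast]
    _ ≤ ∫⁻ x, ‖gaussianPullback (crossMap R (-R)) Complex.I x‖ₑ :=
        le_lintegral_enorm_gaussianPullback_I (lipschitzWith_crossMap hR hR.neg)
          (by simp [crossMap, hR0]) (by simpa only [hnorm] using hfin)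
    _ ≤ ∫⁻ x, ENNReal.ofReal (1 + fderiv ℝ (crossMap R R) x).det * g (x + crossMap R R x) := by
        refine lintegral_mono_ae ?_
        filter_upwards [ae_differentiableAt_fst_snd hR] with x hx
        rw [enorm_gaussianPullback_crossMap_I hR hx]
        gcongr
        exact hle x
    _ ≤ ∫⁻ x, g x := lintegral_det_one_add_fderiv_mul_le (lipschitzWith_crossMap hR hR) hg

end CrossMapInequality

section SupportFunction

open scoped Pointwise

theorem zero_mem_interior_of_eq_neg {E : Type*} [AddCommGroup E] [Module ℝ E]
    [TopologicalSpace E] [IsTopologicalAddGroup E] [ContinuousConstSMul ℝ E] {K : Set E}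
    (hconv : Convex ℝ K) (hsym : K = -K) (hint : (interior K).Nonempty) : 0 ∈ interior K := by
  obtain ⟨x, hx⟩ := hint
  have hneg : -x ∈ interior K := by
    rw [hsym, mem_interior_iff_mem_nhds]
    exact continuous_neg.tendsto' (-x) x (neg_neg x) (mem_interior_iff_mem_nhds.1 hx)
  have hmid := hconv.interior.midpoint_mem hx hneg
  rwa [midpoint_self_neg] at hmid

variable {E : Type*} [NormedAddCommGroup E] [InnerProductSpace ℝ E] {K : Set E}

/-- The support function `ξ ↦ sup_{x ∈ K} ⟪ξ, x⟫` of a set `K`; it is meant for nonempty bounded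
`K`, as the real supremum is `0` otherwise. -/
noncomputable def supportFun (K : Set E) (ξ : E) : ℝ :=
  sSup ((fun x => ⟪ξ, x⟫) '' K)

theorem inner_le_supportFun (hK : Bornology.IsBounded K) (ξ : E) {x : E} (hx : x ∈ K) :
    ⟪ξ, x⟫ ≤ supportFun K ξ := by
  obtain ⟨C, hC⟩ := hK.exists_norm_le
  refine le_csSup ⟨‖ξ‖ * C, ?_⟩ (mem_image_of_mem _ hx)
  rintro _ ⟨y, hy, rfl⟩
  exact (real_inner_le_norm ξ y).trans (by gcongr; exact hC y hy)

theorem supportFun_le (hne : K.Nonempty) {ξ : E} {c : ℝ} (h : ∀ x ∈ K, ⟪ξ, x⟫ ≤ c) :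
    supportFun K ξ ≤ c :=
  csSup_le (hne.image _) (forall_mem_image.2 h)

theorem supportFun_le_mul_norm (hne : K.Nonempty) {C : ℝ} (hC : ∀ x ∈ K, ‖x‖ ≤ C) (ξ : E) :
    supportFun K ξ ≤ C * ‖ξ‖ :=
  supportFun_le hne fun x hx => by
    rw [mul_comm]
    exact (real_inner_le_norm ξ x).trans (by gcongr; exact hC x hx)

theorem supportFun_add_le (hK : Bornology.IsBounded K) (hne : K.Nonempty) (ξ η : E) :
    supportFun K (ξ + η) ≤ supportFun K ξ + supportFun K η :=
  supportFun_le hne fun x hx => by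
    rw [inner_add_left]
    exact add_le_add (inner_le_supportFun hK ξ hx) (inner_le_supportFun hK η hx)

theorem supportFun_smul_of_nonneg (K : Set E) {r : ℝ} (hr : 0 ≤ r) (ξ : E) :
    supportFun K (r • ξ) = r * supportFun K ξ := by
  simp only [supportFun, real_inner_smul_left]
  rw [← smul_eq_mul, ← Real.sSup_smul_of_nonneg hr, ← image_smul, image_image]
  simp only [smul_eq_mul]

theorem supportFun_neg (hsym : K = -K) (ξ : E) : supportFun K (-ξ) = supportFun K ξ := by
  conv_rhs => rw [hsym]
  simp only [supportFun, ← image_neg_eq_neg, image_image, inner_neg_left, inner_neg_right]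

theorem supportFun_smul (hsym : K = -K) (r : ℝ) (ξ : E) :
    supportFun K (r • ξ) = |r| * supportFun K ξ := by
  rw [← supportFun_smul_of_nonneg K (abs_nonneg r)]
  rcases abs_choice r with h | h <;> rw [h]
  rw [neg_smul, supportFun_neg hsym]

theorem supportFun_zero (K : Set E) : supportFun K 0 = 0 := by
  simpa using supportFun_smul_of_nonneg K le_rfl (0 : E)

theorem continuous_supportFun (hK : Bornology.IsBounded K) (hne : K.Nonempty) :
    Continuous (supportFun K) := by
  obtain ⟨C, hC⟩ := hK.exists_norm_le
  have hC0 : 0 ≤ C := hne.elim fun x hx => (norm_nonneg x).trans (hC x hx)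
  refine (LipschitzWith.of_le_add_mul ⟨C, hC0⟩ fun ξ η => ?_).continuous
  calc supportFun K ξ = supportFun K (η + (ξ - η)) := by rw [add_sub_cancel]
    _ ≤ supportFun K η + supportFun K (ξ - η) := supportFun_add_le hK hne _ _
    _ ≤ supportFun K η + C * dist ξ η := by
      rw [dist_eq_norm]
      gcongr
      exact supportFun_le_mul_norm hne hC _

theorem eq_zero_of_supportFun_eq_zero (hK : Bornology.IsBounded K) (h0 : 0 ∈ interior K) {ξ : E}
    (hξ : supportFun K ξ = 0) : ξ = 0 := by
  have htend : Tendsto (fun t : ℝ => t • ξ) (𝓝[>] 0) (𝓝 0) :=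
    tendsto_nhdsWithin_of_tendsto_nhds (Continuous.tendsto' (by fun_prop) 0 0 (zero_smul ℝ ξ))
  obtain ⟨t, htK, ht⟩ :=
    ((htend.eventually (mem_interior_iff_mem_nhds.1 h0)).and self_mem_nhdsWithin).exists
  have hle : t * ⟪ξ, ξ⟫ ≤ 0 := by
    rw [← real_inner_smul_right, ← hξ]
    exact inner_le_supportFun hK ξ htK
  exact inner_self_eq_zero.1
    ((nonpos_of_mul_nonpos_right hle ht).antisymm real_inner_self_nonneg)

variable [FiniteDimensional ℝ E] [MeasurableSpace E] [BorelSpace E] {μ : Measure E}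
  [μ.IsAddHaarMeasure]

theorem measure_supportFun_lt_one (hK : Bornology.IsBounded K) (hsym : K = -K)
    (h0 : 0 ∈ interior K) : μ {ξ | supportFun K ξ < 1} =
      ENNReal.ofReal ((∫ ξ, Real.exp (-supportFun K ξ) ∂μ) / (finrank ℝ E).factorial) := by
  have := measure_lt_one_eq_integral_div_gamma μ (supportFun_zero K) (supportFun_neg hsym)
    (supportFun_add_le hK ⟨0, interior_subset h0⟩) (eq_zero_of_supportFun_eq_zero hK h0)
    (fun r ξ => (supportFun_smul hsym r ξ).le) one_pos
  simpa only [Real.rpow_one, div_one, Real.Gamma_nat_eq_factorial] using this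

theorem integrable_exp_neg_supportFun (hK : Bornology.IsBounded K) (hsym : K = -K)
    (h0 : 0 ∈ interior K) : Integrable (fun ξ => Real.exp (-supportFun K ξ)) μ := by
  -- Otherwise the integral has its junk value `0` and the open set `{h_K < 1} ∋ 0` is null.
  by_contra hint
  have hnull := measure_supportFun_lt_one (μ := μ) hK hsym h0
  rw [integral_undef hint, zero_div, ENNReal.ofReal_zero] at hnull
  have hopen : IsOpen {ξ | supportFun K ξ < 1} :=
    isOpen_lt (continuous_supportFun hK ⟨0, interior_subset h0⟩) continuous_const
  have hmem : (0 : E) ∈ {ξ | supportFun K ξ < 1} := (supportFun_zero K).trans_lt one_pos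
  exact (hopen.measure_pos μ ⟨0, hmem⟩).ne' hnull

theorem lintegral_exp_neg_supportFun (hK : Bornology.IsBounded K) (hsym : K = -K)
    (h0 : 0 ∈ interior K) : ∫⁻ ξ, ENNReal.ofReal (Real.exp (-supportFun K ξ)) ∂μ =
      (finrank ℝ E).factorial * μ {ξ | supportFun K ξ < 1} := by
  have hfact : ((finrank ℝ E).factorial : ℝ) ≠ 0 := by positivity
  rw [← ofReal_integral_eq_lintegral_ofReal (integrable_exp_neg_supportFun hK hsym h0)
    (ae_of_all _ fun _ => (Real.exp_pos _).le), measure_supportFun_lt_one hK hsym h0,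
    ← ENNReal.ofReal_natCast, ← ENNReal.ofReal_mul (Nat.cast_nonneg _), mul_div_cancel₀ _ hfact]

theorem ofReal_pow_mul_measure_supportFun_lt_one_le (hK : Bornology.IsBounded K) {ħ : ℝ}
    (hħ : 0 < ħ) : ENNReal.ofReal (ħ ^ finrank ℝ E) * μ {ξ | supportFun K ξ < 1} ≤
      μ {p | ∀ x ∈ K, ⟪p, x⟫ ≤ ħ} := by
  have hsub : ħ • {ξ | supportFun K ξ < 1} ⊆ {p | ∀ x ∈ K, ⟪p, x⟫ ≤ ħ} := by
    rintro _ ⟨ξ, hξ, rfl⟩ x hx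
    have hle : ⟪ξ, x⟫ ≤ 1 :=
      (inner_le_supportFun hK ξ hx).trans (show supportFun K ξ < 1 from hξ).le
    simpa only [real_inner_smul_left, mul_one] using mul_le_mul_of_nonneg_left hle hħ.le
  rw [← abs_of_pos (pow_pos hħ _), ← Measure.addHaar_smul]
  exact measure_mono hsub

end SupportFunction

section MetricProjection

open scoped Pointwise

variable {E : Type*} [NormedAddCommGroup E] [InnerProductSpace ℝ E] {K : Set E} {P : E → E}

/-- `P` is a metric projection onto the convex set `K`. The nearest point `P y` is characterized by
the variational inequality, which is the form in which it is used. -/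
structure IsMetricProjection (K : Set E) (P : E → E) : Prop where
  mem (y : E) : P y ∈ K
  inner_sub_le (y : E) {w : E} (hw : w ∈ K) : ⟪y - P y, w - P y⟫ ≤ 0

theorem exists_isMetricProjection (hne : K.Nonempty) (hcomp : IsComplete K)
    (hconv : Convex ℝ K) : ∃ P, IsMetricProjection K P := by
  choose P hPK hP using exists_norm_eq_iInf_of_complete_convex hne hcomp hconv
  exact ⟨P, hPK, fun y w =>
    (norm_eq_iInf_iff_real_inner_le_zero hconv (hPK y)).1 (hP y) w⟩

/-- The reflection `y ↦ 2 P y - y` in a metric projection `P`. -/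
def projReflection (P : E → E) (y : E) : E :=
  (2 : ℝ) • P y - y

theorem norm_sq_sub_norm_sq_projReflection (P : E → E) (y : E) :
    ‖y‖ ^ 2 - ‖projReflection P y‖ ^ 2 = 4 * ⟪y - P y, P y⟫ := by
  rw [projReflection, norm_sub_sq_real, norm_smul, real_inner_smul_left, inner_sub_left,
    real_inner_self_eq_norm_sq, real_inner_comm, Real.norm_two]
  ring

namespace IsMetricProjection

theorem apply_zero (hP : IsMetricProjection K P) (h0 : (0 : E) ∈ K) : P 0 = 0 := by
  have hle := hP.inner_sub_le 0 h0
  rw [zero_sub, inner_neg_neg] at hle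
  exact inner_self_eq_zero.1 (hle.antisymm real_inner_self_nonneg)

theorem norm_sq_sub_le_inner (hP : IsMetricProjection K P) (y z : E) :
    ‖P y - P z‖ ^ 2 ≤ ⟪P y - P z, y - z⟫ := by
  have hy := hP.inner_sub_le y (hP.mem z)
  have hz := hP.inner_sub_le z (hP.mem y)
  have hid : ⟪P y - P z, y - z⟫ - ‖P y - P z‖ ^ 2 =
      -⟪y - P y, P z - P y⟫ - ⟪z - P z, P y - P z⟫ := by
    rw [← real_inner_self_eq_norm_sq, real_inner_comm, ← neg_sub (P y) (P z), inner_neg_right,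
      neg_neg, ← inner_sub_left, ← inner_sub_left]
    congr 1
    abel
  linarith

theorem lipschitzWith_projReflection (hP : IsMetricProjection K P) :
    LipschitzWith 1 (projReflection P) := by
  refine LipschitzWith.of_dist_le_mul fun y z => ?_
  rw [NNReal.coe_one, one_mul, dist_eq_norm, dist_eq_norm]
  have hsub : projReflection P y - projReflection P z = (2 : ℝ) • (P y - P z) - (y - z) := by
    simp only [projReflection]
    module
  refine le_of_sq_le_sq ?_ (norm_nonneg _)
  calc ‖projReflection P y - projReflection P z‖ ^ 2
      = ‖y - z‖ ^ 2 - 4 * (⟪P y - P z, y - z⟫ - ‖P y - P z‖ ^ 2) := by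
        rw [hsub, norm_sub_sq_real, norm_smul, real_inner_smul_left, Real.norm_two]
        ring
    _ ≤ ‖y - z‖ ^ 2 := by linarith [hP.norm_sq_sub_le_inner y z]

theorem supportFun_sub_le_inner (hP : IsMetricProjection K P) (y : E) :
    supportFun K (y - P y) ≤ ⟪y - P y, P y⟫ :=
  supportFun_le ⟨P y, hP.mem y⟩ fun w hw => by
    have := hP.inner_sub_le y hw
    rwa [inner_sub_right, sub_nonpos] at this

theorem supportFun_le_inner_add (hP : IsMetricProjection K P) (hK : Bornology.IsBounded K)
    {C : ℝ} (hC : ∀ x ∈ K, ‖x‖ ≤ C) (y : E) :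
    supportFun K y ≤ ⟪y - P y, P y⟫ + C ^ 2 := by
  have hne : K.Nonempty := ⟨P y, hP.mem y⟩
  have hPy : ‖P y‖ ≤ C := hC _ (hP.mem y)
  calc supportFun K y = supportFun K (y - P y + P y) := by rw [sub_add_cancel]
    _ ≤ supportFun K (y - P y) + supportFun K (P y) := supportFun_add_le hK hne _ _
    _ ≤ ⟪y - P y, P y⟫ + C * ‖P y‖ :=
      add_le_add (hP.supportFun_sub_le_inner y) (supportFun_le_mul_norm hne hC _)
    _ ≤ ⟪y - P y, P y⟫ + C ^ 2 := by
      rw [sq]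
      gcongr
      exact (norm_nonneg _).trans hPy

theorem supportFun_sub_sub_le (hP : IsMetricProjection K P) (hK : Bornology.IsBounded K)
    (hsym : K = -K) (y z : E) :
    supportFun K ((y - P y) - (z - P z)) ≤ ⟪y - P y, P y⟫ + ⟪z - P z, P z⟫ := by
  rw [sub_eq_add_neg]
  refine (supportFun_add_le hK ⟨P y, hP.mem y⟩ _ _).trans ?_
  rw [supportFun_neg hsym]
  exact add_le_add (hP.supportFun_sub_le_inner y) (hP.supportFun_sub_le_inner z)

theorem two_smul_add_mem (hP : IsMetricProjection K P) (hconv : Convex ℝ K) (y z : E) :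
    (2 : ℝ) • (P y + P z) ∈ (4 : ℝ) • K := by
  refine ⟨midpoint ℝ (P y) (P z), hconv.midpoint_mem (hP.mem y) (hP.mem z), ?_⟩
  simp only [midpoint_eq_smul_add, smul_smul]
  norm_num

end IsMetricProjection

theorem neg_norm_sq_sub_crossMap_projReflection_div (P : E → E) (x : WithLp 2 (E × E)) :
    -(‖x‖ ^ 2 - ‖crossMap (projReflection P) (projReflection P) x‖ ^ 2) / 4 =
      -(⟪x.fst - P x.fst, P x.fst⟫ + ⟪x.snd - P x.snd, P x.snd⟫) := by
  rw [norm_sq_crossMap, WithLp.prod_norm_sq_eq_of_L2]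
  linarith [norm_sq_sub_norm_sq_projReflection P x.fst,
    norm_sq_sub_norm_sq_projReflection P x.snd]

end MetricProjection

section SumDifference

theorem lowerSemicontinuous_indicator_of_isOpen {X : Type*} [TopologicalSpace X] {s : Set X}
    (hs : IsOpen s) {f : X → ℝ≥0∞} (hf : LowerSemicontinuous f) :
    LowerSemicontinuous (s.indicator f) := by
  intro x c hc
  have hx : x ∈ s := by
    by_contra hx
    simp [indicator_of_notMem hx] at hc
  rw [indicator_of_mem hx] at hc
  filter_upwards [hs.mem_nhds hx, hf x c hc] with y hy hcy
  rwa [indicator_of_mem hy]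

variable {E : Type*} [NormedAddCommGroup E]

theorem measurePreserving_add_half_sub [NormedSpace ℝ E] [FiniteDimensional ℝ E]
    [MeasurableSpace E] [BorelSpace E] (μ : Measure E) [μ.IsAddHaarMeasure] :
    MeasurePreserving (fun x : E × E => (x.1 + x.2, (1 / 2 : ℝ) • (x.1 - x.2)))
      (μ.prod μ) (μ.prod μ) := by
  have hshear : MeasurePreserving (fun x : E × E => (x.1, (1 / 2 : ℝ) • x.1 - x.2))
      (μ.prod μ) (μ.prod μ) :=
    (MeasurePreserving.id μ).skew_product (g := fun s v => (1 / 2 : ℝ) • s - v)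
      (by fun_prop) (ae_of_all _ fun s => (μ.measurePreserving_sub_left _).map_eq)
  convert hshear.comp (measurePreserving_add_prod μ μ) using 1
  funext x
  refine Prod.ext rfl ?_
  simp only [Function.comp_apply]
  module

variable [InnerProductSpace ℝ E]

/-- The function `x ↦ 1_O(x₁ + x₂) φ((x₁ - x₂) / 2)` on the Hilbert sum `E ⊕ E`. -/
noncomputable def sumDiffProd (O : Set E) (φ : E → ℝ≥0∞) (x : WithLp 2 (E × E)) : ℝ≥0∞ :=
  O.indicator (fun _ => φ ((1 / 2 : ℝ) • (x.fst - x.snd))) (x.fst + x.snd)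

theorem lowerSemicontinuous_sumDiffProd {O : Set E} (hO : IsOpen O) {φ : E → ℝ≥0∞}
    (hφ : Continuous φ) : LowerSemicontinuous (sumDiffProd O φ) := by
  have hadd : Continuous fun x : WithLp 2 (E × E) => x.fst + x.snd := by fun_prop
  have hsub : Continuous fun x : WithLp 2 (E × E) => φ ((1 / 2 : ℝ) • (x.fst - x.snd)) := by
    fun_prop
  exact lowerSemicontinuous_indicator_of_isOpen (hO.preimage hadd) hsub.lowerSemicontinuous

variable [FiniteDimensional ℝ E] [MeasurableSpace E] [BorelSpace E]

theorem lintegral_withLp_prod (f : E × E → ℝ≥0∞) :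
    ∫⁻ x : WithLp 2 (E × E), f (WithLp.ofLp x) = ∫⁻ x, f x :=
  (WithLp.volume_preserving_ofLp E E).lintegral_comp_emb
    (MeasurableEquiv.toLp 2 (E × E)).symm.measurableEmbedding f

theorem lintegral_sumDiffProd {O : Set E} (hO : MeasurableSet O) {φ : E → ℝ≥0∞}
    (hφ : Measurable φ) : ∫⁻ x, sumDiffProd O φ x = volume O * ∫⁻ ξ, φ ξ := by
  have hprod (x : WithLp 2 (E × E)) : sumDiffProd O φ x =
      O.indicator 1 (x.fst + x.snd) * φ ((1 / 2 : ℝ) • (x.fst - x.snd)) := by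
    by_cases hx : x.fst + x.snd ∈ O <;> simp [sumDiffProd, hx]
  have hind : Measurable (O.indicator (1 : E → ℝ≥0∞)) := measurable_one.indicator hO
  calc ∫⁻ x, sumDiffProd O φ x
      = ∫⁻ x : E × E, O.indicator 1 (x.1 + x.2) * φ ((1 / 2 : ℝ) • (x.1 - x.2)) := by
        simp only [hprod]
        exact lintegral_withLp_prod fun x : E × E =>
          O.indicator 1 (x.1 + x.2) * φ ((1 / 2 : ℝ) • (x.1 - x.2))
    _ = ∫⁻ x : E × E, O.indicator 1 x.1 * φ x.2 :=
        (measurePreserving_add_half_sub volume).lintegral_comp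
          (f := fun x : E × E => O.indicator 1 x.1 * φ x.2) (by fun_prop)
    _ = volume O * ∫⁻ ξ, φ ξ := by
        rw [Measure.volume_eq_prod, lintegral_prod_mul hind.aemeasurable hφ.aemeasurable,
          lintegral_indicator_one hO]

end SumDifference

section Kuperberg

open scoped Pointwise

variable {E : Type*} [NormedAddCommGroup E] [InnerProductSpace ℝ E] {K : Set E} {P : E → E}

theorem IsMetricProjection.exp_le_sumDiffProd (hP : IsMetricProjection K P)
    (hK : Bornology.IsBounded K) (hconv : Convex ℝ K) (hsym : K = -K) {O : Set E}
    (hO : (4 : ℝ) • K ⊆ O) (x : WithLp 2 (E × E)) :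
    ENNReal.ofReal (Real.exp
        (-(‖x‖ ^ 2 - ‖crossMap (projReflection P) (projReflection P) x‖ ^ 2) / 4)) ≤
      sumDiffProd O (fun ξ => ENNReal.ofReal (Real.exp (-supportFun K ξ)))
        (x + crossMap (projReflection P) (projReflection P) x) := by
  set z := x + crossMap (projReflection P) (projReflection P) x
  have hfst : z.fst = x.fst + projReflection P x.snd := rfl
  have hsnd : z.snd = x.snd + projReflection P x.fst := rfl
  have hsum : z.fst + z.snd = (2 : ℝ) • (P x.fst + P x.snd) := by
    rw [hfst, hsnd, projReflection, projReflection]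
    module
  have hdiff : (1 / 2 : ℝ) • (z.fst - z.snd) = (x.fst - P x.fst) - (x.snd - P x.snd) := by
    rw [hfst, hsnd, projReflection, projReflection]
    module
  have hmem : z.fst + z.snd ∈ O := hsum ▸ hO (hP.two_smul_add_mem hconv x.fst x.snd)
  rw [sumDiffProd, indicator_of_mem hmem, hdiff, neg_norm_sq_sub_crossMap_projReflection_div]
  gcongr
  exact hP.supportFun_sub_sub_le hK hsym x.fst x.snd

variable [FiniteDimensional ℝ E] [MeasurableSpace E] [BorelSpace E]

theorem IsMetricProjection.lintegral_exp_ne_top (hP : IsMetricProjection K P)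
    (hK : Bornology.IsBounded K) (hsym : K = -K) (h0 : 0 ∈ interior K) :
    ∫⁻ x : WithLp 2 (E × E), ENNReal.ofReal (Real.exp
      (-(‖x‖ ^ 2 - ‖crossMap (projReflection P) (projReflection P) x‖ ^ 2) / 4)) ≠ ∞ := by
  obtain ⟨C, hC⟩ := hK.exists_norm_le
  set φ : E → ℝ := fun ξ => Real.exp (-supportFun K ξ) with hφ
  have hint : Integrable (fun x : E × E => Real.exp (2 * C ^ 2) * (φ x.1 * φ x.2)) :=
    ((integrable_exp_neg_supportFun hK hsym h0).mul_prod
      (integrable_exp_neg_supportFun hK hsym h0)).const_mul _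
  refine ne_top_of_le_ne_top hint.lintegral_lt_top.ne ?_
  rw [← lintegral_withLp_prod]
  refine lintegral_mono fun x => ENNReal.ofReal_le_ofReal ?_
  rw [neg_norm_sq_sub_crossMap_projReflection_div, hφ, ← Real.exp_add, ← Real.exp_add]
  gcongr
  have hfst := hP.supportFun_le_inner_add hK hC x.fst
  have hsnd := hP.supportFun_le_inner_add hK hC x.snd
  change _ ≤ 2 * C ^ 2 + (-supportFun K x.fst + -supportFun K x.snd)
  linarith

theorem four_mul_pi_pow_le_measure_smul_mul_lintegral (hK : IsCompact K) (hconv : Convex ℝ K)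
    (hsym : K = -K) (h0 : 0 ∈ interior K) :
    ENNReal.ofReal ((4 * Real.pi) ^ finrank ℝ E) ≤
      volume ((4 : ℝ) • K) * ∫⁻ ξ, ENNReal.ofReal (Real.exp (-supportFun K ξ)) := by
  have hb : Bornology.IsBounded K := hK.isBounded
  have hne : K.Nonempty := ⟨0, interior_subset h0⟩
  obtain ⟨P, hP⟩ := exists_isMetricProjection hne hK.isComplete hconv
  set φ : E → ℝ≥0∞ := fun ξ => ENNReal.ofReal (Real.exp (-supportFun K ξ))
  have hφc : Continuous φ :=
    ENNReal.continuous_ofReal.comp (continuous_supportFun hb hne).neg.rexp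
  have hR0 : projReflection P 0 = 0 := by
    rw [projReflection, hP.apply_zero (interior_subset h0), smul_zero, sub_zero]
  have hopen (O : Set E) (hKO : (4 : ℝ) • K ⊆ O) (hO : IsOpen O) :
      ENNReal.ofReal ((4 * Real.pi) ^ finrank ℝ E) ≤ (∫⁻ ξ, φ ξ) * volume O := by
    rw [mul_comm (∫⁻ ξ, φ ξ), ← lintegral_sumDiffProd hO.measurableSet hφc.measurable]
    exact le_lintegral_of_exp_le_add_crossMap hP.lipschitzWith_projReflection hR0
      (lowerSemicontinuous_sumDiffProd hO hφc) (hP.lintegral_exp_ne_top hb hsym h0)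
      (hP.exp_le_sumDiffProd hb hconv hsym hKO)
  have hfin : ∫⁻ ξ, φ ξ ≠ ∞ := (integrable_exp_neg_supportFun hb hsym h0).lintegral_lt_top.ne
  have := Measure.OuterRegular.smul (volume : Measure E) hfin
  calc ENNReal.ofReal ((4 * Real.pi) ^ finrank ℝ E)
      ≤ ((∫⁻ ξ, φ ξ) • (volume : Measure E)) ((4 : ℝ) • K) := by
        rw [Set.measure_eq_iInf_isOpen]
        exact le_iInf₂ fun O hKO => le_iInf fun hO => hopen O hKO hO
    _ = volume ((4 : ℝ) • K) * ∫⁻ ξ, φ ξ := mul_comm _ _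

theorem pi_pow_le_measure_mul_lintegral (hK : IsCompact K) (hconv : Convex ℝ K)
    (hsym : K = -K) (h0 : 0 ∈ interior K) :
    ENNReal.ofReal (Real.pi ^ finrank ℝ E) ≤
      volume K * ∫⁻ ξ, ENNReal.ofReal (Real.exp (-supportFun K ξ)) := by
  have h4 : ENNReal.ofReal (4 ^ finrank ℝ E) ≠ 0 := by positivity
  have hle := four_mul_pi_pow_le_measure_smul_mul_lintegral hK hconv hsym h0
  rw [Measure.addHaar_smul, abs_of_pos (by positivity), mul_pow,
    ENNReal.ofReal_mul (by positivity), mul_assoc] at hle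
  exact (ENNReal.mul_le_mul_iff_right h4 ENNReal.ofReal_ne_top).1 hle

theorem kuperberg_bound_general (hK : IsCompact K) (hconv : Convex ℝ K)
    (hint : (interior K).Nonempty) (hsym : K = -K) {ħ : ℝ} (hħ : 0 < ħ) :
    ENNReal.ofReal ((Real.pi * ħ) ^ finrank ℝ E / (finrank ℝ E).factorial) ≤
      volume K * volume {p | ∀ x ∈ K, ⟪p, x⟫ ≤ ħ} := by
  have hfact : (0 : ℝ) < (finrank ℝ E).factorial := by positivity
  have h0 := zero_mem_interior_of_eq_neg hconv hsym hint
  have hlower := pi_pow_le_measure_mul_lintegral hK hconv hsym h0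
  rw [lintegral_exp_neg_supportFun hK.isBounded hsym h0] at hlower
  rw [ENNReal.ofReal_div_of_pos hfact, ENNReal.ofReal_natCast]
  refine ENNReal.div_le_of_le_mul ?_
  calc ENNReal.ofReal ((Real.pi * ħ) ^ finrank ℝ E)
      = ENNReal.ofReal (Real.pi ^ finrank ℝ E) * ENNReal.ofReal (ħ ^ finrank ℝ E) := by
        rw [mul_pow, ENNReal.ofReal_mul (by positivity)]
    _ ≤ volume K * ((finrank ℝ E).factorial * volume {ξ | supportFun K ξ < 1}) *
          ENNReal.ofReal (ħ ^ finrank ℝ E) := by gcongr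
    _ = volume K * (ENNReal.ofReal (ħ ^ finrank ℝ E) * volume {ξ | supportFun K ξ < 1}) *
          (finrank ℝ E).factorial := by ring
    _ ≤ volume K * volume {p | ∀ x ∈ K, ⟪p, x⟫ ≤ ħ} * (finrank ℝ E).factorial := by
        gcongr
        exact ofReal_pow_mul_measure_supportFun_lt_one_le hK.isBounded hħ

end Kuperberg

/-- **Kuperberg's bound.** For a symmetric convex body `X ⊂ ℝⁿ`, the Mahler volume satisfies
`Vol(X)·Vol(X^ħ) ≥ (πħ)ⁿ/(4ⁿ n!)`. -/
theorem kuperberg_bound (n : ℕ) (hb : ℝ) (hhb : 0 < hb)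
    (X : Set (EuclideanSpace ℝ (Fin n)))
    (hXc : IsCompact X) (hXconv : Convex ℝ X) (hXint : (interior X).Nonempty) (hXsym : X = -X) :
    ENNReal.ofReal ((Real.pi * hb) ^ n / (4 ^ n * (n.factorial : ℝ))) ≤
      volume X * volume (polarDualSet n hb X) := by
  have hbound := kuperberg_bound_general hXc hXconv hXint hXsym hhb
  rw [finrank_euclideanSpace_fin] at hbound
  refine (ENNReal.ofReal_le_ofReal ?_).trans hbound
  gcongr
  exact le_mul_of_one_le_left (Nat.cast_nonneg _) (one_le_pow₀ (by norm_num))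
end

section
/- Let A be a symmetric positive definite n×n real matrix, ħ > 0, X = {x ∈ ℝⁿ : Ax·x ≤ ħ} and X^ħ = {p ∈ ℝⁿ : A^{−1}p·p ≤ ħ}. Then the block-diagonal linear map S on ℝ²ⁿ = ℝⁿ×ℝⁿ given by S(x,p) = (A^{−1/2}x, A^{1/2}p) is symplectic (SᵀJS = J for the standard symplectic matrix J), and S maps the ball B^{2n}(√ħ) ⊂ ℝ²ⁿ into the product X × X^ħ; that is, the image of the phase-space ball under this symplectic map (a 'quantum blob') is contained in X × X^ħ. -/
open MeasureTheory Matrix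

/-!
If `A = Mᵀ M` with `M` invertible, both blocks of `S = diag(M⁻¹, Mᵀ)` carry the relevant form to the
identity: `(M⁻¹)ᵀ A M⁻¹ = 1` and `M A⁻¹ Mᵀ = 1`. So, writing `S(x, p) = (y, q)`, one has
`Ay·y = |x|²` and `A⁻¹q·q = |p|²`, and each is at most `|x|² + |p|²`. Symplecticity is the duality
`(M⁻¹)ᵀ Mᵀ = 1` of the two blocks. The positive definite square root is the case `M = Mᵀ = A^{1/2}`.
-/

section Symplectic

variable {n K : Type*} [Fintype n] [DecidableEq n] [CommRing K]

-- Mathlib's `Matrix.J` is the negative of the `J(x, p) = (p, -x)` used here.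
lemma mem_symplecticGroup_iff_fromBlocks {S : Matrix (n ⊕ n) (n ⊕ n) K} :
    S ∈ symplecticGroup n K ↔
      Sᵀ * fromBlocks 0 1 (-1) 0 * S = fromBlocks 0 1 (-1) 0 := by
  have fromBlocks_eq_neg_J : (fromBlocks 0 1 (-1) 0 : Matrix (n ⊕ n) (n ⊕ n) K) = -J n K := by
    simp [J, fromBlocks_neg]
  rw [SymplecticGroup.mem_iff', fromBlocks_eq_neg_J, Matrix.mul_neg, Matrix.neg_mul, neg_inj]

lemma fromBlocks_diagonal_mem_symplecticGroup_iff {P Q : Matrix n n K} :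
    fromBlocks P 0 0 Q ∈ symplecticGroup n K ↔ Pᵀ * Q = 1 := by
  have transpose_duality : Qᵀ * P = 1 ↔ Pᵀ * Q = 1 := by
    rw [← transpose_inj, transpose_mul, transpose_transpose, transpose_one]
  simp [mem_symplecticGroup_iff_fromBlocks, fromBlocks_transpose, fromBlocks_multiply,
    fromBlocks_inj, transpose_duality]

end Symplectic

section Congruence

lemma mulVec_dotProduct_self_congr {m n K : Type*} [Fintype m] [Fintype n] [CommSemiring K]
    (A : Matrix m m K) (P : Matrix m n K) (v : n → K) :
    A *ᵥ (P *ᵥ v) ⬝ᵥ (P *ᵥ v) = (Pᵀ * A * P) *ᵥ v ⬝ᵥ v := by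
  rw [dotProduct_mulVec, ← mulVec_transpose, mulVec_mulVec, mulVec_mulVec, Matrix.mul_assoc]

lemma mulVec_dotProduct_self_of_congr_eq_one {m n K : Type*} [Fintype m] [Fintype n]
    [DecidableEq n] [CommSemiring K] {A : Matrix m m K} {P : Matrix m n K}
    (hP : Pᵀ * A * P = 1) (v : n → K) :
    A *ᵥ (P *ᵥ v) ⬝ᵥ (P *ᵥ v) = ∑ i, v i ^ 2 := by
  rw [mulVec_dotProduct_self_congr, hP, one_mulVec]
  simp only [dotProduct, sq]

variable {n K : Type*} [Fintype n] [DecidableEq n] [CommRing K] {M : Matrix n n K}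

lemma inv_transpose_mul_gram_mul_inv (hM : IsUnit M) : M⁻¹ᵀ * (Mᵀ * M) * M⁻¹ = 1 := by
  have hdet : IsUnit M.det := (isUnit_iff_isUnit_det M).mp hM
  rw [← Matrix.mul_assoc, ← transpose_mul, mul_nonsing_inv _ hdet, transpose_one, Matrix.one_mul,
    mul_nonsing_inv _ hdet]

lemma mul_gram_inv_mul_transpose (hM : IsUnit M) : M * (Mᵀ * M)⁻¹ * Mᵀ = 1 := by
  have hdet : IsUnit M.det := (isUnit_iff_isUnit_det M).mp hM
  rw [Matrix.mul_inv_rev, ← Matrix.mul_assoc, mul_nonsing_inv _ hdet, Matrix.one_mul,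
    nonsing_inv_mul _ (isUnit_det_transpose M hdet)]

end Congruence

section Ball

variable {K : Type*} [CommRing K] [LinearOrder K] [IsStrictOrderedRing K]

lemma sum_comp_sq_le_sum_sq {ι κ : Type*} [Fintype ι] [Fintype κ] (f : κ ↪ ι) (v : ι → K) :
    ∑ k, v (f k) ^ 2 ≤ ∑ i, v i ^ 2 := by
  rw [← Finset.sum_map Finset.univ f fun i => v i ^ 2]
  exact Finset.sum_le_univ_sum_of_nonneg fun i => sq_nonneg (v i)

lemma fromBlocks_diagonal_mulVec_image_ball_subset {k l m n : Type*} [Fintype k] [Fintype l]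
    [Fintype m] [Fintype n] [DecidableEq m] [DecidableEq n] {A : Matrix k k K} {B : Matrix l l K}
    {P : Matrix k m K} {Q : Matrix l n K} (hP : Pᵀ * A * P = 1) (hQ : Qᵀ * B * Q = 1) (r : K) :
    (fromBlocks P 0 0 Q).mulVec '' {z | ∑ i, z i ^ 2 ≤ r} ⊆
      {z | A.mulVec (fun i => z (Sum.inl i)) ⬝ᵥ (fun i => z (Sum.inl i)) ≤ r ∧
        B.mulVec (fun i => z (Sum.inr i)) ⬝ᵥ (fun i => z (Sum.inr i)) ≤ r} := by
  rintro _ ⟨z, hz, rfl⟩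
  simp only [Set.mem_ofPred_eq, fromBlocks_mulVec, zero_mulVec, add_zero, zero_add, Sum.elim_inl,
    Sum.elim_inr]
  constructor
  · calc A *ᵥ (P *ᵥ (z ∘ Sum.inl)) ⬝ᵥ (P *ᵥ (z ∘ Sum.inl))
        = ∑ i, z (Sum.inl i) ^ 2 := mulVec_dotProduct_self_of_congr_eq_one hP _
      _ ≤ ∑ i, z i ^ 2 := sum_comp_sq_le_sum_sq .inl z
      _ ≤ r := hz
  · calc B *ᵥ (Q *ᵥ (z ∘ Sum.inr)) ⬝ᵥ (Q *ᵥ (z ∘ Sum.inr))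
        = ∑ i, z (Sum.inr i) ^ 2 := mulVec_dotProduct_self_of_congr_eq_one hQ _
      _ ≤ ∑ i, z i ^ 2 := sum_comp_sq_le_sum_sq .inr z
      _ ≤ r := hz

theorem quantum_blob_in_product_general {n : Type*} [Fintype n] [DecidableEq n] (r : K)
    (A M : Matrix n n K) (hM : IsUnit M) (hA : Mᵀ * M = A) (S J : Matrix (n ⊕ n) (n ⊕ n) K)
    (hS : S = fromBlocks M⁻¹ 0 0 Mᵀ) (hJ : J = fromBlocks 0 1 (-1) 0) :
    Sᵀ * J * S = J ∧
      S.mulVec '' {z | ∑ i, z i ^ 2 ≤ r} ⊆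
        {z | A.mulVec (fun i => z (Sum.inl i)) ⬝ᵥ (fun i => z (Sum.inl i)) ≤ r ∧
          A⁻¹.mulVec (fun i => z (Sum.inr i)) ⬝ᵥ (fun i => z (Sum.inr i)) ≤ r} := by
  subst hA hS hJ
  have dual_blocks : M⁻¹ᵀ * Mᵀ = 1 := by
    rw [← transpose_mul, mul_nonsing_inv _ ((isUnit_iff_isUnit_det M).mp hM), transpose_one]
  constructor
  · exact mem_symplecticGroup_iff_fromBlocks.mp
      (fromBlocks_diagonal_mem_symplecticGroup_iff.mpr dual_blocks)
  · exact fromBlocks_diagonal_mulVec_image_ball_subset (inv_transpose_mul_gram_mul_inv hM)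
      (mul_gram_inv_mul_transpose hM) r

end Ball

/-- For `A` symmetric positive definite with symmetric positive definite square root `R`
(`R·R = A`), the block-diagonal map `S = diag(A^{−1/2}, A^{1/2})` on `ℝ²ⁿ = ℝⁿ ⊕ ℝⁿ` is
symplectic (`Sᵀ J S = J`) and maps the phase-space ball `B²ⁿ(√ħ)` into `X × X^ħ`, where
`X = {x : Ax·x ≤ ħ}` and `X^ħ = {p : A⁻¹p·p ≤ ħ}`. -/
theorem quantum_blob_in_product (n : ℕ) (hb : ℝ) (hhb : 0 < hb)
    (A : Matrix (Fin n) (Fin n) ℝ) (hAsymm : A.IsSymm) (hApos : A.PosDef)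
    (R : Matrix (Fin n) (Fin n) ℝ) (hRsymm : R.IsSymm) (hRpos : R.PosDef) (hRR : R * R = A)
    (S J : Matrix (Fin n ⊕ Fin n) (Fin n ⊕ Fin n) ℝ)
    (hS : S = Matrix.fromBlocks R⁻¹ 0 0 R)
    (hJ : J = Matrix.fromBlocks 0 1 (-1) 0) :
    S.transpose * J * S = J ∧
      S.mulVec '' {z : Fin n ⊕ Fin n → ℝ | ∑ i, z i ^ 2 ≤ hb} ⊆
        {z : Fin n ⊕ Fin n → ℝ |
          A.mulVec (fun i => z (Sum.inl i)) ⬝ᵥ (fun i => z (Sum.inl i)) ≤ hb ∧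
          A⁻¹.mulVec (fun i => z (Sum.inr i)) ⬝ᵥ (fun i => z (Sum.inr i)) ≤ hb} := by
  exact quantum_blob_in_product_general hb A R hRpos.isUnit (hRsymm.eq.symm ▸ hRR) S J
    (hRsymm.eq.symm ▸ hS) hJ
end
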